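/- There exist a finite alphabet α, a state B ∈ α, and a cellular automaton Φ : α^ℤ → α^ℤ with quiescent state B such that Φ is not nilpotent, yet for every i ∈ ℤ and every integer k ≥ 1, the cellular automaton σ^i ∘ Φ^k : α^ℤ → α^ℤ is uniquely ergodic. -/

import Mathlib

open MeasureTheory

namespace UECA

/-- Velocities of particles. -/
inductive Vel
  | L
  | S
  | R
  deriving DecidableEq

/-- The integer displacement of a velocity. -/
def Vel.z : Vel → ℤ
  | Vel.L => -1
  | Vel.S => 0
  | Vel.R => 1

/-- A label: the role of the cell in its block, the phase, and the last velocity. -/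
structure Lab where
  a : Fin 3
  ph : Fin 43
  v : Vel
  deriving DecidableEq

/-- Data values. -/
inductive D
  | skip
  | nil
  | wd (v : Vel)
  | code (j : Lab) (n : Fin 14)
  deriving DecidableEq

/-- Registers. -/
@[ext] structure Reg where
  d1 : D
  d2 : D
  d3 : D
  deriving DecidableEq

/-- States of nonblank cells. -/
@[ext] structure St where
  j : Lab
  g : Reg
  deriving DecidableEq

/-- The operations on registers. -/
inductive Op
  | LD | SW | PJ | CKL | CKR | INITL | INITR | STEP | RS | LO | SETW | EQ | PJ2 | ID
  deriving DecidableEq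

instance : Finite Vel :=
  Finite.of_surjective (fun n : Fin 3 => if n = 0 then Vel.L else if n = 1 then Vel.S else Vel.R)
    (by intro v; cases v; exact ⟨0, rfl⟩; exact ⟨1, rfl⟩; exact ⟨2, rfl⟩)

instance : Finite Lab :=
  Finite.of_injective (fun l : Lab => (l.a, l.ph, l.v)) (by
    rintro ⟨a, b, c⟩ ⟨a', b', c'⟩ h; simpa using h)

instance : Finite D :=
  Finite.of_surjective
    (fun x : (Bool ⊕ Vel) ⊕ (Lab × Fin 14) =>
      match x with
      | .inl (.inl b) => if b then D.skip else D.nil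
      | .inl (.inr v) => D.wd v
      | .inr (j, n) => D.code j n)
    (by
      intro d
      cases d with
      | skip => exact ⟨.inl (.inl true), rfl⟩
      | nil => exact ⟨.inl (.inl false), rfl⟩
      | wd v => exact ⟨.inl (.inr v), rfl⟩
      | code j n => exact ⟨.inr (j, n), rfl⟩)

instance : Finite Reg :=
  Finite.of_injective (fun l : Reg => (l.d1, l.d2, l.d3)) (by
    rintro ⟨a, b, c⟩ ⟨a', b', c'⟩ h; simpa using h)

instance : Finite St :=
  Finite.of_injective (fun l : St => (l.j, l.g)) (by
    rintro ⟨a, b⟩ ⟨a', b'⟩ h; simpa using h)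

/-- The slot of cell `a` in its block at phase `τ`. -/
def sl (a : Fin 3) (τ : ℕ) : ℤ :=
  if a = 0 then (if 4 ≤ τ ∧ τ ≤ 10 then 0 else 1)
  else if a = 1 then (if τ = 8 ∨ τ = 9 then 1 else 2)
  else (if 3 ≤ τ ∧ τ ≤ 11 then 4 else 3)

/-- The scheduled velocity of cell `a` at phase `τ`. -/
def sched (a : Fin 3) (τ : ℕ) : Vel :=
  if a = 0 then (if τ = 3 then .L else if τ = 10 then .R else .S)
  else if a = 1 then (if τ = 7 then .L else if τ = 9 then .R else .S)
  else (if τ = 2 then .R else if τ = 11 then .L else .S)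

/-- Phases in which a block may move to the right. -/
abbrev rphase (τ : ℕ) : Prop := 31 ≤ τ ∧ τ ≤ 35

/-- Phases in which a block may move to the left. -/
abbrev lphase (τ : ℕ) : Prop := 36 ≤ τ ∧ τ ≤ 40

/-- What a cell expects to see next to it. -/
inductive Ex
  | blank
  | req (a : Fin 3)
  | opt (a : Fin 3)
  deriving DecidableEq

/-- Expected left neighbour. -/
def exL (a : Fin 3) (τ : ℕ) : Ex :=
  if a = 0 then (if 4 ≤ τ ∧ τ ≤ 10 then .opt 2 else .blank)
  else if a = 1 then (if 4 ≤ τ ∧ τ ≤ 7 ∨ τ = 10 then .blank else .req 0)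
  else (if 3 ≤ τ ∧ τ ≤ 11 then .blank else .req 1)

/-- Expected right neighbour. -/
def exR (a : Fin 3) (τ : ℕ) : Ex :=
  if a = 0 then (if 4 ≤ τ ∧ τ ≤ 7 ∨ τ = 10 then .blank else .req 1)
  else if a = 1 then (if 3 ≤ τ ∧ τ ≤ 11 then .blank else .req 2)
  else (if 4 ≤ τ ∧ τ ≤ 10 then .opt 0 else .blank)

/-- Does the observed label `n` meet the expectation `e` at phase `τ`? -/
def chk (e : Ex) (τ : Fin 43) (n : Option Lab) : Bool :=
  match e, n with
  | .blank, none => true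
  | .blank, some _ => false
  | .req _, none => false
  | .req a, some l => l.a = a ∧ l.ph = τ
  | .opt _, none => true
  | .opt a, some l => l.a = a ∧ l.ph = τ

/-- Check of the left neighbour. -/
def okL (j : Lab) (n : Option Lab) : Bool := chk (exL j.a j.ph) j.ph n

/-- Check of the right neighbour. -/
def okR (j : Lab) (n : Option Lab) : Bool := chk (exR j.a j.ph) j.ph n

/-- The list of operations. -/
def opn (n : ℕ) : Op :=
  match n with
  | 0 => .LD | 1 => .SW | 2 => .PJ | 3 => .CKL | 4 => .CKR | 5 => .INITL | 6 => .INITR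
  | 7 => .STEP | 8 => .RS | 9 => .LO | 10 => .SETW | 11 => .EQ | 12 => .PJ2 | _ => .ID

/-- The index of an operation. -/
def idx : Op → Fin 14
  | .LD => 0 | .SW => 1 | .PJ => 2 | .CKL => 3 | .CKR => 4 | .INITL => 5 | .INITR => 6
  | .STEP => 7 | .RS => 8 | .LO => 9 | .SETW => 10 | .EQ => 11 | .PJ2 => 12 | .ID => 13

/-- The operation of cell `a` at phase `τ`. -/
def opf (a : Fin 3) (τ : ℕ) : Op :=
  if a = 1 then
    (if 13 ≤ τ ∧ τ ≤ 25 then opn (τ - 13) else if τ = 28 ∨ τ = 42 then .EQ else .ID)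
  else if τ = 0 ∨ τ = 4 then .LD
  else if τ = 1 then .SW
  else if τ = 5 then .PJ
  else if τ = 25 then .RS
  else if τ = 26 then .LO
  else if τ = 27 then .SETW
  else if τ = 41 then .PJ2
  else if τ = 6 then (if a = 0 then .CKL else .CKR)
  else if τ = 11 then (if a = 0 then .INITL else .INITR)
  else if a = 0 ∧ 12 ≤ τ ∧ τ ≤ 24 then .STEP
  else .ID

/-- Is the left neighbour read? -/
def lkL (a : Fin 3) (τ : ℕ) : Bool :=
  if a = 0 then τ = 4 ∨ τ = 6
  else if a = 1 then 13 ≤ τ ∧ τ ≤ 25 ∨ τ = 28 ∨ τ = 42 ∨ 31 ≤ τ ∧ τ ≤ 40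
  else τ = 0 ∨ τ = 26

/-- Is the right neighbour read? -/
def lkR (a : Fin 3) (τ : ℕ) : Bool :=
  if a = 0 then τ = 0 ∨ τ = 26
  else if a = 1 then 13 ≤ τ ∧ τ ≤ 25 ∨ τ = 28 ∨ τ = 42 ∨ 31 ≤ τ ∧ τ ≤ 40
  else τ = 4 ∨ τ = 6

/-- First argument unless it is `nil`. -/
def comb (x y : D) : D := if x = .nil then y else x

/-- Velocity of a particle. -/
def velf (j : Lab) (o v : D) : Vel :=
  if rphase j.ph then (if (if j.a = 1 then v else o) = .wd .R then .R else .S)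
  else if lphase j.ph then (if (if j.a = 1 then v else o) = .wd .L then .L else .S)
  else sched j.a j.ph

/-- The next label. -/
def nxt (j : Lab) (w : Vel) : Lab := ⟨j.a, j.ph + 1, w⟩

/-- The effect of operations. -/
def F (o : Op) (g : Reg) (uL uR : D) : Option Reg :=
  match o with
  | .LD => some ⟨g.d1, g.d2, comb uL uR⟩
  | .SW => some ⟨g.d3, g.d2, .skip⟩
  | .RS => some ⟨.skip, g.d2, g.d3⟩
  | .LO => some ⟨comb uL uR, g.d2, g.d3⟩
  | .EQ => if uL = uR then some g else none
  | .ID => some g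
  | .PJ => match g.d2 with
    | .code j n => if n = 0 then some ⟨.code j 0, .code j 0, g.d3⟩ else none
    | _ => none
  | .PJ2 => match g.d2 with
    | .code j n => if n = 0 then some ⟨.code j 0, .code j 0, .skip⟩ else none
    | _ => none
  | .CKL => match g.d2 with
    | .code j n => match uL with
      | .nil => if okL j none then some ⟨g.d1, .code j n, .nil⟩ else none
      | .code j' _ => if okL j (some j') then some ⟨g.d1, .code j n, g.d3⟩ else none
      | _ => none
    | _ => none
  | .CKR => match g.d2 with
    | .code j n => match uR with
      | .nil => if okR j none then some ⟨g.d1, .code j n, .nil⟩ else none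
      | .code j' _ => if okR j (some j') then some ⟨g.d1, .code j n, g.d3⟩ else none
      | _ => none
    | _ => none
  | .INITL => match g.d2 with
    | .code j _ => some ⟨.skip, .code j (idx (opf j.a j.ph)),
        if lkL j.a j.ph then g.d3 else .nil⟩
    | _ => none
  | .INITR => match g.d2 with
    | .code j n => some ⟨if lkR j.a j.ph then g.d3 else .nil, .code j n,
        if lkR j.a j.ph then g.d3 else .nil⟩
    | _ => none
  | .STEP => match g.d2 with
    | .code j n => some ⟨if n = 0 then g.d3 else .skip, .code j (n - 1), g.d3⟩
    | _ => none
  | .SETW => match g.d2 with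
    | .code j _ => some ⟨.wd (velf j g.d1 g.d3), .code (nxt j (velf j g.d1 g.d3)) 0, .skip⟩
    | _ => none

/-- Gated operation. -/
def exec (o : Op) (g : Reg) (uL uR : D) : Option Reg :=
  if uL = .skip then some g else F o g uL uR

/-- What is read from a neighbour. -/
def rd (b : Bool) (l : Option St) : D :=
  if b then (match l with
    | none => .nil
    | some s => s.g.d1) else .nil

/-- The local rule of a particle. -/
def out (l : Option St) (s : St) (r : Option St) : Option St :=
  if okL s.j (l.map St.j) = true ∧ okR s.j (r.map St.j) = true ∧
    velf s.j s.g.d1 (rd (lkL s.j.a s.j.ph) l) = velf s.j s.g.d1 (rd (lkR s.j.a s.j.ph) r) then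
    (exec (opf s.j.a s.j.ph) s.g (rd (lkL s.j.a s.j.ph) l) (rd (lkR s.j.a s.j.ph) r)).map
      (fun g => ⟨nxt s.j (velf s.j s.g.d1 (rd (lkL s.j.a s.j.ph) l)), g⟩)
  else none

/-- The outcome for the particle at `q`. -/
def outAt (x : ℤ → Option St) (q : ℤ) : Option St :=
  match x q with
  | none => none
  | some s => out (x (q - 1)) s (x (q + 1))

/-- The particle at `q`, provided that it moves with velocity `v`. -/
def comeAt (x : ℤ → Option St) (q : ℤ) (v : Vel) : Option St :=
  (outAt x q).filter (fun s => s.j.v = v)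

/-- The cellular automaton on the alphabet `Option St`. -/
def Phi (x : ℤ → Option St) : ℤ → Option St := fun p =>
  ((comeAt x (p - 1) .R).or (comeAt x p .S)).or (comeAt x (p + 1) .L)

/-- Possible velocities, depending on the label. -/
def al (j : Lab) (w : Vel) : Prop :=
  if rphase j.ph then w = .S ∨ w = .R
  else if lphase j.ph then w = .S ∨ w = .L
  else w = sched j.a j.ph

lemma velf_al (j : Lab) (o v : D) : al j (velf j o v) := by
  unfold al velf
  split_ifs <;> simp

/-- Cell observed, up to cells which are about to disappear. -/
def Surv (ω : ℤ → ℤ → Option St) (t q : ℤ) : Prop :=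
  ∃ s, ω (t + 1) (q + s.j.v.z) = some s

/-- Possible observations. -/
def Obs (ω : ℤ → ℤ → Option St) (t q : ℤ) (l : Option St) : Prop :=
  l = ω t q ∨ (l = none ∧ ¬ Surv ω t q)

/-- The space-time relation satisfied by orbits and by their decodings. -/
def Rel (ω : ℤ → ℤ → Option St) : Prop :=
  ∀ t p s', ω (t + 1) p = some s' → ∃ s l r, ω t (p - s'.j.v.z) = some s ∧
    Obs ω t (p - s'.j.v.z - 1) l ∧ Obs ω t (p - s'.j.v.z + 1) r ∧ out l s r = some s'

lemma rel_of_orbit (ω : ℤ → ℤ → Option St) (h : ∀ t, ω (t + 1) = Phi (ω t)) : Rel ω := by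
  intro t p s' hs
  rw [h t] at hs
  unfold Phi at hs
  rw [Option.or_eq_some_iff, Option.or_eq_some_iff] at hs
  have key : ∀ q v, comeAt (ω t) q v = some s' → v = s'.j.v ∧
      ∃ s, ω t q = some s ∧ out (ω t (q - 1)) s (ω t (q + 1)) = some s' := by
    intro q v hq
    unfold comeAt at hq
    rw [Option.filter_eq_some_iff] at hq
    refine ⟨(by simpa using hq.2 : s'.j.v = v).symm, ?_⟩
    unfold outAt at hq
    cases hx : ω t q with
    | none => simp [hx] at hq
    | some s => exact ⟨s, rfl, by simpa [hx] using hq.1⟩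
  have fin : ∀ q v, comeAt (ω t) q v = some s' → q = p - v.z →
      ∃ s l r, ω t (p - s'.j.v.z) = some s ∧
    Obs ω t (p - s'.j.v.z - 1) l ∧ Obs ω t (p - s'.j.v.z + 1) r ∧ out l s r = some s' := by
    intro q v hq hqv
    obtain ⟨h1, s, h2, h3⟩ := key q v hq
    subst h1; subst hqv
    exact ⟨s, _, _, h2, Or.inl rfl, Or.inl rfl, h3⟩
  rcases hs with (h | ⟨-, h⟩) | ⟨-, h⟩
  · exact fin _ _ h (by simp [Vel.z])
  · exact fin _ _ h (by simp [Vel.z])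
  · exact fin _ _ h (by simp [Vel.z])

end UECA

namespace UECA

instance : Inhabited St := ⟨⟨⟨0, 0, .S⟩, ⟨.skip, .skip, .skip⟩⟩⟩

lemma out_some {l : Option St} {s : St} {r : Option St} {s' : St} (h : out l s r = some s') :
    okL s.j (l.map St.j) = true ∧ okR s.j (r.map St.j) = true ∧
    velf s.j s.g.d1 (rd (lkL s.j.a s.j.ph) l) = velf s.j s.g.d1 (rd (lkR s.j.a s.j.ph) r) ∧
    exec (opf s.j.a s.j.ph) s.g (rd (lkL s.j.a s.j.ph) l) (rd (lkR s.j.a s.j.ph) r) = some s'.g ∧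
    s'.j = nxt s.j (velf s.j s.g.d1 (rd (lkL s.j.a s.j.ph) l)) := by
  unfold out at h
  split_ifs at h with h1
  refine ⟨h1.1, h1.2.1, h1.2.2, ?_⟩
  rw [Option.map_eq_some_iff] at h
  obtain ⟨g, hg, rfl⟩ := h
  exact ⟨hg, rfl⟩

/-- One step of a particle. -/
def Step (ω : ℤ → ℤ → Option St) (t q : ℤ) (s s' : St) : Prop :=
  ∃ l r, Obs ω t (q - 1) l ∧ Obs ω t (q + 1) r ∧ out l s r = some s'

/-- The state along a path. -/
def sf (ω : ℤ → ℤ → Option St) (f : ℤ → ℤ) (t : ℤ) : St := (ω t (f t)).getD default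

/-- `f` follows a particle in the past of `T0`; the particle has role `a` and phase
zero at time `t0`. -/
structure PL (ω : ℤ → ℤ → Option St) (f : ℤ → ℤ) (T0 t0 : ℤ) (a : Fin 3) : Prop where
  alive : ∀ t ≤ T0, ω t (f t) = some (sf ω f t)
  la : ∀ t ≤ T0, (sf ω f t).j.a = a
  lph : ∀ t ≤ T0, (((sf ω f t).j.ph : ℕ) : ℤ) = (t - t0) % 43
  step : ∀ t, t + 1 ≤ T0 → Step ω t (f t) (sf ω f t) (sf ω f (t + 1))
  pos : ∀ t, t + 1 ≤ T0 → f (t + 1) = f t + (sf ω f (t + 1)).j.v.z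

lemma nxt_ph (j : Lab) (w : Vel) : ((nxt j w).ph : ℕ) = ((j.ph : ℕ) + 1) % 43 := by
  unfold nxt
  simp [Fin.val_add]

lemma out_a {l : Option St} {s : St} {r : Option St} {s' : St} (h : out l s r = some s') :
    s'.j.a = s.j.a := by
  rw [(out_some h).2.2.2.2]; rfl

lemma out_ph {l : Option St} {s : St} {r : Option St} {s' : St} (h : out l s r = some s') :
    (s'.j.ph : ℕ) = ((s.j.ph : ℕ) + 1) % 43 := by
  rw [(out_some h).2.2.2.2, nxt_ph]

lemma PL.mono {ω f T0 t0 a T1} (h : PL ω f T0 t0 a) (h1 : T1 ≤ T0) : PL ω f T1 t0 a where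
  alive := fun t ht => h.alive t (ht.trans h1)
  la := fun t ht => h.la t (ht.trans h1)
  lph := fun t ht => h.lph t (ht.trans h1)
  step := fun t ht => h.step t (ht.trans h1)
  pos := fun t ht => h.pos t (ht.trans h1)

lemma PL.shift {ω f T0 t0 a t1} (h : PL ω f T0 t0 a) (h1 : (t1 - t0) % 43 = 0) :
    PL ω f T0 t1 a where
  alive := h.alive
  la := h.la
  lph := fun t ht => by rw [h.lph t ht]; omega
  step := h.step
  pos := h.pos

/-- Positions of the past of a particle. -/
noncomputable def bk (ω : ℤ → ℤ → Option St) (T p : ℤ) : ℕ → ℤ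
  | 0 => p
  | n + 1 => bk ω T p n - ((ω (T - n) (bk ω T p n)).getD default).j.v.z

lemma bk_succ (ω T p) (n : ℕ) : bk ω T p (n + 1) =
    bk ω T p n - ((ω (T - n) (bk ω T p n)).getD default).j.v.z := rfl

lemma exists_PL {ω} (h : Rel ω) {T p : ℤ} {s : St} (hs : ω T p = some s) :
    ∃ f t0, PL ω f T t0 s.j.a ∧ f T = p ∧ sf ω f T = s := by
  have al : ∀ n : ℕ, ∃ s', ω (T - n) (bk ω T p n) = some s' ∧ s'.j.a = s.j.a ∧
      ((s'.j.ph : ℕ) : ℤ) = ((s.j.ph : ℕ) - (n : ℤ)) % 43 := by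
    intro n
    induction n with
    | zero =>
      refine ⟨s, by simpa [bk] using hs, rfl, ?_⟩
      have := s.j.ph.isLt
      push_cast; omega
    | succ n ih =>
      obtain ⟨s', h1, h2, h3⟩ := ih
      have e : T - (n : ℤ) = (T - ((n + 1 : ℕ) : ℤ)) + 1 := by push_cast; ring
      rw [e] at h1
      obtain ⟨s0, l, r, h4, h5, h6, h7⟩ := h _ _ _ h1
      refine ⟨s0, ?_, ?_, ?_⟩
      · rw [← h4]
        rw [bk_succ, e, h1]; rfl
      · rw [← h2, out_a h7]
      · have := out_ph h7
        have h8 := s0.j.ph.isLt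
        push_cast; omega
  have stp : ∀ n : ℕ, Step ω (T - (n + 1 : ℕ)) (bk ω T p (n + 1))
      ((ω (T - (n + 1 : ℕ)) (bk ω T p (n + 1))).getD default)
      ((ω (T - n) (bk ω T p n)).getD default) := by
    intro n
    obtain ⟨s', h1, -, -⟩ := al n
    have e : T - (n : ℤ) = (T - ((n + 1 : ℕ) : ℤ)) + 1 := by push_cast; ring
    have h1' := h1
    rw [e] at h1
    obtain ⟨s0, l, r, h4, h5, h6, h7⟩ := h _ _ _ h1
    have e2 : bk ω T p n - s'.j.v.z = bk ω T p (n + 1) := by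
      rw [bk_succ, h1']; rfl
    rw [e2] at h4 h5 h6
    refine ⟨l, r, h5, h6, ?_⟩
    rw [h4, h1']
    exact h7
  set f : ℤ → ℤ := fun t => bk ω T p (T - t).toNat with hf
  have fe : ∀ n : ℕ, f (T - n) = bk ω T p n := by
    intro n; simp [hf]
  have ex : ∀ t ≤ T, ∃ n : ℕ, t = T - n := fun t ht => ⟨(T - t).toNat, by omega⟩
  refine ⟨f, T - (s.j.ph : ℕ), ⟨?_, ?_, ?_, ?_, ?_⟩, ?_, ?_⟩
  · intro t ht
    obtain ⟨n, rfl⟩ := ex t ht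
    obtain ⟨s', h1, h2⟩ := al n
    unfold sf
    rw [fe, h1]; rfl
  · intro t ht
    obtain ⟨n, rfl⟩ := ex t ht
    obtain ⟨s', h1, h2, h3⟩ := al n
    unfold sf
    rw [fe, h1]; exact h2
  · intro t ht
    obtain ⟨n, rfl⟩ := ex t ht
    obtain ⟨s', h1, h2, h3⟩ := al n
    unfold sf
    rw [fe, h1]
    simp only [Option.getD_some]
    omega
  · intro t ht
    obtain ⟨n, hn⟩ := ex (t + 1) ht
    have e : t = T - ((n + 1 : ℕ) : ℤ) := by push_cast; omega
    have := stp n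
    unfold sf
    rw [hn, e, fe, fe]
    exact this
  · intro t ht
    obtain ⟨n, hn⟩ := ex (t + 1) ht
    have e : t = T - ((n + 1 : ℕ) : ℤ) := by push_cast; omega
    unfold sf
    rw [hn, e, fe, fe]
    rw [bk_succ]
    ring
  · have := fe 0
    simpa [bk] using this
  · unfold sf
    have := fe 0
    simp [bk] at this
    rw [this, hs]; rfl

lemma PL.congr_back {ω f g T0 t0 a T1 t1 b} (hf : PL ω f T0 t0 a) (hg : PL ω g T1 t1 b)
    {t : ℤ} (h0 : t ≤ T0) (h1 : t ≤ T1) (e : f t = g t) : ∀ u ≤ t, f u = g u := by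
  have : ∀ n : ℕ, f (t - n) = g (t - n) := by
    intro n
    induction n with
    | zero => simpa using e
    | succ n ih =>
      have e1 : t - (n : ℤ) = (t - ((n + 1 : ℕ) : ℤ)) + 1 := by push_cast; ring
      rw [e1] at ih
      have p1 := hf.pos (t - ((n + 1 : ℕ) : ℤ)) (by push_cast; omega)
      have p2 := hg.pos (t - ((n + 1 : ℕ) : ℤ)) (by push_cast; omega)
      have : sf ω f (t - ((n + 1 : ℕ) : ℤ) + 1) = sf ω g (t - ((n + 1 : ℕ) : ℤ) + 1) := by
        unfold sf; rw [ih]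
      rw [this] at p1
      omega
  intro u hu
  have := this (t - u).toNat
  rwa [show t - ((t - u).toNat : ℤ) = u by omega] at this

lemma PL.surv {ω f T0 t0 a} (h : PL ω f T0 t0 a) {t : ℤ} (ht : t + 1 ≤ T0) :
    Surv ω t (f t) :=
  ⟨sf ω f (t + 1), by rw [← h.pos t ht]; exact h.alive _ ht⟩

lemma Obs.eq_of_surv {ω t q l} (h : Obs ω t q l) (hs : Surv ω t q) : l = ω t q := by
  rcases h with h | h
  · exact h
  · exact absurd hs h.2

lemma Obs.some {ω t q s} (h : Obs ω t q (some s)) : ω t q = some s := by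
  rcases h with h | h
  · exact h.symm
  · simp at h

/-- The facts available for one step. -/
lemma PL.stepf {ω f T0 t0 a} (h : PL ω f T0 t0 a) {t : ℤ} {τ : ℕ} (ht : t + 1 ≤ T0)
    (hτ : t = t0 + τ) (hτ' : τ < 43) :
    ∃ l r, Obs ω t (f t - 1) l ∧ Obs ω t (f t + 1) r ∧
      (sf ω f t).j.a = a ∧ ((sf ω f t).j.ph : ℕ) = τ ∧
      okL (sf ω f t).j (l.map St.j) = true ∧ okR (sf ω f t).j (r.map St.j) = true ∧
      velf (sf ω f t).j (sf ω f t).g.d1 (rd (lkL a τ) l) =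
        velf (sf ω f t).j (sf ω f t).g.d1 (rd (lkR a τ) r) ∧
      exec (opf a τ) (sf ω f t).g (rd (lkL a τ) l) (rd (lkR a τ) r) = some (sf ω f (t + 1)).g ∧
      f (t + 1) = f t + (velf (sf ω f t).j (sf ω f t).g.d1 (rd (lkL a τ) l)).z := by
  obtain ⟨l, r, h1, h2, h3⟩ := h.step t ht
  have ha := h.la t (by omega)
  have hp : ((sf ω f t).j.ph : ℕ) = τ := by
    have := h.lph t (by omega)
    omega
  obtain ⟨o1, o2, o3, o4, o5⟩ := out_some h3
  rw [ha, hp] at o3 o4 o5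
  refine ⟨l, r, h1, h2, ha, hp, o1, o2, o3, o4, ?_⟩
  rw [h.pos t ht, o5]; rfl

lemma req_of_okR {ω t q r} {j : Lab} {a' : Fin 3} (h : okR j (r.map St.j) = true)
    (ho : Obs ω t q r) (he : exR j.a j.ph = .req a') :
    ∃ s, r = some s ∧ ω t q = some s ∧ s.j.a = a' ∧ s.j.ph = j.ph := by
  unfold okR at h
  rw [he] at h
  cases r with
  | none => simp [chk] at h
  | some s =>
    simp [chk] at h
    exact ⟨s, rfl, ho.some, h.1, h.2⟩

lemma req_of_okL {ω t q r} {j : Lab} {a' : Fin 3} (h : okL j (r.map St.j) = true)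
    (ho : Obs ω t q r) (he : exL j.a j.ph = .req a') :
    ∃ s, r = some s ∧ ω t q = some s ∧ s.j.a = a' ∧ s.j.ph = j.ph := by
  unfold okL at h
  rw [he] at h
  cases r with
  | none => simp [chk] at h
  | some s =>
    simp [chk] at h
    exact ⟨s, rfl, ho.some, h.1, h.2⟩

lemma opt_of_okR {ω t q r} {j : Lab} {a' : Fin 3} (h : okR j (r.map St.j) = true)
    (ho : Obs ω t q r) (he : exR j.a j.ph = .opt a') :
    r = none ∨ ∃ s, r = some s ∧ ω t q = some s ∧ s.j.a = a' ∧ s.j.ph = j.ph := by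
  unfold okR at h
  rw [he] at h
  cases r with
  | none => simp
  | some s =>
    simp [chk] at h
    exact Or.inr ⟨s, rfl, ho.some, h.1, h.2⟩

lemma opt_of_okL {ω t q r} {j : Lab} {a' : Fin 3} (h : okL j (r.map St.j) = true)
    (ho : Obs ω t q r) (he : exL j.a j.ph = .opt a') :
    r = none ∨ ∃ s, r = some s ∧ ω t q = some s ∧ s.j.a = a' ∧ s.j.ph = j.ph := by
  unfold okL at h
  rw [he] at h
  cases r with
  | none => simp
  | some s =>
    simp [chk] at h
    exact Or.inr ⟨s, rfl, ho.some, h.1, h.2⟩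

end UECA

namespace UECA

lemma sl_sched : ∀ a : Fin 3, ∀ τ : ℕ, τ < 44 → sl a (τ + 1) = sl a τ + (sched a τ).z := by
  decide

lemma velf_sched {j : Lab} {o v : D} (h1 : ¬ rphase j.ph) (h2 : ¬ lphase j.ph) :
    velf j o v = sched j.a j.ph := by
  unfold velf; rw [if_neg h1, if_neg h2]

lemma velf_r {j : Lab} {o v : D} (h1 : rphase j.ph) :
    velf j o v = .S ∨ velf j o v = .R := by
  unfold velf; rw [if_pos h1]; split_ifs <;> simp

lemma velf_l {j : Lab} {o v : D} (h1 : lphase j.ph) :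
    velf j o v = .S ∨ velf j o v = .L := by
  have : ¬ rphase j.ph := by unfold rphase; unfold lphase at h1; omega
  unfold velf; rw [if_neg this, if_pos h1]; split_ifs <;> simp

lemma PL.sched_step {ω f T0 t0 a} (h : PL ω f T0 t0 a) {τ : ℕ} (ht : t0 + τ + 1 ≤ T0)
    (hτ : τ < 43) (h1 : ¬ (31 ≤ τ ∧ τ ≤ 40)) :
    f (t0 + τ + 1) - sl a (τ + 1) = f (t0 + τ) - sl a τ := by
  obtain ⟨l, r, -, -, ha, hp, -, -, -, -, e⟩ := h.stepf ht rfl hτ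
  rw [velf_sched (by unfold rphase; omega) (by unfold lphase; omega), ha, hp] at e
  have := sl_sched a τ (by omega)
  omega

/-- Before the motion phases, the particle follows its slot. -/
lemma PL.stat {ω f T0 t0 a} (h : PL ω f T0 t0 a) (τ : ℕ) (hτ : τ ≤ 31) (ht : t0 + τ ≤ T0) :
    f (t0 + τ) - sl a τ = f t0 - sl a 0 := by
  induction τ with
  | zero => simp
  | succ n ih =>
    have h0 := ih (by omega) (by push_cast at ht; omega)
    have h1 := h.sched_step (τ := n) (by push_cast at ht; omega) (by omega) (by omega)
    have e : t0 + ((n + 1 : ℕ) : ℤ) = t0 + n + 1 := by push_cast; ring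
    rw [e]
    omega

lemma PL.nbR {ω f T0 t0 a} (hR : Rel ω) (h : PL ω f T0 t0 a) {τ : ℕ} (ht : t0 + τ + 1 ≤ T0)
    (hτ : τ < 43) {a' : Fin 3} (he : exR a τ = .req a') :
    ∃ g, PL ω g (t0 + τ) t0 a' ∧ g (t0 + τ) = f (t0 + τ) + 1 := by
  obtain ⟨l, r, -, o2, ha, hp, -, k2, -, -, -⟩ := h.stepf ht rfl hτ
  obtain ⟨s, -, h2, h3, h4⟩ := req_of_okR k2 o2 (by rw [ha, hp]; exact he)
  obtain ⟨g, t1, g1, g2, g3⟩ := exists_PL hR h2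
  rw [h3] at g1
  refine ⟨g, g1.shift ?_, g2⟩
  have := g1.lph _ le_rfl
  rw [g3, h4, hp] at this
  omega

lemma PL.nbL {ω f T0 t0 a} (hR : Rel ω) (h : PL ω f T0 t0 a) {τ : ℕ} (ht : t0 + τ + 1 ≤ T0)
    (hτ : τ < 43) {a' : Fin 3} (he : exL a τ = .req a') :
    ∃ g, PL ω g (t0 + τ) t0 a' ∧ g (t0 + τ) = f (t0 + τ) - 1 := by
  obtain ⟨l, r, o1, o2, ha, hp, k1, k2, -, -, -⟩ := h.stepf ht rfl hτ
  obtain ⟨s, -, h2, h3, h4⟩ := req_of_okL k1 o1 (by rw [ha, hp]; exact he)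
  obtain ⟨g, t1, g1, g2, g3⟩ := exists_PL hR h2
  rw [h3] at g1
  refine ⟨g, g1.shift ?_, g2⟩
  have := g1.lph _ le_rfl
  rw [g3, h4, hp] at this
  omega

lemma PL.role {ω f g T0 t0 a T1 t1 b} (hf : PL ω f T0 t0 a) (hg : PL ω g T1 t1 b)
    {t : ℤ} (h0 : t ≤ T0) (h1 : t ≤ T1) (e : f t = g t) : a = b ∧ (t0 - t1) % 43 = 0 := by
  have hs : sf ω f t = sf ω g t := by unfold sf; rw [e]
  have := hf.la t h0
  have p1 := hf.lph t h0
  have p2 := hg.lph t h1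
  rw [hs] at this p1
  refine ⟨by rw [← this, hg.la t h1], by omega⟩

/-- The positions of two neighbouring roles are linked. -/
lemma pair_back {ω f g T0 t0 a a'} (hR : Rel ω) (hf : PL ω f T0 t0 a) (hg : PL ω g T0 t0 a')
    (haa : (a = 0 ∧ a' = 1) ∨ (a = 1 ∧ a' = 2)) (τ : ℕ) (hτ : τ ≤ 43) (ht : t0 + τ ≤ T0)
    (e : f (t0 + τ) - sl a τ = g (t0 + τ) - sl a' τ) :
    ∀ σ ≤ τ, f (t0 + σ) - sl a σ = g (t0 + σ) - sl a' σ := by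
  induction τ with
  | zero => intro σ hσ; obtain rfl : σ = 0 := by omega
            exact e
  | succ n ih =>
    have ht' : t0 + (n : ℤ) + 1 ≤ T0 := by push_cast at ht; omega
    have e1 : t0 + ((n + 1 : ℕ) : ℤ) = t0 + n + 1 := by push_cast; ring
    have key : f (t0 + n) - sl a n = g (t0 + n) - sl a' n := by
      rw [e1] at e
      by_cases hm : 31 ≤ n ∧ n ≤ 40
      · obtain ⟨l, r, -, -, pa, pp, -, -, -, -, pe⟩ := hf.stepf ht' rfl (by omega)
        obtain ⟨l', r', -, -, qa, qp, -, -, -, -, qe⟩ := hg.stepf ht' rfl (by omega)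
        have s1 : sl a n = sl a (n + 1) := by
          have := sl_sched a n (by omega)
          rw [this]
          unfold sched; split_ifs <;> first | omega | simp [Vel.z]
        have s2 : sl a' n = sl a' (n + 1) := by
          have := sl_sched a' n (by omega)
          rw [this]
          unfold sched; split_ifs <;> first | omega | simp [Vel.z]
        have s3 : sl a' n = sl a n + 1 := by
          have h1 : ¬ (4 ≤ n ∧ n ≤ 10) := by omega
          have h2 : ¬ (n = 8 ∨ n = 9) := by omega
          have h3 : ¬ (3 ≤ n ∧ n ≤ 11) := by omega
          rcases haa with ⟨rfl, rfl⟩ | ⟨rfl, rfl⟩ <;> simp [sl, h1, h2, h3]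
        have cohere : ∀ v w : Vel, (v = .S ∨ w = .S ∨ v = w) →
            f (t0 + n + 1) = f (t0 + n) + v.z → g (t0 + n + 1) = g (t0 + n) + w.z →
            f (t0 + n) - sl a n = g (t0 + n) - sl a' n := by
          intro v w hvw hv hw
          have hz : f (t0 + n) - sl a n = g (t0 + n) - sl a' n ∨ g (t0 + n) = f (t0 + n) ∨
              g (t0 + n) = f (t0 + n) + 2 := by
            cases v <;> cases w <;> simp [Vel.z] at hv hw hvw <;> omega
          have hne : a ≠ a' := by rcases haa with ⟨rfl, rfl⟩ | ⟨rfl, rfl⟩ <;> decide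
          rcases hz with hz | hz | hz
          · exact hz
          · exact absurd (hf.role hg (t := t0 + n) (by omega) (by omega) hz.symm).1 hne
          · exfalso
            have x1 : exR a n = .req a' := by
              rcases haa with ⟨rfl, rfl⟩ | ⟨rfl, rfl⟩ <;> simp [exR] <;> omega
            have x2 : exL a' n = .req a := by
              rcases haa with ⟨rfl, rfl⟩ | ⟨rfl, rfl⟩ <;> simp [exL] <;> omega
            obtain ⟨u, u1, u2⟩ := hf.nbR hR ht' (by omega) x1
            obtain ⟨w, w1, w2⟩ := hg.nbL hR ht' (by omega) x2
            exact hne (w1.role u1 le_rfl le_rfl (by omega)).1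
        refine cohere _ _ ?_ pe qe
        by_cases hr : n ≤ 35
        · have v1 := velf_r (j := (sf ω f (t0 + n)).j) (o := (sf ω f (t0 + n)).g.d1)
            (v := rd (lkL a n) l) (by rw [pp]; exact ⟨hm.1, hr⟩)
          have v2 := velf_r (j := (sf ω g (t0 + n)).j) (o := (sf ω g (t0 + n)).g.d1)
            (v := rd (lkL a' n) l') (by rw [qp]; exact ⟨hm.1, hr⟩)
          rcases v1 with v1 | v1 <;> rcases v2 with v2 | v2 <;> simp [v1, v2]
        · have v1 := velf_l (j := (sf ω f (t0 + n)).j) (o := (sf ω f (t0 + n)).g.d1)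
            (v := rd (lkL a n) l) (by rw [pp]; exact ⟨by omega, hm.2⟩)
          have v2 := velf_l (j := (sf ω g (t0 + n)).j) (o := (sf ω g (t0 + n)).g.d1)
            (v := rd (lkL a' n) l') (by rw [qp]; exact ⟨by omega, hm.2⟩)
          rcases v1 with v1 | v1 <;> rcases v2 with v2 | v2 <;> simp [v1, v2]
      · have := hf.sched_step ht' (by omega) hm
        have := hg.sched_step ht' (by omega) hm
        omega
    intro σ hσ
    rcases Nat.lt_or_ge n σ with h | h
    · obtain rfl : σ = n + 1 := by omega
      exact e
    · exact ih (by omega) (by omega) key σ h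

end UECA

namespace UECA

/-- Displacement of a block during its cycle. -/
def sh (w : Vel) (τ : ℕ) : ℤ :=
  match w with
  | .S => 0
  | .R => if τ ≤ 31 then 0 else if τ ≤ 36 then τ - 31 else 5
  | .L => if τ ≤ 36 then 0 else if τ ≤ 41 then 36 - τ else -5

/-- A block which encodes the particle `(j, e)`. -/
def Eb (ω : ℤ → ℤ → Option St) (t x : ℤ) (j : Lab) (e : Reg) : Prop :=
  ω t (x + 1) = some ⟨⟨0, 0, .S⟩, ⟨.code j 0, .code j 0, .skip⟩⟩ ∧
  ω t (x + 2) = some ⟨⟨1, 0, .S⟩, e⟩ ∧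
  ω t (x + 3) = some ⟨⟨2, 0, .S⟩, ⟨.code j 0, .code j 0, .skip⟩⟩

lemma sl_move (a : Fin 3) (τ : ℕ) (h : 31 ≤ τ) : sl a τ = sl a 0 := by
  fin_cases a <;> simp [sl] <;> omega

lemma pos_step (j : Lab) (o v : D) (w : Vel) (a : Fin 3) (τ : ℕ) (ha : j.a = a)
    (hp : (j.ph : ℕ) = τ)
    (hw : 31 ≤ τ → τ ≤ 40 → (if a = 1 then v else o) = .wd w) :
    sl a (τ + 1) + sh w (τ + 1) = sl a τ + sh w τ + (velf j o v).z := by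
  have h43 := j.ph.isLt
  rw [hp] at h43
  by_cases h1 : 31 ≤ τ ∧ τ ≤ 40
  · have hw := hw h1.1 h1.2
    rw [sl_move a τ h1.1, sl_move a (τ + 1) (by omega)]
    unfold velf
    rw [ha, hp, hw]
    by_cases h2 : τ ≤ 35
    · rw [if_pos ⟨h1.1, h2⟩]
      cases w <;> simp [sh, Vel.z] <;> split_ifs <;> push_cast <;> omega
    · rw [if_neg (by unfold rphase; omega), if_pos (by unfold lphase; omega)]
      cases w <;> simp [sh, Vel.z] <;> split_ifs <;> push_cast <;> omega
  · rw [velf_sched (by unfold rphase; omega) (by unfold lphase; omega), ha, hp,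
      sl_sched a τ (by omega)]
    have : sh w (τ + 1) = sh w τ := by
      cases w <;> simp [sh] <;> split_ifs <;> push_cast <;> omega
    omega

lemma F_d2 {o : Op} {g g' : Reg} {uL uR : D} {j : Lab} {n : Fin 14} (ho : o ≠ .SETW)
    (h : exec o g uL uR = some g') (hd : g.d2 = .code j n) : ∃ n', g'.d2 = .code j n' := by
  unfold exec at h
  split_ifs at h with h1
  · cases h; exact ⟨n, hd⟩
  · cases o <;> simp [F, hd] at h ho <;> (try split at h) <;> (try simp at h) <;>
      (try replace h := h.2) <;> subst h <;> first | exact ⟨_, rfl⟩ | exact ⟨_, hd⟩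

lemma opf_ne_SETW : ∀ a : Fin 3, a ≠ 1 → ∀ τ : ℕ, τ < 43 → τ ≠ 27 → opf a τ ≠ .SETW := by
  decide

lemma opf_ID : ∀ a : Fin 3, a ≠ 1 → ∀ τ : ℕ, τ < 43 → 28 ≤ τ → τ ≠ 41 → opf a τ = .ID := by
  decide

lemma exec_ID {g g' : Reg} {uL uR : D} (h : exec .ID g uL uR = some g') : g' = g := by
  unfold exec at h; split_ifs at h <;> simp [F] at h <;> exact h.symm

lemma opf41 : ∀ a : Fin 3, a ≠ 1 → opf a 41 = .PJ2 ∧ lkL a 41 = false ∧ opf a 27 = .SETW ∧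
    lkL a 27 = false := by decide

lemma exec_PJ2 {g g' : Reg} {uR : D} (h : exec .PJ2 g .nil uR = some g') :
    ∃ j, g.d2 = .code j 0 ∧ g' = ⟨.code j 0, .code j 0, .skip⟩ := by
  unfold exec at h
  simp [F] at h
  split at h
  · rename_i j n hd
    simp at h
    exact ⟨j, by rw [hd, h.1], h.2.symm⟩
  · simp at h

lemma exec_SETW {g g' : Reg} {uR : D} {j n} (h : exec .SETW g .nil uR = some g')
    (hd : g.d2 = .code j n) :
    g' = ⟨.wd (velf j g.d1 g.d3), .code (nxt j (velf j g.d1 g.d3)) 0, .skip⟩ := by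
  unfold exec at h
  simp [F, hd] at h
  exact h.symm

lemma rd_false (l : Option St) : rd false l = .nil := rfl

lemma PL.vel0 {ω f T0 t0 a} (h : PL ω f T0 t0 a) (ht : t0 ≤ T0) :
    (sf ω f t0).j = ⟨a, 0, .S⟩ ∧ f (t0 - 1) = f t0 := by
  have h' := h.shift (t1 := t0 - 43) (by omega)
  have e0 : t0 - 43 + ((42 : ℕ) : ℤ) = t0 - 1 := by push_cast; ring
  have := h'.sched_step (τ := 42) (by push_cast; omega) (by omega) (by omega)
  rw [e0, sl_move a 42 (by omega), sl_move a (42 + 1) (by omega)] at this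
  have hp := h.pos (t0 - 1) (by omega)
  rw [show t0 - 1 + 1 = t0 by ring] at this hp
  have hz : (sf ω f t0).j.v = .S := by
    have : (sf ω f t0).j.v.z = 0 := by omega
    revert this
    cases (sf ω f t0).j.v <;> simp [Vel.z]
  have ha := h.la t0 ht
  have hph := h.lph t0 ht
  refine ⟨?_, by omega⟩
  cases hj : (sf ω f t0).j with
  | mk a' p' v' =>
    rw [hj] at hz ha hph
    simp only at hz ha hph
    subst hz; subst ha
    congr 1
    apply Fin.ext
    simp at hph
    simp [hph]

/-- The state of a controller at phase zero. -/
lemma PL.ctl0 {ω f T0 t0 a} (h : PL ω f T0 t0 a) (ht : t0 ≤ T0) (ha : a ≠ 1) :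
    ∃ j, (sf ω f t0).g = ⟨.code j 0, .code j 0, .skip⟩ ∧
      (sf ω f (t0 - 1)).g = ⟨.code j 0, .code j 0, .skip⟩ := by
  have h' := h.shift (t1 := t0 - 43) (by omega)
  obtain ⟨l, r, -, -, -, -, -, -, -, e1, -⟩ := h'.stepf (t := t0 - 2) (τ := 41) (by omega)
    (by push_cast; omega) (by omega)
  rw [(opf41 a ha).1, (opf41 a ha).2.1, rd_false] at e1
  obtain ⟨j, -, hj⟩ := exec_PJ2 e1
  rw [show t0 - 2 + 1 = t0 - 1 by ring] at hj
  obtain ⟨l, r, -, -, -, -, -, -, -, e1, -⟩ := h'.stepf (t := t0 - 1) (τ := 42) (by omega)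
    (by push_cast; omega) (by omega)
  rw [opf_ID a ha 42 (by omega) (by omega) (by omega)] at e1
  have := exec_ID e1
  rw [show t0 - 1 + 1 = t0 by ring, hj] at this
  exact ⟨j, this, hj⟩

lemma PL.ctl_d2 {ω f T0 t0 a} (h : PL ω f T0 t0 a) (ha : a ≠ 1) {j : Lab}
    (hj : (sf ω f t0).g.d2 = .code j 0) (τ : ℕ) (hτ : τ ≤ 27) (ht : t0 + τ ≤ T0) :
    ∃ n, (sf ω f (t0 + τ)).g.d2 = .code j n := by
  induction τ with
  | zero => exact ⟨0, by simpa using hj⟩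
  | succ n ih =>
    obtain ⟨m, hm⟩ := ih (by omega) (by push_cast at ht; omega)
    obtain ⟨l, r, -, -, -, -, -, -, -, e1, -⟩ := h.stepf (t := t0 + n) (τ := n)
      (by push_cast at ht; omega) rfl (by omega)
    have := F_d2 (opf_ne_SETW a ha n (by omega) (by omega)) e1 hm
    push_cast
    rw [← add_assoc]
    exact this

/-- The history of a controller. -/
lemma PL.ctl {ω f T0 t0 a} (h : PL ω f T0 t0 a) (ha : a ≠ 1) {j : Lab}
    (hj : (sf ω f t0).g.d2 = .code j 0) :
    ∃ w, al j w ∧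
      (∀ τ : ℕ, 28 ≤ τ → τ ≤ 41 → t0 + τ ≤ T0 → (sf ω f (t0 + τ)).g.d1 = .wd w) ∧
      (∀ τ : ℕ, τ ≤ 43 → t0 + τ ≤ T0 → f (t0 + τ) = f t0 - sl a 0 + sl a τ + sh w τ) ∧
      (∀ τ : ℕ, 28 ≤ τ → τ ≤ 43 → t0 + τ ≤ T0 →
        (sf ω f (t0 + τ)).g.d2 = .code (nxt j w) 0) := by
  by_cases hT : T0 < t0 + 28
  · refine ⟨velf j .skip .skip, velf_al _ _ _, ?_, ?_, ?_⟩
    · intro τ h1 h2 h3; omega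
    · intro τ h1 h2
      have := h.stat τ (by omega) h2
      have h0 : sh (velf j .skip .skip) τ = 0 := by
        cases velf j .skip .skip <;> simp [sh] <;> split_ifs <;> omega
      omega
    · intro τ h1 h2 h3; omega
  push Not at hT
  obtain ⟨n, hn⟩ := h.ctl_d2 ha hj 27 le_rfl (by push_cast; omega)
  obtain ⟨l, r, -, -, -, -, -, -, -, e1, -⟩ := h.stepf (t := t0 + (27 : ℕ)) (τ := 27)
      (by push_cast; omega) rfl (by omega)
  rw [(opf41 a ha).2.2.1, (opf41 a ha).2.2.2, rd_false] at e1
  have h28 := exec_SETW e1 hn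
  set w := velf j (sf ω f (t0 + (27 : ℕ))).g.d1 (sf ω f (t0 + (27 : ℕ))).g.d3 with hw
  have d12 : ∀ τ : ℕ, 28 ≤ τ → τ ≤ 41 → t0 + τ ≤ T0 →
      (sf ω f (t0 + τ)).g = ⟨.wd w, .code (nxt j w) 0, .skip⟩ := by
    intro τ h1
    induction τ, h1 using Nat.le_induction with
    | base => intro _ _; rw [← h28]; congr 2; push_cast; ring
    | succ n hn ih =>
      intro h2 h3
      obtain ⟨l, r, -, -, -, -, -, -, -, e1, -⟩ := h.stepf (t := t0 + n) (τ := n)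
        (by push_cast at h3; omega) rfl (by omega)
      rw [opf_ID a ha n (by omega) (by omega) (by omega)] at e1
      have := exec_ID e1
      rw [ih (by omega) (by push_cast at h3; omega)] at this
      push_cast
      rw [← add_assoc]
      exact this
  refine ⟨w, velf_al _ _ _, fun τ h1 h2 h3 => by rw [d12 τ h1 h2 h3], ?_, ?_⟩
  · intro τ
    induction τ with
    | zero =>
      intro _ _
      have : sh w 0 = 0 := by cases w <;> simp [sh]
      push_cast; rw [add_zero]; omega
    | succ n ih =>
      intro h1 h2
      have i := ih (by omega) (by push_cast at h2; omega)
      obtain ⟨l, r, -, -, pa, pp, -, -, -, -, e⟩ := h.stepf (t := t0 + n) (τ := n)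
        (by push_cast at h2; omega) rfl (by omega)
      have ps := pos_step (sf ω f (t0 + n)).j (sf ω f (t0 + n)).g.d1 (rd (lkL a n) l) w a n pa pp
        (by intro q1 q2; rw [if_neg ha, d12 n (by omega) (by omega) (by push_cast at h2; omega)])
      push_cast
      rw [← add_assoc]
      omega
  · intro τ h1 h2 h3
    rcases Nat.lt_or_ge 41 τ with h4 | h4
    · have q := d12 41 (by omega) (by omega) (by push_cast; omega)
      obtain ⟨l, r, -, -, -, -, -, -, -, e1, -⟩ := h.stepf (t := t0 + (41 : ℕ)) (τ := 41)
        (by push_cast; omega) rfl (by omega)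
      rw [(opf41 a ha).1, (opf41 a ha).2.1, rd_false] at e1
      obtain ⟨j', k1, k2⟩ := exec_PJ2 e1
      rw [q] at k1
      simp only [D.code.injEq] at k1
      have q42 : (sf ω f (t0 + (42 : ℕ))).g.d2 = .code (nxt j w) 0 := by
        rw [show t0 + ((42 : ℕ) : ℤ) = t0 + (41 : ℕ) + 1 by push_cast; ring, k2, k1.1]
      rcases Nat.lt_or_ge 42 τ with h5 | h5
      · obtain rfl : τ = 43 := by omega
        obtain ⟨l, r, -, -, -, -, -, -, -, e1, -⟩ := h.stepf (t := t0 + (42 : ℕ)) (τ := 42)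
          (by push_cast at h3 ⊢; omega) rfl (by omega)
        rw [opf_ID a ha 42 (by omega) (by omega) (by omega)] at e1
        have := exec_ID e1
        rw [show t0 + ((43 : ℕ) : ℤ) = t0 + (42 : ℕ) + 1 by push_cast; ring, this, q42]
      · obtain rfl : τ = 42 := by omega
        exact q42
    · rw [d12 τ h1 h4 h3]

end UECA

namespace UECA

lemma exec_EQ {g g' : Reg} {uL uR : D} (hs : uL ≠ .skip) (h : exec .EQ g uL uR = some g') :
    uL = uR := by
  unfold exec at h
  simp [F, hs] at h
  exact h.1

lemma PL.blk1 {ω f T0 t0} (hR : Rel ω) (h : PL ω f T0 t0 1) (ht : t0 + 1 ≤ T0) :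
    ∃ j e, Eb ω t0 (f t0 - 2) j e := by
  obtain ⟨g0, p0, q0⟩ := h.nbL hR (τ := 0) (a' := 0) (by push_cast; omega) (by omega) (by decide)
  obtain ⟨g2, p2, q2⟩ := h.nbR hR (τ := 0) (a' := 2) (by push_cast; omega) (by omega) (by decide)
  simp only [Nat.cast_zero, add_zero] at p0 q0 p2 q2
  obtain ⟨j0, u0, v0⟩ := p0.ctl0 le_rfl (by decide)
  obtain ⟨j2, u2, v2⟩ := p2.ctl0 le_rfl (by decide)
  have h' := h.shift (t1 := t0 - 43) (by omega)
  obtain ⟨l, r, o1, o2, pa, pp, k1, k2, -, e1, -⟩ := h'.stepf (t := t0 - 1) (τ := 42) (by omega)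
    (by push_cast; omega) (by omega)
  obtain ⟨sl', hl, hl1, -, -⟩ := req_of_okL (a' := 0) k1 o1 (by rw [pa, pp]; decide)
  obtain ⟨sr', hr, hr1, -, -⟩ := req_of_okR (a' := 2) k2 o2 (by rw [pa, pp]; decide)
  rw [h.vel0 (by omega) |>.2] at hl1 hr1
  have e0 : g0 (t0 - 1) = f t0 - 1 := by rw [(p0.vel0 le_rfl).2, q0]
  have e2 : g2 (t0 - 1) = f t0 + 1 := by rw [(p2.vel0 le_rfl).2, q2]
  rw [← e0, p0.alive _ (by omega)] at hl1
  rw [← e2, p2.alive _ (by omega)] at hr1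
  cases hl1; cases hr1
  rw [hl, hr] at e1
  simp only [opf, lkL, lkR, rd, v0, v2] at e1
  have := exec_EQ (by simp) e1
  simp at this
  subst this
  refine ⟨j0, (sf ω f t0).g, ?_, ?_, ?_⟩
  · rw [show f t0 - 2 + 1 = g0 t0 by omega, p0.alive _ le_rfl]
    congr 1
    ext1
    · exact (p0.vel0 le_rfl).1
    · exact u0
  · rw [show f t0 - 2 + 2 = f t0 by omega, h.alive _ (by omega)]
    congr 1
    ext1
    · exact (h.vel0 (by omega)).1
    · rfl
  · rw [show f t0 - 2 + 3 = g2 t0 by omega, p2.alive _ le_rfl]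
    congr 1
    ext1
    · exact (p2.vel0 le_rfl).1
    · exact u2

lemma PL.blk {ω f T0 t0 a} (hR : Rel ω) (h : PL ω f T0 t0 a) (ht : t0 + 2 ≤ T0) :
    ∃ j e, Eb ω t0 (f t0 - sl a 0) j e := by
  have hc : a = 0 ∨ a = 1 ∨ a = 2 := by fin_cases a <;> simp
  have s0 : sl 0 0 = 1 := by decide
  have s1 : sl 1 0 = 2 := by decide
  have s2 : sl 2 0 = 3 := by decide
  have s0' : sl 0 1 = 1 := by decide
  have s1' : sl 1 1 = 2 := by decide
  have s2' : sl 2 1 = 3 := by decide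
  rcases hc with rfl | rfl | rfl
  · obtain ⟨g, p, q⟩ := h.nbR hR (τ := 1) (a' := 1) (by push_cast; omega) (by omega) (by decide)
    have := pair_back hR (h.mono (T1 := t0 + (1 : ℕ)) (by push_cast; omega)) p (by simp) 1
      (by omega) le_rfl (by omega) 0 (by omega)
    obtain ⟨j, e, hb⟩ := p.blk1 hR (by push_cast; omega)
    refine ⟨j, e, ?_⟩
    simp only [Nat.cast_zero, add_zero] at this
    rwa [show f t0 - sl 0 0 = g t0 - 2 by omega]
  · rw [s1]; exact h.blk1 hR (by omega)
  · obtain ⟨g, p, q⟩ := h.nbL hR (τ := 1) (a' := 1) (by push_cast; omega) (by omega) (by decide)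
    have := pair_back hR p (h.mono (T1 := t0 + (1 : ℕ)) (by push_cast; omega)) (by simp) 1
      (by omega) le_rfl (by omega) 0 (by omega)
    obtain ⟨j, e, hb⟩ := p.blk1 hR (by push_cast; omega)
    refine ⟨j, e, ?_⟩
    simp only [Nat.cast_zero, add_zero] at this
    rwa [show f t0 - sl 2 0 = g t0 - 2 by omega]

lemma Eb.sf_eq {ω f T0 t0 a j e} (h : PL ω f T0 t0 a) (ht : t0 ≤ T0)
    (hb : Eb ω t0 (f t0 - sl a 0) j e) (ha : a ≠ 1) :
    (sf ω f t0).g = ⟨.code j 0, .code j 0, .skip⟩ := by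
  have hc : a = 0 ∨ a = 1 ∨ a = 2 := by fin_cases a <;> simp
  have al := h.alive t0 ht
  rcases hc with rfl | rfl | rfl
  · have := hb.1
    rw [show f t0 - sl 0 0 + 1 = f t0 by simp [sl], al] at this
    simp at this; rw [this]
  · exact absurd rfl ha
  · have := hb.2.2
    rw [show f t0 - sl 2 0 + 3 = f t0 by simp [sl], al] at this
    simp at this; rw [this]

lemma sh_le31 (w : Vel) (τ : ℕ) (h : τ ≤ 31) : sh w τ = 0 := by
  cases w <;> simp [sh] <;> omega

/-- The fundamental description of a particle during a cycle. -/
lemma PL.xt {ω f T0 t0 a} (hR : Rel ω) (h : PL ω f T0 t0 a) (ht : t0 + 2 ≤ T0) :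
    ∃ j e, Eb ω t0 (f t0 - sl a 0) j e ∧ ∃ w, al j w ∧
      ∀ τ : ℕ, τ ≤ 44 → t0 + τ ≤ T0 → f (t0 + τ) = f t0 - sl a 0 + sl a τ + sh w τ := by
  obtain ⟨j, e, hb⟩ := h.blk hR ht
  refine ⟨j, e, hb, ?_⟩
  suffices ∃ w, al j w ∧ ∀ τ : ℕ, τ ≤ 43 → t0 + τ ≤ T0 →
      f (t0 + τ) = f t0 - sl a 0 + sl a τ + sh w τ by
    obtain ⟨w, h1, h2⟩ := this
    refine ⟨w, h1, fun τ h3 h4 => ?_⟩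
    rcases Nat.lt_or_ge 43 τ with h5 | h5
    · obtain rfl : τ = 44 := by omega
      have h' := h.shift (t1 := t0 + 43) (by omega)
      have q := h'.stat 1 (by omega) (by push_cast at h4 ⊢; omega)
      have q2 := h2 43 le_rfl (by push_cast at h4 ⊢; omega)
      push_cast at q q2 ⊢
      rw [show t0 + 44 = t0 + 43 + 1 by ring]
      have e1 : sh w 43 = sh w 44 := by cases w <;> simp [sh]
      have e2 : sl a 1 = sl a 44 := (by decide : ∀ a : Fin 3, sl a 1 = sl a 44) a
      have e3 : sl a 0 = sl a 43 := (by decide : ∀ a : Fin 3, sl a 0 = sl a 43) a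
      omega
    · exact h2 τ h5 h4
  by_cases ha : a = 1
  swap
  · have := Eb.sf_eq h (by omega) hb ha
    obtain ⟨w, h1, -, h3, -⟩ := h.ctl ha (j := j) (by rw [this])
    exact ⟨w, h1, h3⟩
  subst ha
  by_cases hT : T0 ≤ t0 + 31
  · refine ⟨velf j .skip .skip, velf_al _ _ _, ?_⟩
    intro τ h1 h2
    have := h.stat τ (by omega) h2
    rw [sh_le31 _ _ (by omega)]
    omega
  push Not at hT
  obtain ⟨m, hm, hm1, hm2, hm3⟩ : ∃ m : ℕ, 31 ≤ m ∧ m ≤ 42 ∧ t0 + m + 1 ≤ T0 ∧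
      (m = 42 ∨ t0 + m + 1 = T0) := by
    by_cases hx : t0 + 43 ≤ T0
    · exact ⟨42, by omega, by omega, by push_cast; omega, Or.inl rfl⟩
    · exact ⟨(T0 - t0 - 1).toNat, by omega, by omega, by omega, Or.inr (by omega)⟩
  obtain ⟨l, r, o1, o2, pa, pp, k1, k2, -, -, e1⟩ := h.stepf (t := t0 + m) (τ := m) hm2
    rfl (by omega)
  have x1 : exL 1 m = .req 0 := by simp [exL]; omega
  obtain ⟨s, hl, hl1, hl2, hl3⟩ := req_of_okL (a' := 0) k1 o1 (by rw [pa, pp]; exact x1)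
  obtain ⟨g, t1, g1, g2, g3⟩ := exists_PL hR hl1
  rw [hl2] at g1
  have g4 := g1.lph _ le_rfl
  rw [g3, hl3, pp] at g4
  replace g1 := g1.shift (t1 := t0) (by omega)
  have pb := pair_back hR g1 (h.mono (T1 := t0 + m) (by omega)) (by simp) m (by omega) le_rfl
    (by rw [sl_move 0 m hm, sl_move 1 m hm, g2]; simp [sl]; ring)
  have p0 := pb 0 (by omega)
  simp only [Nat.cast_zero, add_zero] at p0
  have hg := Eb.sf_eq g1 (by omega) (by rw [p0]; exact hb) (by decide)
  obtain ⟨w, w1, w2, w3, -⟩ := g1.ctl (by decide) (j := j) (by rw [hg])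
  refine ⟨w, w1, ?_⟩
  have upto : ∀ τ : ℕ, τ ≤ m → f (t0 + τ) = f t0 - sl 1 0 + sl 1 τ + sh w τ := by
    intro τ hτ
    have := pb τ hτ
    have := w3 τ (by omega) (by omega)
    omega
  intro τ h1 h2
  rcases Nat.lt_or_ge m τ with h5 | h5
  · obtain rfl : τ = m + 1 := by omega
    have ps := pos_step (sf ω f (t0 + m)).j (sf ω f (t0 + m)).g.d1 (rd (lkL 1 m) l) w 1 m pa pp
        (by
          intro q1 q2
          have hk : lkL 1 m = true := by simp [lkL]; omega
          rw [if_pos rfl, hl, hk]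
          simp only [rd, if_true]
          rw [← g3]
          exact w2 m (by omega) (by omega) le_rfl)
    have := upto m le_rfl
    push_cast
    rw [← add_assoc]
    omega
  · exact upto τ h5

end UECA

namespace UECA

/-- One step of the registers of a block. -/
def bst (τ : ℕ) (xL xR : D) (G : Reg × Reg × Reg) : Option (Reg × Reg × Reg) :=
  (exec (opf 0 τ) G.1 xL (if lkR 0 τ then G.2.1.d1 else .nil)).bind fun g0 =>
  (exec (opf 1 τ) G.2.1 (if lkL 1 τ then G.1.d1 else .nil)
    (if lkR 1 τ then G.2.2.d1 else .nil)).bind fun g1 =>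
  (exec (opf 2 τ) G.2.2 (if lkL 2 τ then G.2.1.d1 else .nil) xR).map fun g2 => (g0, g1, g2)

/-- The evolution of the registers of a block. -/
def brun (xL xR : ℕ → D) (G0 : Reg × Reg × Reg) : ℕ → Option (Reg × Reg × Reg)
  | 0 => some G0
  | n + 1 => (brun xL xR G0 n).bind (bst n (xL n) (xR n))

/-- The registers of a block which encodes `(j, e)`. -/
def Er (j : Lab) (e : Reg) : Reg × Reg × Reg :=
  (⟨.code j 0, .code j 0, .skip⟩, e, ⟨.code j 0, .code j 0, .skip⟩)

lemma exec_ID' (g : Reg) (uL uR : D) : exec .ID g uL uR = some g := by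
  unfold exec F; simp

lemma opf_idle : ∀ a : Fin 3, ∀ τ : ℕ, τ < 43 →
    (τ = 2 ∨ τ = 3 ∨ (7 ≤ τ ∧ τ ≤ 10) ∨ (29 ≤ τ ∧ τ ≤ 40)) → opf a τ = .ID := by decide

lemma bst_idle (τ : ℕ) (xL xR G)
    (h : τ = 2 ∨ τ = 3 ∨ (7 ≤ τ ∧ τ ≤ 10) ∨ (29 ≤ τ ∧ τ ≤ 40)) : bst τ xL xR G = some G := by
  unfold bst
  rw [opf_idle 0 τ (by omega) h, opf_idle 1 τ (by omega) h, opf_idle 2 τ (by omega) h]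
  simp [exec_ID']

lemma comb_nil_right (x : D) : comb x .nil = x := by
  unfold comb; split_ifs with h <;> simp [h]

lemma comb_nil_left (x : D) : comb .nil x = x := by
  unfold comb; simp

lemma exec_LD_L (g : Reg) (x y : D) (h : g.d3 = .skip) (hy : y = .nil) :
    exec .LD g x y = some ⟨g.d1, g.d2, x⟩ := by
  subst hy
  unfold exec; split_ifs with h1
  · rw [h1, ← h]
  · simp [F, comb_nil_right]

lemma exec_LD_R (g : Reg) (x y : D) (hx : x = .nil) :
    exec .LD g x y = some ⟨g.d1, g.d2, y⟩ := by
  subst hx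
  simp [exec, F, comb_nil_left]

lemma exec_LO_L (g : Reg) (x : D) (h : g.d1 = .skip) :
    exec .LO g x .nil = some ⟨x, g.d2, g.d3⟩ := by
  unfold exec; split_ifs with h1
  · rw [h1, ← h]
  · simp [F, comb_nil_right]

lemma exec_LO_R (g : Reg) (y : D) :
    exec .LO g .nil y = some ⟨y, g.d2, g.d3⟩ := by
  simp [exec, F, comb_nil_left]

lemma bst0 (j e) : bst 0 .nil .nil (Er j e) =
    some (⟨.code j 0, .code j 0, e.d1⟩, e, ⟨.code j 0, .code j 0, e.d1⟩) := by
  simp [bst, opf, lkL, lkR, exec_ID', exec_LD_L, exec_LD_R, Er]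

lemma bst1 (j e) : bst 1 .nil .nil (⟨.code j 0, .code j 0, e.d1⟩, e, ⟨.code j 0, .code j 0, e.d1⟩) =
    some (⟨e.d1, .code j 0, .skip⟩, e, ⟨e.d1, .code j 0, .skip⟩) := by
  simp [bst, opf, lkL, lkR, exec_ID', exec, F]

lemma bst4 (j e) (x y : D) : bst 4 x y (⟨e.d1, .code j 0, .skip⟩, e, ⟨e.d1, .code j 0, .skip⟩) =
    some (⟨e.d1, .code j 0, x⟩, e, ⟨e.d1, .code j 0, y⟩) := by
  simp [bst, opf, lkL, lkR, exec_ID', exec_LD_L, exec_LD_R]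

lemma bst5 (j : Lab) (e : Reg) (x y : D) :
    bst 5 .nil .nil (⟨e.d1, .code j 0, x⟩, e, ⟨e.d1, .code j 0, y⟩) =
    some (⟨.code j 0, .code j 0, x⟩, e, ⟨.code j 0, .code j 0, y⟩) := by
  simp [bst, opf, lkL, lkR, exec_ID', exec, F]

/-- The neighbour `o` presents its code `c` and its first register `v`. -/
def Pres (o : Option St) (c v : D) : Prop :=
  match o with
  | none => c = .nil
  | some s => c = .code s.j 0 ∧ v = s.g.d1

/-- The value which is kept. -/
def keep (o : Option St) : D := rd true o

lemma bst6 (j : Lab) (e : Reg) (x y c d : D) (lo ro : Option St) (hl : Pres lo c x)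
    (hr : Pres ro d y) :
    bst 6 c d (⟨.code j 0, .code j 0, x⟩, e, ⟨.code j 0, .code j 0, y⟩) =
    if okL j (lo.map St.j) = true ∧ okR j (ro.map St.j) = true then
      some (⟨.code j 0, .code j 0, rd true lo⟩, e, ⟨.code j 0, .code j 0, rd true ro⟩)
    else none := by
  have o0 : opf 0 6 = .CKL := by decide
  have o1 : opf 1 6 = .ID := by decide
  have o2 : opf 2 6 = .CKR := by decide
  have l2 : lkL 2 6 = false := by decide
  have hc : c ≠ .skip := by
    cases lo with
    | none => simp [Pres] at hl; simp [hl]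
    | some s => simp [Pres] at hl; simp [hl.1]
  unfold bst
  rw [o0, o1, o2, l2]
  simp only [exec_ID']
  have a1 : ∀ u, exec .CKL ⟨.code j 0, .code j 0, x⟩ c u =
      if okL j (lo.map St.j) = true then some ⟨.code j 0, .code j 0, rd true lo⟩ else none := by
    intro u
    unfold exec
    rw [if_neg hc]
    cases lo with
    | none => simp [Pres] at hl; subst hl; simp [F, rd]
    | some s => simp [Pres] at hl; obtain ⟨rfl, rfl⟩ := hl; simp [F, rd]
  have a2 : exec .CKR ⟨.code j 0, .code j 0, y⟩ .nil d =
      if okR j (ro.map St.j) = true then some ⟨.code j 0, .code j 0, rd true ro⟩ else none := by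
    unfold exec
    rw [if_neg (by simp)]
    cases ro with
    | none => simp [Pres] at hr; subst hr; simp [F, rd]
    | some s => simp [Pres] at hr; obtain ⟨rfl, rfl⟩ := hr; simp [F, rd]
  simp only [a1, Bool.false_eq_true, if_false, a2]
  by_cases h1 : okL j (lo.map St.j) = true <;> by_cases h2 : okR j (ro.map St.j) = true <;>
    simp [h1, h2]

lemma bst11 (j : Lab) (e : Reg) (lo ro : Option St) :
    bst 11 .nil .nil
      (⟨.code j 0, .code j 0, rd true lo⟩, e, ⟨.code j 0, .code j 0, rd true ro⟩) =
    some (⟨.skip, .code j (idx (opf j.a j.ph)), rd (lkL j.a j.ph) lo⟩, e,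
      ⟨rd (lkR j.a j.ph) ro, .code j 0, rd (lkR j.a j.ph) ro⟩) := by
  have o0 : opf 0 11 = .INITL := by decide
  have o1 : opf 1 11 = .ID := by decide
  have o2 : opf 2 11 = .INITR := by decide
  have l2 : lkL 2 11 = false := by decide
  unfold bst
  rw [o0, o1, o2, l2]
  cases h1 : lkL j.a j.ph <;> cases h2 : lkR j.a j.ph <;> simp [exec_ID', exec, F, h1, h2, rd]

lemma brun12 (xL xR : ℕ → D) (j : Lab) (e : Reg) (lo ro : Option St)
    (hL : ∀ n, n ≠ 4 → n ≠ 6 → xL n = .nil) (hR : ∀ n, n ≠ 4 → n ≠ 6 → xR n = .nil)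
    (hl : Pres lo (xL 6) (xL 4)) (hr : Pres ro (xR 6) (xR 4)) :
    brun xL xR (Er j e) 12 =
    if okL j (lo.map St.j) = true ∧ okR j (ro.map St.j) = true then
      some (⟨.skip, .code j (idx (opf j.a j.ph)), rd (lkL j.a j.ph) lo⟩, e,
      ⟨rd (lkR j.a j.ph) ro, .code j 0, rd (lkR j.a j.ph) ro⟩) else none := by
  simp only [brun, Option.bind_some, hL 0 (by omega) (by omega), hR 0 (by omega) (by omega), bst0,
    hL 1 (by omega) (by omega), hR 1 (by omega) (by omega), bst1, bst_idle 2 _ _ _ (by omega),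
    bst_idle 3 _ _ _ (by omega), bst4, hL 5 (by omega) (by omega), hR 5 (by omega) (by omega),
    bst5, bst6 j e _ _ _ _ lo ro hl hr]
  split_ifs
  · simp only [Option.bind_some, bst_idle 7 _ _ _ (by omega), bst_idle 8 _ _ _ (by omega),
      bst_idle 9 _ _ _ (by omega), bst_idle 10 _ _ _ (by omega),
      hL 11 (by omega) (by omega), hR 11 (by omega) (by omega), bst11]
  · simp

end UECA

namespace UECA

lemma opn_idx (o : Op) : opn (idx o) = o := by cases o <;> rfl

lemma opf_run : ∀ m : ℕ, m < 12 → opf 0 (13 + m) = .STEP ∧ opf 1 (13 + m) = opn m ∧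
    opf 2 (13 + m) = .ID ∧ lkL 1 (13 + m) = true ∧ lkR 1 (13 + m) = true ∧
    lkR 0 (13 + m) = false := by decide

lemma exec_skip (o : Op) (g : Reg) (u : D) : exec o g .skip u = some g := by
  simp [exec]

/-- Residue of a number modulo 14. -/
def cf (m : ℕ) : Fin 14 := Fin.ofNat 14 m

lemma fin14 : ∀ i : Fin 14, ∀ m : ℕ, m < 13 → ((i - cf (m + 1) = 0) ↔ (i : ℕ) = m + 1) := by
  decide

lemma fin14' : ∀ i : Fin 14, ∀ m : ℕ, m < 13 → i - cf (m + 1) - 1 = i - cf (m + 1 + 1) := by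
  decide

/-- State of the registers of the block while the operations are scanned. -/
def scan (j : Lab) (o : Op) (VL VR : D) (m : ℕ) (e : Reg) : Reg × Reg × Reg :=
  (⟨if (idx o : ℕ) = m then VL else .skip, .code j (idx o - cf (m + 1)), VL⟩, e,
    ⟨VR, .code j 0, VR⟩)

lemma bst_scan (j : Lab) (o : Op) (VL VR : D) (m : ℕ) (hm : m < 12) (e : Reg) :
    bst (13 + m) .nil .nil (scan j o VL VR m e) =
    (if (idx o : ℕ) = m then exec o e VL VR else some e).map (scan j o VL VR (m + 1)) := by
  obtain ⟨h0, h1, h2, h3, h4, h5⟩ := opf_run m hm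
  unfold bst scan
  rw [h0, h1, h2, h3, h4, h5]
  have e0 : exec .STEP ⟨if (idx o : ℕ) = m then VL else .skip, .code j (idx o - cf (m + 1)), VL⟩
      .nil .nil = some ⟨if (idx o : ℕ) = m + 1 then VL else .skip,
        .code j (idx o - cf (m + 1 + 1)), VL⟩ := by
    simp only [exec, F]
    simp only [fin14 (idx o) m (by omega), fin14' (idx o) m (by omega), reduceCtorEq, if_false]
  simp only [exec_ID', Bool.false_eq_true, if_false, if_true, e0, Option.bind_some, Option.map_some]
  by_cases h : (idx o : ℕ) = m
  · rw [if_pos h, if_pos h, show opn m = o by rw [← h, opn_idx]]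
    cases exec o e VL VR <;> simp
  · rw [if_neg h, if_neg h]
    simp [exec_skip]

lemma bst12 (j : Lab) (o : Op) (VL VR : D) (e : Reg) :
    bst 12 .nil .nil (⟨.skip, .code j (idx o), VL⟩, e, ⟨VR, .code j 0, VR⟩) =
      some (scan j o VL VR 0 e) := by
  have o0 : opf 0 12 = .STEP := by decide
  have o1 : opf 1 12 = .ID := by decide
  have o2 : opf 2 12 = .ID := by decide
  have l2 : lkR 0 12 = false := by decide
  unfold bst scan
  rw [o0, o1, o2, l2]
  have hz : ((idx o : ℕ) = 0) ↔ idx o = 0 := by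
    rw [Fin.ext_iff]; rfl
  have hc : cf (0 + 1) = 1 := by decide
  simp [exec_ID', exec, F, hz, hc]

lemma bst25 (j : Lab) (o : Op) (VL VR : D) (e : Reg) :
    bst 25 .nil .nil (scan j o VL VR 12 e) =
    (if (idx o : ℕ) = 12 then exec o e VL VR else some e).map
      (fun e' => (⟨.skip, .code j (idx o - cf 13), VL⟩, e', ⟨.skip, .code j 0, VR⟩)) := by
  have o0 : opf 0 25 = .RS := by decide
  have o1 : opf 1 25 = opn 12 := by decide
  have o2 : opf 2 25 = .RS := by decide
  have l2 : lkR 0 25 = false := by decide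
  have l3 : lkR 1 25 = true := by decide
  have l4 : lkL 1 25 = true := by decide
  have l5 : lkL 2 25 = false := by decide
  have e1 : ∀ g : Reg, exec .RS g .nil .nil = some ⟨.skip, g.d2, g.d3⟩ := by
    intro g; simp [exec, F]
  unfold bst scan
  rw [o0, o1, o2, l2, l3, l4, l5]
  simp only [Bool.false_eq_true, if_false, if_true, e1, Option.bind_some, Option.map_some]
  by_cases h : (idx o : ℕ) = 12
  · rw [if_pos h, if_pos h, show opn 12 = o by rw [← h, opn_idx]]
    cases exec o e VL VR <;> simp
  · rw [if_neg h, if_neg h]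
    simp [exec_skip]

lemma brun_scan (xL xR : ℕ → D) (j : Lab) (e : Reg) (o : Op) (VL VR : D) (G0)
    (hL : ∀ n, n ≠ 4 → n ≠ 6 → xL n = .nil) (hR : ∀ n, n ≠ 4 → n ≠ 6 → xR n = .nil)
    (h12 : brun xL xR G0 12 = some (⟨.skip, .code j (idx o), VL⟩, e, ⟨VR, .code j 0, VR⟩)) :
    ∀ m, m ≤ 12 → brun xL xR G0 (13 + m) =
      (if m ≤ (idx o : ℕ) then some e else exec o e VL VR).map (scan j o VL VR m) := by
  intro m
  induction m with
  | zero =>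
    intro _
    rw [show 13 + 0 = 12 + 1 from rfl, brun, h12, Option.bind_some,
      hL 12 (by omega) (by omega), hR 12 (by omega) (by omega), bst12]
    simp
  | succ m ih =>
    intro hm
    rw [show 13 + (m + 1) = (13 + m) + 1 from rfl, brun, ih (by omega),
      hL _ (by omega) (by omega), hR _ (by omega) (by omega)]
    have hb : ∀ x, bst (13 + m) .nil .nil (scan j o VL VR m x) = _ :=
      fun x => bst_scan j o VL VR m (by omega) x
    rcases lt_trichotomy (idx o : ℕ) m with h | h | h
    · rw [if_neg (by omega), if_neg (by omega)]
      cases exec o e VL VR with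
      | none => simp
      | some x => simp [hb, h.ne]
    · rw [if_pos (by omega), if_neg (by omega)]
      simp [hb, h]
    · rw [if_pos (by omega), if_pos (by omega)]
      simp [hb, h.ne']

lemma brun26 (xL xR : ℕ → D) (j : Lab) (e : Reg) (o : Op) (VL VR : D) (G0)
    (hL : ∀ n, n ≠ 4 → n ≠ 6 → xL n = .nil) (hR : ∀ n, n ≠ 4 → n ≠ 6 → xR n = .nil)
    (h12 : brun xL xR G0 12 = some (⟨.skip, .code j (idx o), VL⟩, e, ⟨VR, .code j 0, VR⟩)) :
    brun xL xR G0 26 = (exec o e VL VR).map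
      (fun e' => (⟨.skip, .code j (idx o - cf 13), VL⟩, e', ⟨.skip, .code j 0, VR⟩)) := by
  have := brun_scan xL xR j e o VL VR G0 hL hR h12 12 le_rfl
  rw [show 26 = (13 + 12) + 1 from rfl, brun, this,
      hL _ (by omega) (by omega), hR _ (by omega) (by omega)]
  have hb : ∀ x, bst (13 + 12) .nil .nil (scan j o VL VR 12 x) = _ :=
      fun x => bst25 j o VL VR x
  have hi : (idx o : ℕ) < 14 := (idx o).2
  rcases lt_trichotomy (idx o : ℕ) 12 with h | h | h
  · rw [if_neg (by omega)]
    cases exec o e VL VR with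
    | none => simp
    | some x => simp [hb, h.ne]
  · rw [if_pos (by omega)]
    simp [hb, h]
  · rw [if_pos (by omega)]
    have : o = .ID := by
      rw [← opn_idx o, show (idx o : ℕ) = 13 by omega]; rfl
    simp only [Option.bind_some, Option.map_some, hb, if_neg h.ne']
    rw [this, exec_ID', Option.map_some]

lemma opf_mv : ∀ a : Fin 3, ∀ τ : Fin 43, a ≠ 1 → (rphase τ ∨ lphase τ) → opf a τ = .ID := by decide

lemma velf_exec (j : Lab) (e e' : Reg) (VL VR : D) (v : D)
    (h : exec (opf j.a j.ph) e VL VR = some e') : velf j e'.d1 v = velf j e.d1 v := by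
  by_cases hm : rphase j.ph ∨ lphase j.ph
  · by_cases ha : j.a = 1
    · simp [velf, ha]
    · rw [opf_mv _ _ ha hm, exec_ID'] at h
      simp at h; rw [h]
  · push Not at hm
    simp only [velf, if_neg hm.1, if_neg hm.2]

/-- The registers after phase 27, where `w`, `w'` are the velocities on the two sides. -/
def mid (j : Lab) (w w' : Vel) (e : Reg) : Reg × Reg × Reg :=
  (⟨.wd w, .code (nxt j w) 0, .skip⟩, e, ⟨.wd w', .code (nxt j w') 0, .skip⟩)

lemma bst26 (j : Lab) (n : Fin 14) (e : Reg) (VL VR : D) :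
    bst 26 .nil .nil (⟨.skip, .code j n, VL⟩, e, ⟨.skip, .code j 0, VR⟩) =
      some (⟨e.d1, .code j n, VL⟩, e, ⟨e.d1, .code j 0, VR⟩) := by
  have o0 : opf 0 26 = .LO := by decide
  have o1 : opf 1 26 = .ID := by decide
  have o2 : opf 2 26 = .LO := by decide
  have l2 : lkR 0 26 = true := by decide
  have l5 : lkL 2 26 = true := by decide
  unfold bst
  rw [o0, o1, o2, l2, l5]
  simp [exec_ID', exec_LO_L, exec_LO_R]

lemma bst27 (j : Lab) (n : Fin 14) (e : Reg) (VL VR : D) :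
    bst 27 .nil .nil (⟨e.d1, .code j n, VL⟩, e, ⟨e.d1, .code j 0, VR⟩) =
      some (mid j (velf j e.d1 VL) (velf j e.d1 VR) e) := by
  have o0 : opf 0 27 = .SETW := by decide
  have o1 : opf 1 27 = .ID := by decide
  have o2 : opf 2 27 = .SETW := by decide
  have l2 : lkR 0 27 = false := by decide
  have l5 : lkL 2 27 = false := by decide
  unfold bst
  rw [o0, o1, o2, l2, l5]
  simp [exec_ID', exec, F, mid]

lemma bst28 (j : Lab) (w w' : Vel) (e : Reg) :
    bst 28 .nil .nil (mid j w w' e) = if w = w' then some (mid j w w' e) else none := by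
  have o0 : opf 0 28 = .ID := by decide
  have o1 : opf 1 28 = .EQ := by decide
  have o2 : opf 2 28 = .ID := by decide
  have l2 : lkR 1 28 = true := by decide
  have l5 : lkL 1 28 = true := by decide
  unfold bst
  rw [o0, o1, o2, l2, l5]
  simp [exec_ID', exec, F, mid]
  split_ifs <;> simp

lemma brun41 (xL xR : ℕ → D) (j : Lab) (e : Reg) (lo ro : Option St)
    (hL : ∀ n, n ≠ 4 → n ≠ 6 → xL n = .nil) (hR : ∀ n, n ≠ 4 → n ≠ 6 → xR n = .nil)
    (hl : Pres lo (xL 6) (xL 4)) (hr : Pres ro (xR 6) (xR 4)) (n : ℕ) (hn : n ≤ 12) :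
    brun xL xR (Er j e) (29 + n) =
      (out lo ⟨j, e⟩ ro).map (fun S => mid j S.j.v S.j.v S.g) := by
  have h12 := brun12 xL xR j e lo ro hL hR hl hr
  induction n with
  | zero =>
    by_cases hok : okL j (lo.map St.j) = true ∧ okR j (ro.map St.j) = true
    · rw [if_pos hok] at h12
      have h26 := brun26 xL xR j e _ _ _ _ hL hR h12
      set VL := rd (lkL j.a j.ph) lo with hVL
      set VR := rd (lkR j.a j.ph) ro with hVR
      rw [show 29 + 0 = 26 + 1 + 1 + 1 from rfl, brun, brun, brun, h26,
        hL _ (by omega) (by omega), hR _ (by omega) (by omega),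
        hL _ (by omega) (by omega), hR _ (by omega) (by omega),
        hL _ (by omega) (by omega), hR _ (by omega) (by omega)]
      unfold out
      simp only [← hVL, ← hVR]
      cases he : exec (opf j.a j.ph) e VL VR with
      | none => simp
      | some e' =>
        rw [Option.map_some, Option.bind_some, bst26, Option.bind_some,
          show 26 + 1 = 27 from rfl, bst27, Option.bind_some, show 27 + 1 = 28 from rfl, bst28]
        simp only [velf_exec _ _ _ _ _ _ he]
        by_cases hv : velf j e.d1 VL = velf j e.d1 VR
        · rw [if_pos hv, if_pos ⟨hok.1, hok.2, hv⟩]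
          simp [nxt, hv]
        · rw [if_neg hv, if_neg (fun h => hv h.2.2)]
          simp
    · rw [if_neg hok] at h12
      have : ∀ m, 12 ≤ m → brun xL xR (Er j e) m = none := by
        intro m hm
        induction m, hm using Nat.le_induction with
        | base => exact h12
        | succ m hm ih => rw [brun, ih]; rfl
      rw [this _ (by omega)]
      unfold out
      rw [if_neg (fun h => hok ⟨h.1, h.2.1⟩)]
      rfl
  | succ n ih =>
    rw [show 29 + (n + 1) = (29 + n) + 1 from rfl, brun, ih (by omega)]
    cases out lo ⟨j, e⟩ ro with
    | none => rfl
    | some S => simp only [Option.map_some, Option.bind_some]; rw [bst_idle _ _ _ _ (by omega)]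

lemma out_j {l s r s'} (h : out l s r = some s') : s'.j = nxt s.j s'.j.v := by
  unfold out at h
  split_ifs at h
  simp at h
  obtain ⟨g, -, rfl⟩ := h
  simp [nxt]

lemma brun42 (xL xR : ℕ → D) (j : Lab) (e : Reg) (lo ro : Option St)
    (hL : ∀ n, n ≠ 4 → n ≠ 6 → xL n = .nil) (hR : ∀ n, n ≠ 4 → n ≠ 6 → xR n = .nil)
    (hl : Pres lo (xL 6) (xL 4)) (hr : Pres ro (xR 6) (xR 4)) :
    brun xL xR (Er j e) 42 = (out lo ⟨j, e⟩ ro).map (fun S => Er S.j S.g) := by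
  rw [show 42 = (29 + 12) + 1 from rfl, brun, brun41 xL xR j e lo ro hL hR hl hr 12 le_rfl,
    hL _ (by omega) (by omega), hR _ (by omega) (by omega)]
  cases h : out lo ⟨j, e⟩ ro with
  | none => rfl
  | some S =>
    have hj := out_j h
    have o0 : opf 0 (29 + 12) = .PJ2 := by decide
    have o1 : opf 1 (29 + 12) = .ID := by decide
    have o2 : opf 2 (29 + 12) = .PJ2 := by decide
    have l2 : lkR 0 (29 + 12) = false := by decide
    have l5 : lkL 2 (29 + 12) = false := by decide
    simp only [Option.map_some, Option.bind_some]
    unfold bst mid Er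
    rw [o0, o1, o2, l2, l5]
    simp only at hj
    rw [← hj]
    simp [exec, F]

lemma brun43 (xL xR : ℕ → D) (j : Lab) (e : Reg) (lo ro : Option St)
    (hL : ∀ n, n ≠ 4 → n ≠ 6 → xL n = .nil) (hR : ∀ n, n ≠ 4 → n ≠ 6 → xR n = .nil)
    (hl : Pres lo (xL 6) (xL 4)) (hr : Pres ro (xR 6) (xR 4)) :
    brun xL xR (Er j e) 43 = (out lo ⟨j, e⟩ ro).map (fun S => Er S.j S.g) := by
  rw [brun, brun42 xL xR j e lo ro hL hR hl hr]
  cases h : out lo ⟨j, e⟩ ro with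
  | none => rfl
  | some S =>
    have o0 : opf 0 42 = .ID := by decide
    have o1 : opf 1 42 = .EQ := by decide
    have o2 : opf 2 42 = .ID := by decide
    have l2 : lkR 1 42 = true := by decide
    have l5 : lkL 1 42 = true := by decide
    simp only [Option.map_some, Option.bind_some]
    unfold bst Er
    rw [o0, o1, o2, l2, l5]
    simp [exec, F]

end UECA

namespace UECA

lemma sl43 : ∀ a : Fin 3, sl a 43 = sl a 0 := by decide

lemma sl_0 : ∀ a : Fin 3, sl a 0 = (a : ℕ) + 1 := by decide

lemma sh43 (w : Vel) : sh w 43 = 5 * w.z := by cases w <;> simp [sh, Vel.z]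

lemma sh0 (w : Vel) : sh w 0 = 0 := sh_le31 w 0 (by omega)

lemma Eb.cell {ω t x j e} (h : Eb ω t x j e) (a : Fin 3) :
    ∃ s, ω t (x + sl a 0) = some s ∧ s.j = ⟨a, 0, .S⟩ := by
  rw [sl_0]
  fin_cases a
  · exact ⟨_, by simpa using h.1, rfl⟩
  · exact ⟨_, by have := h.2.1; norm_num; exact this, rfl⟩
  · exact ⟨_, by have := h.2.2; norm_num; exact this, rfl⟩

lemma exists_PL0 {ω} (hR : Rel ω) {t p : ℤ} {s : St} (hs : ω t p = some s) {τ : ℕ}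
    (hp : (s.j.ph : ℕ) = τ) :
    ∃ f, PL ω f t (t - τ) s.j.a ∧ f t = p ∧ sf ω f t = s := by
  obtain ⟨f, t0, hf, h1, h2⟩ := exists_PL hR hs
  refine ⟨f, hf.shift ?_, h1, h2⟩
  have := hf.lph t le_rfl
  rw [h2, hp] at this
  omega

lemma TL {ω} (hR : Rel ω) {t0 x' : ℤ} {j' : Lab} {e' : Reg} (h : Eb ω (t0 + 43) x' j' e') :
    ∃ j e w, Eb ω t0 (x' - 5 * w.z) j e ∧ j' = nxt j w ∧ al j w ∧
      ∃ f : Fin 3 → ℤ → ℤ, ∀ a, PL ω (f a) (t0 + 43) t0 a ∧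
        ∀ τ : ℕ, τ ≤ 43 → f a (t0 + τ) = x' - 5 * w.z + sl a τ + sh w τ := by
  have H : ∀ a : Fin 3, ∃ f, PL ω f (t0 + 43) t0 a ∧ f (t0 + 43) = x' + sl a 0 := by
    intro a
    obtain ⟨s, hs, hj⟩ := h.cell a
    obtain ⟨f, h1, h2, h3⟩ := exists_PL0 hR hs (τ := 0) (by rw [hj]; rfl)
    rw [hj] at h1
    refine ⟨f, h1.shift (by simp), h2⟩
  choose f hf hf' using H
  have e01 := pair_back hR (hf 0) (hf 1) (Or.inl ⟨rfl, rfl⟩) 43 le_rfl (by simp) (by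
    push_cast; rw [hf', hf', sl43, sl43]; ring)
  have e12 := pair_back hR (hf 1) (hf 2) (Or.inr ⟨rfl, rfl⟩) 43 le_rfl (by simp) (by
    push_cast; rw [hf', hf', sl43, sl43]; ring)
  obtain ⟨j, e, hb⟩ := (hf 0).blk hR (by omega)
  have hg := Eb.sf_eq (hf 0) (by omega) hb (by decide)
  obtain ⟨w, hw, -, hpos, hd2⟩ := (hf 0).ctl (by decide) (j := j) (by rw [hg])
  have hp43 := hpos 43 le_rfl (by simp)
  push_cast at hp43
  rw [hf', sl43, sh43] at hp43
  have hx : f 0 t0 - sl 0 0 = x' - 5 * w.z := by omega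
  rw [hx] at hb
  have hj' : j' = nxt j w := by
    have h1 := hd2 43 (by omega) le_rfl (by simp)
    have h2 := h.1
    have h3 := (hf 0).alive _ le_rfl
    rw [hf', show sl 0 0 = 1 from rfl, h2] at h3
    have h4 := Option.some.inj h3
    push_cast at h1
    rw [← h4] at h1
    simpa using h1
  refine ⟨j, e, w, hb, hj', hw, f, fun a => ⟨hf a, fun τ hτ => ?_⟩⟩
  have q0 := hpos τ hτ (by omega)
  rw [hx] at q0
  have q1 := e01 τ hτ
  have q2 := e12 τ hτ
  fin_cases a
  · exact q0
  · simp only [Fin.mk_one]; omega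
  · simp only [Fin.reduceFinMk]; omega

lemma PL.d2_const {ω f T0 t0 a} (h : PL ω f T0 t0 a) (ha : a ≠ 1) {j : Lab}
    (hj : (sf ω f t0).g = ⟨.code j 0, .code j 0, .skip⟩) (ht : t0 + 6 ≤ T0) :
    (sf ω f (t0 + 6)).g.d1 = .code j 0 := by
  obtain ⟨n, hn⟩ := h.ctl_d2 ha (j := j) (by rw [hj]) 5 (by omega) (by push_cast; omega)
  obtain ⟨l, r, -, -, -, -, -, -, -, hx, -⟩ := h.stepf (t := t0 + 5) (τ := 5) (by omega) (by simp)
    (by omega)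
  have h5 : ∀ a : Fin 3, a ≠ 1 → opf a 5 = .PJ ∧ lkL a 5 = false := by decide
  rw [(h5 a ha).1, (h5 a ha).2, rd_false] at hx
  push_cast at hn
  simp only [exec, reduceCtorEq, if_false, F, hn] at hx
  rw [show t0 + 5 + 1 = t0 + 6 by ring] at hx
  split_ifs at hx
  rw [← Option.some.inj hx]

lemma PL.d1_four {ω f T0 t0 a} (hR : Rel ω) (h : PL ω f T0 t0 a) (ha : a ≠ 1) {j : Lab} {e : Reg}
    (hb : Eb ω t0 (f t0 - sl a 0) j e) (ht : t0 + 4 ≤ T0) :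
    (sf ω f (t0 + 4)).g.d1 = e.d1 := by
  have hj := Eb.sf_eq h (by omega) hb ha
  have g1 : (sf ω f (t0 + 1)).g = ⟨.code j 0, .code j 0, e.d1⟩ := by
    obtain ⟨l, r, ol, or', hja, hjp, okl, okr, -, hx, -⟩ := h.stepf (t := t0) (τ := 0) (by omega)
      (by simp) (by omega)
    have ho : opf a 0 = .LD := by revert ha; clear * -; revert a; decide
    rw [ho, hj] at hx
    have hc : a = 0 ∨ a = 2 := by revert ha; clear * -; revert a; decide
    rcases hc with rfl | rfl
    · obtain ⟨s, rfl, hs, -, -⟩ := req_of_okR okr or' (a' := 1) (by rw [hja, hjp]; rfl)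
      have h2 := hb.2.1
      rw [show f t0 - sl 0 0 + 2 = f t0 + 1 by rw [show sl 0 0 = 1 from rfl]; ring, hs] at h2
      rw [show lkL 0 0 = false from rfl, show lkR 0 0 = true from rfl, rd_false,
        exec_LD_R _ _ _ rfl, Option.some.inj h2] at hx
      exact (Option.some.inj hx).symm
    · obtain ⟨s, rfl, hs, -, -⟩ := req_of_okL okl ol (a' := 1) (by rw [hja, hjp]; rfl)
      have h2 := hb.2.1
      rw [show f t0 - sl 2 0 + 2 = f t0 - 1 by rw [show sl 2 0 = 3 from rfl]; ring, hs] at h2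
      rw [show lkL 2 0 = true from rfl, show lkR 2 0 = false from rfl, rd_false,
        exec_LD_L _ _ _ rfl rfl, Option.some.inj h2] at hx
      exact (Option.some.inj hx).symm
  have g2 : (sf ω f (t0 + 2)).g.d1 = e.d1 := by
    obtain ⟨l, r, -, -, -, -, -, -, -, hx, -⟩ := h.stepf (t := t0 + 1) (τ := 1) (by omega)
      (by simp) (by omega)
    have h5 : ∀ a : Fin 3, a ≠ 1 → opf a 1 = .SW ∧ lkL a 1 = false := by decide
    rw [(h5 a ha).1, (h5 a ha).2, rd_false, g1] at hx
    simp only [exec, reduceCtorEq, if_false, F] at hx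
    rw [show t0 + 1 + 1 = t0 + 2 by ring] at hx
    rw [← Option.some.inj hx]
  have g3 : (sf ω f (t0 + 3)).g.d1 = e.d1 := by
    obtain ⟨l, r, -, -, -, -, -, -, -, hx, -⟩ := h.stepf (t := t0 + 2) (τ := 2) (by omega)
      (by simp) (by omega)
    rw [opf_idle a 2 (by omega) (by omega)] at hx
    rw [← g2, ← exec_ID hx]; ring_nf
  obtain ⟨l, r, -, -, -, -, -, -, -, hx, -⟩ := h.stepf (t := t0 + 3) (τ := 3) (by omega)
      (by simp) (by omega)
  rw [opf_idle a 3 (by omega) (by omega)] at hx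
  rw [← g3, ← exec_ID hx]; ring_nf

/-- Observation of an encoded cell. -/
def EObs (ω : ℤ → ℤ → Option St) (t0 x : ℤ) (lo : Option St) : Prop :=
  (∃ S, lo = some S ∧ Eb ω t0 x S.j S.g) ∨
  (lo = none ∧ ∀ x' j' e', Eb ω (t0 + 43) x' j' e' → x' - 5 * j'.v.z ≠ x)

lemma side_obs {ω} (hR : Rel ω) {t0 x p : ℤ} {a : Fin 3} (ha : a ≠ 1)
    (hp : x + sl a 6 = p) {l4 l6 : Option St} (h4 : Obs ω (t0 + 4) p l4)
    (h6 : Obs ω (t0 + 6) p l6)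
    (h6' : l6 = none ∨ ∃ s, l6 = some s ∧ ω (t0 + 6) p = some s ∧ s.j.a = a ∧ (s.j.ph : ℕ) = 6) :
    ∃ lo, EObs ω t0 x lo ∧ Pres lo (rd true l6) (rd true l4) := by
  have s46 : sl a 4 = sl a 6 := by clear * -; revert a; decide
  rcases h6' with rfl | ⟨s, rfl, hs, hsa, hsp⟩
  · refine ⟨none, Or.inr ⟨rfl, fun x' j' e' hE hx => ?_⟩, rfl⟩
    obtain ⟨j, e, w, hb, hj, hal, f, hf⟩ := TL hR hE
    have hw : j'.v = w := by rw [hj]; rfl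
    rw [hw] at hx
    have hpos := (hf a).2 6 (by omega)
    rw [hx, sh_le31 _ _ (by omega)] at hpos
    push_cast at hpos
    have hsv := (hf a).1.surv (t := t0 + 6) (by omega)
    have h7 := (hf a).1.alive (t0 + 6) (by omega)
    rw [hpos, add_zero, hp] at hsv h7
    rw [← h6.eq_of_surv hsv] at h7
    simp at h7
  · obtain ⟨g, hg, hg1, hg2⟩ := exists_PL0 hR hs hsp
    rw [hsa, show t0 + 6 - ((6 : ℕ) : ℤ) = t0 by push_cast; ring] at hg
    obtain ⟨j, e, hb⟩ := hg.blk hR (by omega)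
    have hst := hg.stat 6 (by omega) (by push_cast; omega)
    push_cast at hst
    have hst4 := hg.stat 4 (by omega) (by push_cast; omega)
    push_cast at hst4
    have hb' := hb
    rw [← hst, hg1, ← hp, add_sub_cancel_right] at hb'
    refine ⟨some ⟨j, e⟩, Or.inl ⟨_, rfl, hb'⟩, ?_, ?_⟩
    · have := hg.d2_const ha (Eb.sf_eq hg (by omega) hb ha) le_rfl
      rw [hg2] at this
      exact this
    · have := hg.d1_four hR ha hb (by omega)
      have hsv := hg.surv (t := t0 + 4) (by omega)
      have h7 := hg.alive (t0 + 4) (by omega)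
      have : g (t0 + 4) = p := by omega
      rw [this] at hsv h7
      rw [h4.eq_of_surv hsv, h7]
      simpa [rd]

lemma sl_adj : ∀ τ : ℕ, τ < 43 →
    (lkR 0 τ = true → exR 0 τ = .req 1 ∧ sl 1 τ = sl 0 τ + 1) ∧
    (lkL 2 τ = true → exL 2 τ = .req 1 ∧ sl 2 τ = sl 1 τ + 1) ∧
    (lkL 1 τ = true → exL 1 τ = .req 0 ∧ sl 1 τ = sl 0 τ + 1) ∧
    (lkR 1 τ = true → exR 1 τ = .req 2 ∧ sl 2 τ = sl 1 τ + 1) ∧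
    (τ ≠ 4 → τ ≠ 6 → lkL 0 τ = false ∧ lkR 2 τ = false) := by decide

lemma lemB {ω} (hR : Rel ω) {t0 x' : ℤ} {j' : Lab} {e' : Reg} (h : Eb ω (t0 + 43) x' j' e') :
    ∃ j e lo ro, Eb ω t0 (x' - 5 * j'.v.z) j e ∧ EObs ω t0 (x' - 5 * j'.v.z - 5) lo ∧
      EObs ω t0 (x' - 5 * j'.v.z + 5) ro ∧ out lo ⟨j, e⟩ ro = some ⟨j', e'⟩ := by
  obtain ⟨j, e, w, hb, hj, hal, f, hf⟩ := TL hR h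
  have hw : j'.v = w := by rw [hj]; rfl
  rw [hw]
  set x := x' - 5 * w.z with hx
  have hst : ∀ a : Fin 3, ∀ τ : ℕ, ∃ l r, τ < 43 → Obs ω (t0 + τ) (f a (t0 + τ) - 1) l ∧
      Obs ω (t0 + τ) (f a (t0 + τ) + 1) r ∧
      (sf ω (f a) (t0 + τ)).j.a = a ∧ ((sf ω (f a) (t0 + τ)).j.ph : ℕ) = τ ∧
      okL (sf ω (f a) (t0 + τ)).j (l.map St.j) = true ∧
      okR (sf ω (f a) (t0 + τ)).j (r.map St.j) = true ∧
      exec (opf a τ) (sf ω (f a) (t0 + τ)).g (rd (lkL a τ) l) (rd (lkR a τ) r) =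
        some (sf ω (f a) (t0 + (τ + 1 : ℕ))).g := by
    intro a τ
    by_cases hτ : τ < 43
    · obtain ⟨l, r, q1, q2, q3, q4, q5, q6, -, q7, -⟩ := (hf a).1.stepf (t := t0 + τ) (τ := τ)
        (by omega) rfl hτ
      exact ⟨l, r, fun _ => ⟨q1, q2, q3, q4, q5, q6, by rw [q7]; push_cast; ring_nf⟩⟩
    · exact ⟨none, none, fun h => absurd h hτ⟩
  choose l r H using hst
  have hpos : ∀ a, ∀ τ : ℕ, τ ≤ 43 → f a (t0 + τ) = x + sl a τ + sh w τ := fun a => (hf a).2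
  set G : ℕ → Reg × Reg × Reg := fun τ => ((sf ω (f 0) (t0 + τ)).g, (sf ω (f 1) (t0 + τ)).g,
    (sf ω (f 2) (t0 + τ)).g) with hG
  have linkR : ∀ a b : Fin 3, ∀ τ : ℕ, τ < 43 →
      (lkR a τ = true → exR a τ = .req b ∧ sl b τ = sl a τ + 1) →
      rd (lkR a τ) (r a τ) = if lkR a τ then (sf ω (f b) (t0 + τ)).g.d1 else .nil := by
    intro a b τ hτ hq
    cases hl : lkR a τ with
    | false => rfl
    | true =>
      obtain ⟨he, hs⟩ := hq hl
      obtain ⟨q1, q2, q3, q4, q5, q6, -⟩ := H a τ hτ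
      obtain ⟨s, hs1, hs2, -, -⟩ := req_of_okR q6 q2 (by rw [q3, q4]; exact he)
      have h7 := (hf b).1.alive (t0 + τ) (by omega)
      rw [hpos b τ (by omega), hs] at h7
      rw [hpos a τ (by omega)] at hs2
      rw [show x + (sl a τ + 1) + sh w τ = x + sl a τ + sh w τ + 1 by ring, hs2] at h7
      rw [hs1, h7]; rfl
  have linkL : ∀ a b : Fin 3, ∀ τ : ℕ, τ < 43 →
      (lkL a τ = true → exL a τ = .req b ∧ sl a τ = sl b τ + 1) →
      rd (lkL a τ) (l a τ) = if lkL a τ then (sf ω (f b) (t0 + τ)).g.d1 else .nil := by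
    intro a b τ hτ hq
    cases hl : lkL a τ with
    | false => rfl
    | true =>
      obtain ⟨he, hs⟩ := hq hl
      obtain ⟨q1, q2, q3, q4, q5, q6, -⟩ := H a τ hτ
      obtain ⟨s, hs1, hs2, -, -⟩ := req_of_okL q5 q1 (by rw [q3, q4]; exact he)
      have h7 := (hf b).1.alive (t0 + τ) (by omega)
      rw [hpos b τ (by omega)] at h7
      rw [hpos a τ (by omega), hs] at hs2
      rw [show x + (sl b τ + 1) + sh w τ - 1 = x + sl b τ + sh w τ by ring, h7] at hs2
      rw [hs1, ← hs2]; rfl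
  set xL : ℕ → D := fun τ => if τ < 43 then rd (lkL 0 τ) (l 0 τ) else .nil with hxL
  set xR : ℕ → D := fun τ => if τ < 43 then rd (lkR 2 τ) (r 2 τ) else .nil with hxR
  have hrun : ∀ τ : ℕ, τ ≤ 43 → brun xL xR (Er j e) τ = some (G τ) := by
    intro τ
    induction τ with
    | zero =>
      intro _
      have h0 := (hf 0).1.alive t0 (by omega)
      have h1 := (hf 1).1.alive t0 (by omega)
      have h2 := (hf 2).1.alive t0 (by omega)
      have p0 := hpos 0 0 (by omega)
      have p1 := hpos 1 0 (by omega)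
      have p2 := hpos 2 0 (by omega)
      rw [sh0] at p0 p1 p2
      simp only [Nat.cast_zero, add_zero] at p0 p1 p2
      rw [p0, show sl 0 0 = 1 from rfl, hb.1] at h0
      rw [p1, show sl 1 0 = 2 from rfl, hb.2.1] at h1
      rw [p2, show sl 2 0 = 3 from rfl, hb.2.2] at h2
      simp only [hG, Nat.cast_zero, add_zero, ← Option.some.inj h0, ← Option.some.inj h1,
        ← Option.some.inj h2]
      rfl
    | succ τ ih =>
      intro hτ
      rw [brun, ih (by omega), Option.bind_some]
      obtain ⟨a1, a2, a3, a4, a5⟩ := sl_adj τ (by omega)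
      have E0 := (H 0 τ (by omega)).2.2.2.2.2.2
      have E1 := (H 1 τ (by omega)).2.2.2.2.2.2
      have E2 := (H 2 τ (by omega)).2.2.2.2.2.2
      rw [linkR 0 1 τ (by omega) a1] at E0
      rw [linkL 1 0 τ (by omega) a3, linkR 1 2 τ (by omega) a4] at E1
      rw [linkL 2 1 τ (by omega) a2] at E2
      have hτ' : τ < 43 := by omega
      simp only [bst, hG, hxL, hxR, if_pos hτ', E0, E1, E2, Option.bind_some, Option.map_some]
  have side : ∀ (a : Fin 3) (τ : ℕ), τ ≤ 31 → f a (t0 + τ) = x + sl a τ := by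
    intro a τ hτ; rw [hpos a τ (by omega), sh_le31 _ _ hτ, add_zero]
  obtain ⟨lo, hlo, hlo'⟩ := side_obs hR (t0 := t0) (x := x - 5) (p := x - 1) (a := 2) (by decide)
    (by rw [show sl 2 6 = 4 from rfl]; ring) (l4 := l 0 4) (l6 := l 0 6)
    (by
      have := (H 0 4 (by omega)).1
      rw [side _ _ (by omega), show sl 0 4 = 0 from rfl, add_zero] at this
      exact_mod_cast this)
    (by
      have := (H 0 6 (by omega)).1
      rw [side _ _ (by omega), show sl 0 6 = 0 from rfl, add_zero] at this
      exact_mod_cast this)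
    (by
      obtain ⟨q1, q2, q3, q4, q5, q6, -⟩ := H 0 6 (by omega)
      have := opt_of_okL q5 q1 (a' := 2) (by rw [q3, q4]; rfl)
      rw [side _ _ (by omega), show sl 0 6 = 0 from rfl, add_zero] at this
      rcases this with h | ⟨s, h1, h2, h3, h4⟩
      · exact Or.inl h
      · exact Or.inr ⟨s, h1, by exact_mod_cast h2, h3, by rw [h4, q4]⟩)
  obtain ⟨ro, hro, hro'⟩ := side_obs hR (t0 := t0) (x := x + 5) (p := x + 4 + 1) (a := 0)
    (by decide)
    (by rw [show sl 0 6 = 0 from rfl]; ring) (l4 := r 2 4) (l6 := r 2 6)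
    (by
      have := (H 2 4 (by omega)).2.1
      rw [side _ _ (by omega), show sl 2 4 = 4 from rfl] at this
      exact_mod_cast this)
    (by
      have := (H 2 6 (by omega)).2.1
      rw [side _ _ (by omega), show sl 2 6 = 4 from rfl] at this
      exact_mod_cast this)
    (by
      obtain ⟨q1, q2, q3, q4, q5, q6, -⟩ := H 2 6 (by omega)
      have := opt_of_okR q6 q2 (a' := 0) (by rw [q3, q4]; rfl)
      rw [side _ _ (by omega), show sl 2 6 = 4 from rfl] at this
      rcases this with h | ⟨s, h1, h2, h3, h4⟩
      · exact Or.inl h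
      · exact Or.inr ⟨s, h1, by exact_mod_cast h2, h3, by rw [h4, q4]⟩)
  refine ⟨j, e, lo, ro, hb, hlo, hro, ?_⟩
  have h43 := brun43 xL xR j e lo ro (by
      intro n h4 h6
      simp only [hxL]
      split_ifs with hn
      · rw [((sl_adj n hn).2.2.2.2 h4 h6).1]; rfl
      · rfl) (by
      intro n h4 h6
      simp only [hxR]
      split_ifs with hn
      · rw [((sl_adj n hn).2.2.2.2 h4 h6).2]; rfl
      · rfl) hlo' hro'
  rw [hrun 43 le_rfl] at h43
  cases ho : out lo ⟨j, e⟩ ro with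
  | none => simp [ho] at h43
  | some S =>
    rw [ho, Option.map_some] at h43
    have h43 := Option.some.inj h43
    have h0 := (hf 0).1.alive (t0 + 43) (by omega)
    have h1 := (hf 1).1.alive (t0 + 43) (by omega)
    have p0 := hpos 0 43 (by omega)
    have p1 := hpos 1 43 (by omega)
    rw [sh43] at p0 p1
    push_cast at p0 p1
    rw [p0, show x + sl 0 43 + 5 * w.z = x' + 1 by rw [show sl 0 43 = 1 from rfl]; omega,
      h.1] at h0
    rw [p1, show x + sl 1 43 + 5 * w.z = x' + 2 by rw [show sl 1 43 = 2 from rfl]; omega,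
      h.2.1] at h1
    simp only [hG, Er, Nat.cast_ofNat, ← Option.some.inj h0, ← Option.some.inj h1,
      Prod.mk.injEq] at h43
    have c0 := h43.1
    have c1 := h43.2.1
    simp only [Reg.mk.injEq, D.code.injEq] at c0
    exact congrArg some (St.ext_iff.2 ⟨c0.1.1.symm, c1.symm⟩)

/-- Decoding. -/
noncomputable def dec (ω : ℤ → ℤ → Option St) (b s T P : ℤ) : Option St :=
  open Classical in
  if h : ∃ S : St, Eb ω (s + 43 * T) (b + 5 * P) S.j S.g then some h.choose else none

lemma Eb.uniq {ω t x j e j' e'} (h : Eb ω t x j e) (h' : Eb ω t x j' e') : j = j' ∧ e = e' := by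
  have h0 := h.1.symm.trans h'.1
  have h1 := h.2.1.symm.trans h'.2.1
  simp at h0 h1
  exact ⟨h0, h1⟩

lemma dec_iff {ω b s T P S} : dec ω b s T P = some S ↔
    Eb ω (s + 43 * T) (b + 5 * P) S.j S.g := by
  unfold dec
  constructor
  · intro h
    split_ifs at h with h1
    rw [← Option.some.inj h]
    exact h1.choose_spec
  · intro h
    have h1 : ∃ S : St, Eb ω (s + 43 * T) (b + 5 * P) S.j S.g := ⟨S, h⟩
    rw [dif_pos h1]
    have := h1.choose_spec.uniq h
    rw [St.ext_iff.2 this]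

lemma EObs.obs {ω b s T P x t0 lo} (h : EObs ω t0 x lo) (hx : x = b + 5 * P)
    (ht : t0 = s + 43 * T) : Obs (dec ω b s) T P lo := by
  subst hx; subst ht
  rcases h with ⟨S, rfl, hS⟩ | ⟨rfl, hS⟩
  · exact Or.inl (dec_iff.2 hS).symm
  · refine Or.inr ⟨rfl, ?_⟩
    rintro ⟨S, h⟩
    rw [dec_iff] at h
    refine hS _ _ _ (by rw [show s + 43 * T + 43 = s + 43 * (T + 1) by ring]; exact h) ?_
    ring

theorem rel_dec {ω} (hR : Rel ω) (b s : ℤ) : Rel (dec ω b s) := by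
  intro T P S' h
  rw [dec_iff, show s + 43 * (T + 1) = s + 43 * T + 43 by ring] at h
  obtain ⟨j, e, lo, ro, h1, h2, h3, h4⟩ := lemB hR h
  refine ⟨⟨j, e⟩, lo, ro, ?_, ?_, ?_, h4⟩
  · rw [dec_iff]
    convert h1 using 1
    ring
  · exact h2.obs (by ring) rfl
  · exact h3.obs (by ring) rfl

end UECA

namespace UECA

/-- `f` follows the cell `a` of the block at `γ`. -/
structure Sub (ω : ℤ → ℤ → Option St) (b s : ℤ) (γ : ℤ → ℤ) (a : Fin 3) (f : ℤ → ℤ) (T1 : ℤ) :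
    Prop where
  hb : 0 ≤ b ∧ b < 5
  hs : 0 ≤ s ∧ s < 43
  pf : PL ω f (s + 43 * T1) s a
  pγ : ∃ t0 a', PL (dec ω b s) γ T1 t0 a'
  pos : ∀ T, T + 1 ≤ T1 → ∃ w : Vel, γ (T + 1) = γ T + w.z ∧
    ∀ τ : ℕ, τ ≤ 43 → f (s + 43 * T + τ) = b + 5 * γ T + sl a τ + sh w τ
  pos0 : ∀ T, T ≤ T1 → f (s + 43 * T) = b + 5 * γ T + sl a 0

lemma sub_of {ω} (hR : Rel ω) {b s γ a f T1 t0 a'} (hb : 0 ≤ b ∧ b < 5) (hs : 0 ≤ s ∧ s < 43)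
    (pγ : PL (dec ω b s) γ T1 t0 a') (pf : PL ω f (s + 43 * T1) s a)
    (h0 : f (s + 43 * T1) = b + 5 * γ T1 + sl a 0) : Sub ω b s γ a f T1 := by
  have key : ∀ T, T + 1 ≤ T1 → f (s + 43 * (T + 1)) = b + 5 * γ (T + 1) + sl a 0 →
      ∃ w : Vel, γ (T + 1) = γ T + w.z ∧
      ∀ τ : ℕ, τ ≤ 43 → f (s + 43 * T + τ) = b + 5 * γ T + sl a τ + sh w τ := by
    intro T hT e
    have h1 := dec_iff.1 (pγ.alive (T + 1) hT)
    rw [show s + 43 * (T + 1) = s + 43 * T + 43 by ring] at h1 e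
    obtain ⟨j, e', w, -, hj, -, g, hg⟩ := TL hR h1
    have hw : (sf (dec ω b s) γ (T + 1)).j.v = w := by rw [hj]; rfl
    have hp := pγ.pos T hT
    rw [hw] at hp
    refine ⟨w, hp, fun τ hτ => ?_⟩
    obtain ⟨q1, q2⟩ := hg a
    have q3 := q2 43 le_rfl
    push_cast at q3
    rw [sl43, sh43] at q3
    have := pf.congr_back q1 (t := s + 43 * T + 43) (by omega) le_rfl (by rw [q3, e]; ring)
      (s + 43 * T + τ) (by omega)
    rw [this, q2 τ hτ, hp]
    ring
  have key2 : ∀ n : ℕ, f (s + 43 * (T1 - n)) = b + 5 * γ (T1 - n) + sl a 0 := by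
    intro n
    induction n with
    | zero => simpa using h0
    | succ n ih =>
      obtain ⟨w, -, h2⟩ := key (T1 - (n + 1 : ℕ)) (by push_cast; omega) (by
        rw [show T1 - (n + 1 : ℕ) + 1 = T1 - n by push_cast; ring]; exact ih)
      have := h2 0 (by omega)
      rw [sh0] at this
      simpa using this
  have key3 : ∀ T, T ≤ T1 → f (s + 43 * T) = b + 5 * γ T + sl a 0 := by
    intro T hT
    have := key2 (T1 - T).toNat
    rwa [show T1 - ((T1 - T).toNat : ℤ) = T by omega] at this
  exact ⟨hb, hs, pf, ⟨t0, a', pγ⟩, fun T hT => key T hT (key3 _ hT), key3⟩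

lemma sub_exists {ω} (hR : Rel ω) {b s γ T1 t0 a'} (hb : 0 ≤ b ∧ b < 5) (hs : 0 ≤ s ∧ s < 43)
    (pγ : PL (dec ω b s) γ T1 t0 a') (a : Fin 3) : ∃ f, Sub ω b s γ a f T1 := by
  obtain ⟨S, hS, hj⟩ := (dec_iff.1 (pγ.alive T1 le_rfl)).cell a
  obtain ⟨f, h1, h2, h3⟩ := exists_PL0 hR hS (τ := 0) (by rw [hj]; rfl)
  rw [hj] at h1
  exact ⟨f, sub_of hR hb hs pγ (h1.shift (by simp)) h2⟩

/-- The position `p` is reached by `f` at time `T` or (possibly) at time `T + 1`. -/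
def Near (ω : ℤ → ℤ → Option St) (f : ℤ → ℤ) (T p : ℤ) : Prop :=
  ∃ d, p = f T + d ∧ (d = 0 ∨ ∃ w, al (sf ω f T).j w ∧ d = w.z)

/-- Vacant places in the space-time picture of a block. -/
def Vac (x y : ℤ) : Prop :=
  (y = 0 ∧ (x = 0 ∨ x = 4)) ∨ (y = 4 ∧ (x = 1 ∨ x = 3)) ∨ (y = 8 ∧ x = 2)

instance (x y : ℤ) : Decidable (Vac x y) := by unfold Vac; infer_instance

instance (j : Lab) (w : Vel) : Decidable (al j w) := by unfold al; infer_instance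

lemma vac_check0 (w : Vel) : ∀ a : Fin 3, ∀ τ : ℕ, τ < 45 → 2 ≤ τ →
    ((sl a τ + sh w τ) / 5 = 0 ∨ (sl a τ + sh w τ) / 5 = w.z) ∧
      ¬ Vac ((sl a τ + sh w τ) % 5) ((τ : ℤ) % 43) := by
  cases w <;> decide

lemma vac_check1 (w w' : Vel) : ∀ a : Fin 3, ∀ τ : ℕ, τ < 45 → 2 ≤ τ →
    al ⟨a, Fin.ofNat 43 τ, .S⟩ w' →
    ((sl a τ + sh w τ + w'.z) / 5 = 0 ∨ (sl a τ + sh w τ + w'.z) / 5 = w.z) ∧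
      ¬ Vac ((sl a τ + sh w τ + w'.z) % 5) ((τ : ℤ) % 43) := by
  cases w <;> cases w' <;> decide

lemma parent {ω} (hR : Rel ω) {f T0 t0 a} (hf : PL ω f T0 t0 a) {p : ℤ} (hp : Near ω f T0 p) :
    ∃ b γ, Sub ω b (t0 % 43) γ a f ((T0 - 2 - t0 % 43) / 43) ∧
      Near (dec ω b (t0 % 43)) γ ((T0 - 2 - t0 % 43) / 43) ((p - b) / 5) ∧
      ¬ Vac ((p - b) % 5) ((T0 - t0 % 43) % 43) ∧
      ∃ w, ∀ τ : ℕ, τ ≤ 44 → t0 % 43 + 43 * ((T0 - 2 - t0 % 43) / 43) + τ ≤ T0 →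
        f (t0 % 43 + 43 * ((T0 - 2 - t0 % 43) / 43) + τ) =
          b + 5 * γ ((T0 - 2 - t0 % 43) / 43) + sl a τ + sh w τ := by
  set s := t0 % 43 with hs
  set T1 := (T0 - 2 - s) / 43 with hT1
  have hf1 : PL ω f T0 (s + 43 * T1) a := hf.shift (by omega)
  obtain ⟨j, e, hE, w, hw, hpos⟩ := hf1.xt hR (by omega)
  set x := f (s + 43 * T1) - sl a 0 with hx
  have hE' : dec ω (x % 5) s T1 (x / 5) = some ⟨j, e⟩ := by
    rw [dec_iff, Int.emod_add_mul_ediv]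
    exact hE
  obtain ⟨γ, t1, hγ, hγ1, hγ2⟩ := exists_PL (rel_dec hR _ _) hE'
  have hx5 : x % 5 + 5 * γ T1 = x := by rw [hγ1]; omega
  refine ⟨x % 5, γ, sub_of hR (by omega) (by omega) hγ
    ((hf.mono (by omega)).shift (by omega)) (by omega), ?_⟩
  have key : ∃ d, p - x % 5 = 5 * γ T1 + d ∧ (d / 5 = 0 ∨ d / 5 = w.z) ∧
      ¬ Vac (d % 5) ((T0 - s) % 43) := by
    obtain ⟨τ, hτ⟩ : ∃ τ : ℕ, (τ : ℤ) = T0 - (s + 43 * T1) := ⟨(T0 - (s + 43 * T1)).toNat, by omega⟩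
    have e1 := hpos τ (by omega) (by omega)
    rw [show s + 43 * T1 + (τ : ℤ) = T0 by omega] at e1
    have e2 : (T0 - s) % 43 = (τ : ℤ) % 43 := by omega
    rw [e2]
    obtain ⟨d, hd, h | ⟨w', hw', h⟩⟩ := hp
    · refine ⟨sl a τ + sh w τ, by omega, vac_check0 w a τ (by omega) (by omega)⟩
    · refine ⟨sl a τ + sh w τ + w'.z, by omega, vac_check1 w w' a τ (by omega) (by omega) ?_⟩
      have h1 := hf.la T0 le_rfl
      have h2 := hf.lph T0 le_rfl
      have h3 : (sf ω f T0).j.ph = Fin.ofNat 43 τ := by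
        apply Fin.ext
        simp only [Fin.ofNat]
        omega
      unfold al at hw' ⊢
      rw [h1, h3] at hw'
      exact hw'
  obtain ⟨d, hd, hd1, hd2⟩ := key
  refine ⟨⟨d / 5, by omega, ?_⟩, ?_, w, fun τ h1 h2 => ?_⟩
  · rcases hd1 with h | h
    · exact Or.inl h
    · exact Or.inr ⟨w, by rw [hγ2]; exact hw, h⟩
  · rwa [hd, show (5 * γ T1 + d) % 5 = d % 5 by omega]
  · rw [hpos τ h1 h2, hx5]

lemma vz (w : Vel) : -1 ≤ w.z ∧ w.z ≤ 1 := by cases w <;> simp [Vel.z]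

lemma PL.speed1 {ω f T0 t0 a} (h : PL ω f T0 t0 a) {t : ℤ} (ht : t + 1 ≤ T0) :
    f t - 1 ≤ f (t + 1) ∧ f (t + 1) ≤ f t + 1 := by
  have := h.pos t ht
  have := vz (sf ω f (t + 1)).j.v
  omega

lemma PL.speed {ω f T0 t0 a} (h : PL ω f T0 t0 a) {t : ℤ} (n : ℕ) (ht : t + n ≤ T0) :
    f t - n ≤ f (t + n) ∧ f (t + n) ≤ f t + n := by
  induction n with
  | zero => simp
  | succ n ih =>
    have h1 := ih (by push_cast at ht; omega)
    have h2 := h.speed1 (t := t + n) (by push_cast at ht; omega)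
    push_cast
    rw [← add_assoc]
    omega

lemma vel_cross : ∀ a b : Fin 3, ∀ τ : Fin 43, ∀ v v' : Vel, al ⟨a, τ, v⟩ .R →
    al ⟨b, τ, v'⟩ .L → False := by
  intro a b τ v v'
  have : ∀ a b : Fin 3, ∀ τ : Fin 43, al ⟨a, τ, .S⟩ .R → al ⟨b, τ, .S⟩ .L → False := by decide
  exact this a b τ

lemma chk_some {e : Ex} {τ : Fin 43} {l : Lab} (h : chk e τ (some l) = true) : l.ph = τ := by
  cases e <;> simp [chk] at h
  · exact h.2
  · exact h.2

lemma PL.nc1 {ω f g T0 t0 a T0' t0' a'} (hf : PL ω f T0 t0 a) (hg : PL ω g T0' t0' a') {t : ℤ}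
    (ht : t + 1 ≤ T0) (ht' : t + 1 ≤ T0') (h1 : f t < g t) : f (t + 1) ≤ g (t + 1) := by
  by_contra hc
  have s1 := hf.speed1 ht
  have s2 := hg.speed1 ht'
  have p1 := hf.pos t ht
  have p2 := hg.pos t ht'
  have e : g t = f t + 1 := by omega
  obtain ⟨l, r, ol, or', ho⟩ := hf.step t ht
  obtain ⟨l', r', ol', or'', ho'⟩ := hg.step t ht'
  obtain ⟨k1, k2, k3, k4, k5⟩ := out_some ho
  obtain ⟨k1', k2', k3', k4', k5'⟩ := out_some ho'
  have hv : (sf ω f (t + 1)).j.v = .R := by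
    cases h : (sf ω f (t + 1)).j.v <;> simp [h, Vel.z] at p1 <;> first | rfl | omega
  have hv' : (sf ω g (t + 1)).j.v = .L := by
    cases h : (sf ω g (t + 1)).j.v <;> simp [h, Vel.z] at p2 <;> first | rfl | omega
  have hr : r = some (sf ω g t) := by
    rw [← e] at or'
    rw [or'.eq_of_surv (hg.surv ht'), hg.alive t (by omega)]
  rw [hr] at k2
  have hph : (sf ω g t).j.ph = (sf ω f t).j.ph := chk_some k2
  have b1 : al (sf ω f t).j .R := by
    have := velf_al (sf ω f t).j (sf ω f t).g.d1 (rd (lkL (sf ω f t).j.a (sf ω f t).j.ph) l)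
    have h2 : (sf ω f (t + 1)).j.v = _ := congrArg Lab.v k5
    rw [hv] at h2
    simp only [nxt] at h2
    rwa [← h2] at this
  have b2 : al (sf ω g t).j .L := by
    have := velf_al (sf ω g t).j (sf ω g t).g.d1 (rd (lkL (sf ω g t).j.a (sf ω g t).j.ph) l')
    have h2 : (sf ω g (t + 1)).j.v = _ := congrArg Lab.v k5'
    rw [hv'] at h2
    simp only [nxt] at h2
    rwa [← h2] at this
  refine vel_cross (sf ω f t).j.a (sf ω g t).j.a (sf ω f t).j.ph (sf ω f t).j.v (sf ω g t).j.v b1 ?_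
  rw [← hph]; exact b2

/-- Order is preserved. -/
lemma PL.nc {ω f g T0 t0 a T0' t0' a'} (hf : PL ω f T0 t0 a) (hg : PL ω g T0' t0' a') {u t : ℤ}
    (hut : u ≤ t) (ht : t ≤ T0) (ht' : t ≤ T0') (hu : f u < g u) : f t ≤ g t := by
  obtain ⟨n, rfl⟩ : ∃ n : ℕ, t = u + n := ⟨(t - u).toNat, by omega⟩
  have key : ∀ n : ℕ, u + n ≤ T0 → u + n ≤ T0' → f (u + n) ≤ g (u + n) := by
    intro n
    induction n with
    | zero => intro _ _; simpa using hu.le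
    | succ n ih =>
      intro h1 h2
      push_cast at h1 h2 ⊢
      have := ih (by omega) (by omega)
      rcases this.lt_or_eq with h | h
      · have := hf.nc1 hg (t := u + n) (by omega) (by omega) h
        rwa [add_assoc] at this
      · have := hf.congr_back hg (t := u + n) (by omega) (by omega) h u (by omega)
        omega
  exact key n ht ht'

end UECA

namespace UECA

/-- A path with list of offsets. -/
def HasOff : List (ℤ × ℤ) → (ℤ → ℤ → Option St) → (ℤ → ℤ) → Prop
  | [], ω, f => ∃ T t0 a, PL ω f T t0 a
  | (b, s) :: l, ω, f => ∃ γ a T1, Sub ω b s γ a f T1 ∧ HasOff l (dec ω b s) γ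

lemma HasOff.path {l ω f} (h : HasOff l ω f) : ∃ T t0 a, PL ω f T t0 a := by
  cases l with
  | nil => exact h
  | cons x l =>
    obtain ⟨γ, a, T1, h1, -⟩ := h
    exact ⟨_, _, _, h1.pf⟩

lemma HasOff.uniq {l l' : List (ℤ × ℤ)} (hlen : l.length = l'.length) {ω f f'}
    (h : HasOff l ω f) (h' : HasOff l' ω f') {T : ℤ} (e : ∀ t ≤ T, f t = f' t) : l = l' := by
  induction l generalizing l' ω f f' T with
  | nil => cases l' with
    | nil => rfl
    | cons => simp at hlen
  | cons x l ih =>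
    cases l' with
    | nil => simp at hlen
    | cons x' l' =>
      obtain ⟨γ, a, T1, h1, h2⟩ := h
      obtain ⟨γ', a', T1', h1', h2'⟩ := h'
      obtain ⟨b, s⟩ := x
      obtain ⟨b', s'⟩ := x'
      have hs := h1.hs
      have hs' := h1'.hs
      have hb := h1.hb
      have hb' := h1'.hb
      simp only at hs hs' hb hb'
      obtain ⟨ha, hss⟩ := h1.pf.role h1'.pf (t := min T (min (s + 43 * T1) (s' + 43 * T1')))
        (by simp) (by simp) (e _ (by simp))
      have hss' : s = s' := by omega
      subst hss'; subst ha
      have hq : ∀ U ≤ min T1 (min T1' ((T - s) / 43)), b + 5 * γ U = b' + 5 * γ' U := by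
        intro U hU
        have e1 := h1.pos0 U (by omega)
        have e2 := h1'.pos0 U (by omega)
        have e3 := e (s + 43 * U) (by omega)
        simp only at e1 e2
        omega
      have hbb : b = b' := by
        have := hq _ le_rfl
        omega
      subst hbb
      rw [ih (by simpa using hlen) h2 h2' (T := min T1 (min T1' ((T - s) / 43)))]
      intro t ht
      have := hq t ht
      omega

open Filter in
/-- Touching paths with the same offsets. -/
def TouchL (l : List (ℤ × ℤ)) (ω : ℤ → ℤ → Option St) (g g' : ℤ → ℤ) : Prop :=
  HasOff l ω g ∧ HasOff l ω g' ∧ ∀ T, ∃ t ≤ T, g' t = g t + 1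

lemma chain_side {l ω L R} (hL : HasOff l ω L) (hc : Relation.ReflTransGen (TouchL l ω) L R)
    {h : ℤ → ℤ} (hh : ∃ T t0 a, PL ω h T t0 a)
    (hne : ∀ g, HasOff l ω g → ∀ T, ¬ ∀ t ≤ T, g t = h t)
    (h0 : ∃ T, ∀ t ≤ T, L t < h t) : HasOff l ω R ∧ ∃ T, ∀ t ≤ T, R t < h t := by
  induction hc with
  | refl => exact ⟨hL, h0⟩
  | @tail b c _ ht ih =>
    obtain ⟨hb, T, hT⟩ := ih
    obtain ⟨-, hc, ht⟩ := ht
    refine ⟨hc, ?_⟩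
    obtain ⟨T1, t1, a1, p1⟩ := hc.path
    obtain ⟨T2, t2, a2, p2⟩ := hh
    set U := min T (min T1 T2)
    obtain ⟨t, htU, htt⟩ := ht U
    have hbh := hT t (by omega)
    have hch : c t < h t := by
      rcases (show c t < h t ∨ c t = h t by omega) with h | h
      · exact h
      · exact absurd (p1.congr_back p2 (by omega) (by omega) h) (hne c hc t)
    refine ⟨t, fun u hu => ?_⟩
    rcases lt_trichotomy (c u) (h u) with h | h | h
    · exact h
    · exact absurd (p1.congr_back p2 (by omega) (by omega) h) (hne c hc u)
    · have := p2.nc p1 hu (by omega) (by omega) h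
      omega

lemma tri {ω f g T0 t0 a T0' t0' a'} (hf : PL ω f T0 t0 a) (hg : PL ω g T0' t0' a')
    (hne : ∀ T, ¬ ∀ t ≤ T, f t = g t) {t : ℤ} (ht : t ≤ T0) (ht' : t ≤ T0') :
    (∀ u ≤ t, f u < g u) ∨ (∀ u ≤ t, g u < f u) := by
  have hn : ∀ u ≤ t, f u ≠ g u := fun u hu h =>
    hne u (hf.congr_back hg (by omega) (by omega) h)
  rcases lt_trichotomy (f t) (g t) with h | h | h
  · left
    intro u hu
    by_contra hc
    have := hg.nc hf hu ht' ht (lt_of_le_of_ne (not_lt.1 hc) (hn u hu).symm)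
    omega
  · exact absurd h (hn t le_rfl)
  · right
    intro u hu
    by_contra hc
    have := hf.nc hg hu ht ht' (lt_of_le_of_ne (not_lt.1 hc) (hn u hu))
    omega

/-- A chain of paths with valid ends. -/
structure Chain (l : List (ℤ × ℤ)) (ω : ℤ → ℤ → Option St) (L R : ℤ → ℤ) (T : ℤ) : Prop where
  hL : HasOff l ω L
  hR : HasOff l ω R
  ch : Relation.ReflTransGen (TouchL l ω) L R
  pL : ∃ t0 a, PL ω L T t0 a
  pR : ∃ t0 a, PL ω R T t0 a

lemma Chain.out {l ω L R T h T' t0 a} (hc : Chain l ω L R T) (hh : PL ω h T' t0 a)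
    (hne : ∀ g, HasOff l ω g → ∀ T, ¬ ∀ t ≤ T, g t = h t) {t : ℤ} (ht : t ≤ T) (ht' : t ≤ T') :
    h t < L t ∨ R t < h t := by
  obtain ⟨t1, a1, p1⟩ := hc.pL
  obtain ⟨t2, a2, p2⟩ := hc.pR
  rcases tri p1 hh (hne _ hc.hL) ht ht' with h1 | h1
  · right
    obtain ⟨-, U, hU⟩ := chain_side hc.hL hc.ch ⟨_, _, _, hh⟩ hne ⟨t, h1⟩
    rcases tri p2 hh (hne _ hc.hR) ht ht' with h2 | h2
    · exact h2 t le_rfl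
    · have := hU (min t U) (by simp)
      have := h2 (min t U) (by simp)
      omega
  · exact Or.inl (h1 t le_rfl)

lemma Chain.disj {l l' ω L R T L' R' T'} (hc : Chain l ω L R T) (hc' : Chain l' ω L' R' T')
    (hlen : l.length = l'.length) (hne : l ≠ l') {t : ℤ} (ht : t ≤ T) (ht' : t ≤ T')
    (h1 : L t ≤ R t) (h2 : L' t ≤ R' t) : R t < L' t ∨ R' t < L t := by
  have n1 : ∀ h, HasOff l' ω h → ∀ g, HasOff l ω g → ∀ T, ¬ ∀ t ≤ T, g t = h t :=
    fun h hh g hg T e => hne (hg.uniq hlen hh e)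
  have n2 : ∀ h, HasOff l ω h → ∀ g, HasOff l' ω g → ∀ T, ¬ ∀ t ≤ T, g t = h t :=
    fun h hh g hg T e => hne (hg.uniq hlen.symm hh e).symm
  obtain ⟨_, _, p1⟩ := hc'.pL
  obtain ⟨_, _, p2⟩ := hc'.pR
  obtain ⟨_, _, p3⟩ := hc.pL
  have c1 := hc.out p1 (n1 _ hc'.hL) ht ht'
  have c2 := hc.out p2 (n1 _ hc'.hR) ht ht'
  have c3 := hc'.out p3 (n2 _ hc.hL) ht' ht
  omega

lemma Sub.off {l ω b s γ a f T1} (h : Sub ω b s γ a f T1) (h' : HasOff l (dec ω b s) γ) :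
    HasOff ((b, s) :: l) ω f := ⟨γ, a, T1, h, h'⟩

lemma Sub.touch {ω b s γ a f T1 γ' a' f' T1'} (h : Sub ω b s γ a f T1)
    (h' : Sub ω b s γ' a' f' T1') (τ : ℕ) (hτ : τ ≤ 31)
    (hc : ∀ T, ∃ t ≤ T, 5 * γ' t + sl a' τ = 5 * γ t + sl a τ + 1) :
    ∀ T, ∃ t ≤ T, f' t = f t + 1 := by
  intro T
  obtain ⟨U, hU, hUU⟩ := hc (min (T1 - 1) (min (T1' - 1) ((T - s - 43) / 43)))
  obtain ⟨w, -, e1⟩ := h.pos U (by omega)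
  obtain ⟨w', -, e2⟩ := h'.pos U (by omega)
  refine ⟨s + 43 * U + τ, by omega, ?_⟩
  rw [e1 τ (by omega), e2 τ (by omega), sh_le31 _ _ hτ, sh_le31 _ _ hτ]
  omega

lemma chain_inner {l ω b s γ f0 T0 f2 T2} (hR : Rel ω) (hγ : HasOff l (dec ω b s) γ)
    (h0 : Sub ω b s γ 0 f0 T0) (h2 : Sub ω b s γ 2 f2 T2) :
    Relation.ReflTransGen (TouchL ((b, s) :: l) ω) f0 f2 := by
  obtain ⟨T, t0, a, pγ⟩ := hγ.path
  obtain ⟨f1, h1⟩ := sub_exists hR h0.hb h0.hs pγ 1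
  refine Relation.ReflTransGen.trans (Relation.ReflTransGen.single (b := f1) ?_)
    (Relation.ReflTransGen.single ?_)
  · refine ⟨h0.off hγ, h1.off hγ, h0.touch h1 0 (by omega) fun T => ⟨T, le_rfl, ?_⟩⟩
    rw [sl_0, sl_0]; norm_num; ring
  · refine ⟨h1.off hγ, h2.off hγ, h1.touch h2 0 (by omega) fun T => ⟨T, le_rfl, ?_⟩⟩
    rw [sl_0, sl_0]; norm_num; ring

lemma chain_lift {l ω b s γ γ' f0 T0} (hR : Rel ω) (hγ : HasOff l (dec ω b s) γ)
    (hc : Relation.ReflTransGen (TouchL l (dec ω b s)) γ γ')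
    (h0 : Sub ω b s γ 0 f0 T0) : HasOff l (dec ω b s) γ' ∧ ∀ f2 T2, Sub ω b s γ' 2 f2 T2 →
    Relation.ReflTransGen (TouchL ((b, s) :: l) ω) f0 f2 := by
  induction hc with
  | refl => exact ⟨hγ, fun f2 T2 h2 => chain_inner hR hγ h0 h2⟩
  | @tail c d _ ht ih =>
    obtain ⟨i1, i2⟩ := ih
    obtain ⟨-, hd, ht⟩ := ht
    refine ⟨hd, fun f2 T2 h2 => ?_⟩
    obtain ⟨T, t0, a, pc⟩ := i1.path
    obtain ⟨T', t0', a', pd⟩ := hd.path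
    obtain ⟨g, hg⟩ := sub_exists hR h0.hb h0.hs pc 2
    obtain ⟨g', hg'⟩ := sub_exists hR h0.hb h0.hs pd 0
    refine ((i2 _ _ hg).trans (Relation.ReflTransGen.single ?_)).trans
      (chain_inner hR hd hg' h2)
    refine ⟨hg.off i1, hg'.off hd, hg.touch hg' 4 (by omega) fun T => ?_⟩
    obtain ⟨t, h1, h2⟩ := ht T
    refine ⟨t, h1, ?_⟩
    rw [h2, show sl 0 4 = 0 from rfl, show sl 2 4 = 4 from rfl]; ring

/-- Avoiding the vacant places at all levels. -/
def Av : List (ℤ × ℤ) → ℤ → ℤ → Prop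
  | [], _, _ => True
  | (b, s) :: l, p, t => ¬ Vac ((p - b) % 5) ((t - s) % 43) ∧
      Av l ((p - b) / 5) ((t - 2 - s) / 43)

lemma sh_interp (w w' : Vel) : ∀ τ : ℕ, τ ≤ 43 →
    (0 ≤ sh w' τ - sh w τ ∧ sh w' τ - sh w τ ≤ 5 * (w'.z - w.z)) ∨
    (5 * (w'.z - w.z) ≤ sh w' τ - sh w τ ∧ sh w' τ - sh w τ ≤ 0) := by
  cases w <;> cases w' <;> decide

lemma sl_bd : ∀ a : Fin 3, ∀ τ : ℕ, τ ≤ 43 → sl 0 τ ≤ sl a τ ∧ sl a τ ≤ sl 2 τ ∧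
    2 ≤ sl 2 τ - sl 0 τ ∧ sl 2 τ - sl 0 τ ≤ 4 := by decide

lemma interp {ω b s γ a f T1 γ' a' f' T1'} (h : Sub ω b s γ a f T1)
    (h' : Sub ω b s γ' a' f' T1') {A B : ℤ} {U : ℤ}
    (hA : ∀ T ≤ U, A ≤ γ' T - γ T ∧ γ' T - γ T ≤ B) (hU : U ≤ T1) (hU' : U ≤ T1') {t : ℤ}
    (ht : t ≤ s + 43 * U) : ∃ τ : ℕ, τ ≤ 43 ∧
      5 * A + sl a' τ - sl a τ ≤ f' t - f t ∧ f' t - f t ≤ 5 * B + sl a' τ - sl a τ := by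
  rcases ht.lt_or_eq with hlt | rfl
  · set T := (t - s) / 43 with hT
    obtain ⟨τ, hτ⟩ : ∃ τ : ℕ, (τ : ℤ) = t - (s + 43 * T) := ⟨(t - (s + 43 * T)).toNat, by omega⟩
    refine ⟨τ, by omega, ?_⟩
    obtain ⟨w, hw, e1⟩ := h.pos T (by omega)
    obtain ⟨w', hw', e2⟩ := h'.pos T (by omega)
    have e1 := e1 τ (by omega)
    have e2 := e2 τ (by omega)
    rw [show s + 43 * T + (τ : ℤ) = t by omega] at e1 e2
    have i1 := hA T (by omega)
    have i2 := hA (T + 1) (by omega)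
    have := sh_interp w w' τ (by omega)
    omega
  · refine ⟨0, by omega, ?_⟩
    rw [h.pos0 U hU, h'.pos0 U hU']
    have i1 := hA U le_rfl
    omega

theorem hull (n : ℕ) : ∀ ω, Rel ω → ∀ f T0 t0 a, PL ω f T0 t0 a → ∀ p, Near ω f T0 p →
    ∃ l, l.length = n ∧ Av l p T0 ∧ ∃ L R, Chain l ω L R (T0 - 2 * 43 ^ n + 2) ∧
      ∀ t ≤ T0 - 2 * 43 ^ n + 2, L t ≤ f t ∧ f t ≤ R t ∧ 5 ^ n - 1 ≤ 2 * (R t - L t) ∧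
        R t - L t ≤ 5 ^ n - 1 := by
  induction n with
  | zero =>
    intro ω hR f T0 t0 a hf p hp
    refine ⟨[], rfl, trivial, f, f, ⟨⟨_, _, _, hf⟩, ⟨_, _, _, hf⟩, .refl, ⟨t0, a, hf.mono (by simp)⟩,
      ⟨t0, a, hf.mono (by simp)⟩⟩, fun t ht => by simp⟩
  | succ n ih =>
    intro ω hR f T0 t0 a hf p hp
    obtain ⟨b, γ, hsub, hnear, hvac, -⟩ := parent hR hf hp
    set s := t0 % 43 with hs
    set T1 := (T0 - 2 - s) / 43 with hT1
    obtain ⟨t1, a1, pγ⟩ := hsub.pγ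
    obtain ⟨l, hl, hav, L, R, hc, hb⟩ := ih _ (rel_dec hR b s) γ T1 t1 a1 pγ _ hnear
    set U := T1 - 2 * 43 ^ n + 2 with hU
    obtain ⟨tL, aL, pL⟩ := hc.pL
    obtain ⟨tR, aR, pR⟩ := hc.pR
    obtain ⟨f0, h0⟩ := sub_exists hR hsub.hb hsub.hs pL 0
    obtain ⟨f2, h2⟩ := sub_exists hR hsub.hb hsub.hs pR 2
    have hpow : (43 : ℤ) ^ (n + 1) = 43 * 43 ^ n := by ring
    have hpow5 : (5 : ℤ) ^ (n + 1) = 5 * 5 ^ n := by ring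
    have hpos : (1 : ℤ) ≤ 43 ^ n := one_le_pow₀ (by norm_num)
    have hUT : T0 - 2 * 43 ^ (n + 1) + 2 ≤ s + 43 * U := by omega
    refine ⟨(b, s) :: l, by simp [hl], ⟨hvac, hav⟩, f0, f2,
      ⟨h0.off hc.hL, h2.off hc.hR, (chain_lift hR hc.hL hc.ch h0).2 _ _ h2,
        ⟨_, _, h0.pf.mono hUT⟩, ⟨_, _, h2.pf.mono hUT⟩⟩, fun t ht => ?_⟩
    have hUT1 : U ≤ T1 := by omega
    obtain ⟨τ1, hτ1, k1, -⟩ := interp h0 hsub (A := 0) (B := 5 ^ n) (U := U) (fun T hT => by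
      have := hb T hT
      omega) le_rfl hUT1 (t := t) (by omega)
    obtain ⟨τ2, hτ2, k2, -⟩ := interp hsub h2 (A := 0) (B := 5 ^ n) (U := U) (fun T hT => by
      have := hb T hT
      omega) hUT1 le_rfl (t := t) (by omega)
    have hodd : ∃ c : ℤ, (5 : ℤ) ^ n = 2 * c + 1 := (Odd.pow (by decide) : Odd ((5 : ℤ) ^ n))
    obtain ⟨c, hcc⟩ := hodd
    obtain ⟨τ3, hτ3, k3, k4⟩ := interp h0 h2 (A := c) (B := 5 ^ n - 1) (U := U) (fun T hT => by
      have := hb T hT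
      omega) le_rfl le_rfl (t := t) (by omega)
    have b1 := sl_bd a τ1 hτ1
    have b2 := sl_bd a τ2 hτ2
    have b3 := sl_bd 0 τ3 hτ3
    omega

lemma sh_bd (w : Vel) (τ : ℕ) : -5 ≤ sh w τ ∧ sh w τ ≤ 5 := by
  cases w
  · simp only [sh]; split_ifs <;> omega
  · simp [sh]
  · simp only [sh]; split_ifs <;> omega

lemma sl_bd2 (a : Fin 3) (τ : ℕ) : 0 ≤ sl a τ ∧ sl a τ ≤ 4 := by
  unfold sl; split_ifs <;> simp

theorem slow (n : ℕ) : ∀ ω, Rel ω → ∀ f T0 t0 a, PL ω f T0 t0 a → ∀ t ≤ T0,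
    T0 - t ≤ 3 * 43 ^ n + 2 → |f T0 - f t| ≤ 15 * 5 ^ n - 10 := by
  induction n with
  | zero =>
    intro ω hR f T0 t0 a hf t ht h
    obtain ⟨m, hm⟩ : ∃ m : ℕ, (m : ℤ) = T0 - t := ⟨(T0 - t).toNat, by omega⟩
    have := hf.speed (t := t) m (by omega)
    rw [show t + (m : ℤ) = T0 by omega] at this
    rw [abs_le]
    omega
  | succ n ih =>
    intro ω hR f T0 t0 a hf t ht h
    obtain ⟨b, γ, hsub, -, -, w, hw⟩ := parent hR hf (p := f T0) ⟨0, by simp, Or.inl rfl⟩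
    set s := t0 % 43 with hs
    set T1 := (T0 - 2 - s) / 43 with hT1
    have hpow : (43 : ℤ) ^ (n + 1) = 43 * 43 ^ n := by ring
    have hpow5 : (5 : ℤ) ^ (n + 1) = 5 * 5 ^ n := by ring
    have hpos : (1 : ℤ) ≤ 43 ^ n := one_le_pow₀ (by norm_num)
    have hpos5 : (1 : ℤ) ≤ 5 ^ n := one_le_pow₀ (by norm_num)
    set T := (t - s) / 43 with hT
    by_cases hTT : T + 1 ≤ T1
    · obtain ⟨t1, a1, pγ⟩ := hsub.pγ
      have := ih _ (rel_dec hR b s) γ T1 t1 a1 pγ T (by omega) (by omega)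
      obtain ⟨τ, hτ⟩ : ∃ τ : ℕ, (τ : ℤ) = t - (s + 43 * T) :=
        ⟨(t - (s + 43 * T)).toNat, by omega⟩
      obtain ⟨w', hw', e1⟩ := hsub.pos T hTT
      have e1 := e1 τ (by omega)
      rw [show s + 43 * T + (τ : ℤ) = t by omega] at e1
      obtain ⟨σ, hσ⟩ : ∃ σ : ℕ, (σ : ℤ) = T0 - (s + 43 * T1) :=
        ⟨(T0 - (s + 43 * T1)).toNat, by omega⟩
      have e2 := hw σ (by omega) (by omega)
      rw [show s + 43 * T1 + (σ : ℤ) = T0 by omega] at e2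
      have a1 := sh_bd w' τ
      have a2 := sh_bd w σ
      have a3 := sl_bd2 a τ
      have a4 := sl_bd2 a σ
      rw [abs_le] at this ⊢
      omega
    · obtain ⟨m, hm⟩ : ∃ m : ℕ, (m : ℤ) = T0 - t := ⟨(T0 - t).toNat, by omega⟩
      have := hf.speed (t := t) m (by omega)
      rw [show t + (m : ℤ) = T0 by omega] at this
      rw [abs_le]
      omega

end UECA

namespace UECA

open Classical in
/-- Counting along a line. -/
noncomputable def cnt (N : ℕ) (P : ℕ → Prop) : ℕ := ((Finset.range N).filter P).card

open Classical in
lemma cnt_le (N : ℕ) (P : ℕ → Prop) : cnt N P ≤ N := by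
  unfold cnt
  exact (Finset.card_filter_le _ _).trans (by simp)

open Classical in
lemma cnt_split (a b : ℕ) (P : ℕ → Prop) :
    cnt (a * b) P ≤ ∑ ρ ∈ Finset.range a, cnt b (fun n => P (ρ + a * n)) := by
  unfold cnt
  rcases Nat.eq_zero_or_pos a with rfl | ha
  · simp
  have : (Finset.range (a * b)).filter P ⊆ (Finset.range a).biUnion (fun ρ =>
      ((Finset.range b).filter (fun n => P (ρ + a * n))).image (fun n => ρ + a * n)) := by
    intro n hn
    simp only [Finset.mem_filter, Finset.mem_range, Finset.mem_biUnion, Finset.mem_image] at hn ⊢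
    have e := Nat.mod_add_div n a
    refine ⟨n % a, Nat.mod_lt _ ha, n / a, ⟨?_, ?_⟩, e⟩
    · exact Nat.div_lt_of_lt_mul hn.1
    · rw [e]; exact hn.2
  refine (Finset.card_le_card this).trans (Finset.card_biUnion_le.trans ?_)
  exact Finset.sum_le_sum fun ρ _ => Finset.card_image_le

lemma exists_vac (x t k : ℤ) (hk : ¬ (43 : ℤ) ∣ k) :
    ∃ ρ : ℕ, ρ < 215 ∧ ∀ i : ℤ, Vac ((x + i * ρ) % 5) ((t + k * ρ) % 43) := by
  have hy : ∃ y : ℤ, 0 ≤ y ∧ y < 43 ∧ Vac (x % 5) y := by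
    have h1 := Int.emod_nonneg x (by norm_num : (5 : ℤ) ≠ 0)
    have h2 := Int.emod_lt_of_pos x (by norm_num : (0 : ℤ) < 5)
    generalize x % 5 = c at h1 h2
    interval_cases c
    · exact ⟨0, by norm_num, by norm_num, by decide⟩
    · exact ⟨4, by norm_num, by norm_num, by decide⟩
    · exact ⟨8, by norm_num, by norm_num, by decide⟩
    · exact ⟨4, by norm_num, by norm_num, by decide⟩
    · exact ⟨0, by norm_num, by norm_num, by decide⟩
  obtain ⟨y, y0, y1, hv⟩ := hy
  have hp : Prime (43 : ℤ) := by
    have := Nat.prime_iff_prime_int.1 (by norm_num : Nat.Prime 43)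
    exact_mod_cast this
  have hc : IsCoprime (5 * k) (43 : ℤ) := by
    rw [isCoprime_comm]
    refine (hp.coprime_iff_not_dvd).2 ?_
    intro h
    rcases hp.dvd_or_dvd h with h | h
    · norm_num at h
    · exact hk h
  obtain ⟨u, v, huv⟩ := hc
  have m0 := Int.emod_nonneg ((y - t) * u) (by norm_num : (43 : ℤ) ≠ 0)
  have m1 := Int.emod_lt_of_pos ((y - t) * u) (by norm_num : (0 : ℤ) < 43)
  set z := ((y - t) * u) % 43 with hz
  refine ⟨5 * z.toNat, by omega, fun i => ?_⟩
  have e1 : (((5 * z.toNat : ℕ) : ℤ)) = 5 * z := by push_cast; omega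
  rw [e1]
  have e2 : (x + i * (5 * z)) % 5 = x % 5 := by
    rw [show x + i * (5 * z) = x + 5 * (i * z) by ring, Int.add_mul_emod_self_left]
  have e3 : (t + k * (5 * z)) % 43 = y := by
    have d := Int.mul_ediv_add_emod ((y - t) * u) 43
    rw [← hz] at d
    set q := ((y - t) * u) / 43
    have : t + k * (5 * z) = y + 43 * (-(y - t) * v - 5 * k * q) := by
      have h1 : z = (y - t) * u - 43 * q := by linarith
      rw [h1]
      linear_combination (y - t) * huv
    rw [this, Int.add_mul_emod_self_left]
    exact Int.emod_eq_of_lt y0 y1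
  rw [e2, e3]
  exact hv

open Classical in
lemma cnt_mono {N : ℕ} {P Q : ℕ → Prop} (h : ∀ n, P n → Q n) : cnt N P ≤ cnt N Q := by
  unfold cnt
  exact Finset.card_le_card (Finset.monotone_filter_right _ (fun n _ hn => h n hn))

open Classical in
lemma cnt_zero {N : ℕ} {P : ℕ → Prop} (h : ∀ n, ¬ P n) : cnt N P = 0 := by
  unfold cnt
  simp [h]

lemma count1 (r : ℕ) : ∀ l : List (ℤ × ℤ), r ≤ l.length → ∀ i k p t : ℤ, ¬ (43 : ℤ) ∣ k →
    cnt (215 ^ r) (fun n => Av l (p + i * n) (t + k * n)) ≤ 214 ^ r := by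
  induction r with
  | zero => intro l _ i k p t _; exact cnt_le _ _
  | succ r ih =>
    intro l hl i k p t hk
    match l, hl with
    | (b, s) :: l, hl =>
      have hl' : r ≤ l.length := by simpa using hl
      have hk5 : ¬ (43 : ℤ) ∣ 5 * k := by
        intro h; apply hk; omega
      obtain ⟨ρ0, h0, hv⟩ := exists_vac (p - b) (t - s) k hk
      rw [pow_succ, mul_comm]
      refine (cnt_split _ _ _).trans ?_
      rw [← Finset.add_sum_erase _ _ (Finset.mem_range.2 h0)]
      have z : cnt (215 ^ r) (fun n => Av ((b, s) :: l) (p + i * ((ρ0 + 215 * n : ℕ) : ℤ))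
          (t + k * ((ρ0 + 215 * n : ℕ) : ℤ))) = 0 := by
        apply cnt_zero
        intro n hn
        apply hn.1
        have := hv i
        have e1 : (p + i * ((ρ0 + 215 * n : ℕ) : ℤ) - b) % 5 = (p - b + i * ρ0) % 5 := by
          rw [show p + i * ((ρ0 + 215 * n : ℕ) : ℤ) - b = p - b + i * ρ0 + 5 * (43 * i * n) by
            push_cast; ring, Int.add_mul_emod_self_left]
        have e2 : (t + k * ((ρ0 + 215 * n : ℕ) : ℤ) - s) % 43 = (t - s + k * ρ0) % 43 := by
          rw [show t + k * ((ρ0 + 215 * n : ℕ) : ℤ) - s = t - s + k * ρ0 + 43 * (5 * k * n) by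
            push_cast; ring, Int.add_mul_emod_self_left]
        rw [e1, e2]
        exact this
      rw [z, zero_add]
      have : ∀ ρ ∈ (Finset.range 215).erase ρ0,
          cnt (215 ^ r) (fun n => Av ((b, s) :: l) (p + i * ((ρ + 215 * n : ℕ) : ℤ))
          (t + k * ((ρ + 215 * n : ℕ) : ℤ))) ≤ 214 ^ r := by
        intro ρ _
        refine (cnt_mono ?_).trans (ih l hl' (43 * i) (5 * k) ((p + i * ρ - b) / 5)
          ((t + k * ρ - 2 - s) / 43) hk5)
        intro n hn
        have := hn.2
        rw [show p + i * ((ρ + 215 * n : ℕ) : ℤ) - b = p + i * ρ - b + 5 * (43 * i * n) by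
            push_cast; ring, Int.add_mul_ediv_left _ _ (by norm_num),
          show t + k * ((ρ + 215 * n : ℕ) : ℤ) - 2 - s = t + k * ρ - 2 - s + 43 * (5 * k * n) by
            push_cast; ring, Int.add_mul_ediv_left _ _ (by norm_num)] at this
        exact this
      refine (Finset.sum_le_sum this).trans ?_
      rw [Finset.sum_const, Finset.card_erase_of_mem (Finset.mem_range.2 h0), Finset.card_range,
        smul_eq_mul, pow_succ, mul_comm]

lemma count2 (r e : ℕ) : ∀ l : List (ℤ × ℤ), e + r ≤ l.length → ∀ i k p t : ℤ, ¬ (43 : ℤ) ∣ k →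
    cnt (5 ^ e * 215 ^ r) (fun n => Av l (p + i * n) (t + 43 ^ e * k * n)) ≤ 5 ^ e * 214 ^ r := by
  induction e with
  | zero => intro l hl i k p t hk; simpa using count1 r l (by omega) i k p t hk
  | succ e ih =>
    intro l hl i k p t hk
    match l, hl with
    | [], hl => simp at hl
    | (b, s) :: l, hl =>
      have hl' : e + r ≤ l.length := by simp at hl; omega
      have hk5 : ¬ (43 : ℤ) ∣ 5 * k := by
        intro h; apply hk; omega
      rw [pow_succ, mul_comm (5 ^ e) 5, mul_assoc]
      refine (cnt_split _ _ _).trans ?_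
      have : ∀ ρ ∈ Finset.range 5,
          cnt (5 ^ e * 215 ^ r) (fun n => Av ((b, s) :: l) (p + i * ((ρ + 5 * n : ℕ) : ℤ))
          (t + 43 ^ (e + 1) * k * ((ρ + 5 * n : ℕ) : ℤ))) ≤ 5 ^ e * 214 ^ r := by
        intro ρ _
        refine (cnt_mono ?_).trans (ih l hl' i (5 * k) ((p + i * ρ - b) / 5)
          ((t + 43 ^ (e + 1) * k * ρ - 2 - s) / 43) hk5)
        intro n hn
        have := hn.2
        rw [show p + i * ((ρ + 5 * n : ℕ) : ℤ) - b = p + i * ρ - b + 5 * (i * n) by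
            push_cast; ring, Int.add_mul_ediv_left _ _ (by norm_num),
          show t + 43 ^ (e + 1) * k * ((ρ + 5 * n : ℕ) : ℤ) - 2 - s
            = t + 43 ^ (e + 1) * k * ρ - 2 - s + 43 * (43 ^ e * (5 * k) * n) by
            push_cast; ring, Int.add_mul_ediv_left _ _ (by norm_num)] at this
        exact this
      refine (Finset.sum_le_sum this).trans ?_
      simp [mul_assoc]

open Classical in
theorem hits {ω} (hR : Rel ω) (i k p t : ℤ) (e r : ℕ) (hk : ¬ (43 : ℤ) ∣ k) (hk0 : 0 < k) :
    cnt (5 ^ e * 215 ^ r) (fun n => ω (t + 43 ^ e * k * n) (p + i * n) ≠ none) ≤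
      5 ^ e * 214 ^ r * 69 := by
  set N := 5 ^ e * 215 ^ r with hN
  set κ := 43 ^ e * k with hκ
  have hκ0 : 0 < κ := by positivity
  obtain ⟨M0, hM0⟩ : ∃ M0 : ℕ, (|i| + κ) * N ≤ 5 ^ M0 := by
    obtain ⟨m, hm⟩ := pow_unbounded_of_one_lt ((|i| + κ) * N) (by norm_num : (1 : ℤ) < 5)
    exact ⟨m, hm.le⟩
  set M := M0 + (e + r) with hM
  have hM1 : (|i| + κ) * N ≤ 5 ^ M :=
    hM0.trans (pow_le_pow_right₀ (by norm_num) (by omega))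
  have h543 : (5 : ℤ) ^ M ≤ 43 ^ M := pow_le_pow_left₀ (by norm_num) (by norm_num) _
  have h5 : (1 : ℤ) ≤ 5 ^ M := one_le_pow₀ (by norm_num)
  set W : ℤ := 5 ^ M with hW
  set V : ℤ := 43 ^ M with hV
  set ts := t - 2 * V + 2 with hts
  have data : ∀ n : ℕ, n < N → ω (t + κ * n) (p + i * n) ≠ none →
      ∃ l : List (ℤ × ℤ), ∃ x : ℤ, l.length = M ∧ Av l (p + i * n) (t + κ * n) ∧
        |x - p| ≤ 17 * W ∧ ∃ L R T, Chain l ω L R T ∧ ts ≤ T ∧ L ts = x ∧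
          W - 1 ≤ 2 * (R ts - L ts) := by
    intro n hn h
    obtain ⟨s, hs⟩ := Option.ne_none_iff_exists'.1 h
    obtain ⟨f, t0, hf, hfp, -⟩ := exists_PL hR hs
    obtain ⟨l, hl, hav, L, R, hc, hb⟩ := hull M ω hR f _ t0 _ hf (p + i * n) ⟨0, by omega, Or.inl rfl⟩
    have a1 : 0 ≤ κ * n := by positivity
    have hnN : (n : ℤ) ≤ N := by exact_mod_cast hn.le
    have a2 : κ * n ≤ W := by
      refine le_trans ?_ hM1
      have : 0 ≤ |i| := abs_nonneg i
      nlinarith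
    have a3 : |i * n| ≤ W := by
      refine le_trans ?_ hM1
      rw [abs_mul, Nat.abs_cast]
      have : 0 ≤ |i| := abs_nonneg i
      nlinarith
    have b := hb ts (by omega)
    have c := slow M ω hR f _ t0 _ hf ts (by omega) (by omega)
    refine ⟨l, L ts, hl, hav, ?_, L, R, _, hc, by omega, rfl, b.2.2.1⟩
    rw [hfp] at c
    rw [abs_le] at *
    constructor <;> omega
  choose! l x hlen hav hx L R T hc hT hL hw using data
  set w : ℤ := (W + 1) / 2 with hwdef
  have hw0 : 0 < w := by omega
  have hw1 : W ≤ 2 * w := by omega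
  unfold cnt
  have cardI : (Finset.Icc (-34 : ℤ) 34).card = 69 := by simp
  rw [← cardI]
  refine Finset.card_le_mul_card_image_of_maps_to (f := fun n => (x n - p) / w) ?_ _ ?_
  · intro n hn
    simp only [Finset.mem_filter, Finset.mem_range] at hn
    have := abs_le.1 (hx n hn.1 hn.2)
    simp only [Finset.mem_Icc]
    constructor
    · rw [Int.le_ediv_iff_mul_le hw0]; linarith
    · rw [← Int.lt_add_one_iff, Int.ediv_lt_iff_lt_mul hw0]; linarith
  · intro c hcI
    rcases Nat.eq_zero_or_pos (Finset.card _) with h | h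
    · exact h.le.trans (Nat.zero_le _)
    · obtain ⟨m, hm⟩ := Finset.card_pos.1 h
      simp only [Finset.mem_filter, Finset.mem_range] at hm
      obtain ⟨⟨m1, m2⟩, m3⟩ := hm
      refine le_trans ?_ (count2 r e (l m) (by rw [hlen m m1 m2]; omega) i k p t hk)
      unfold cnt
      apply Finset.card_le_card
      intro n hn
      simp only [Finset.mem_filter, Finset.mem_range] at hn ⊢
      obtain ⟨⟨n1, n2⟩, n3⟩ := hn
      refine ⟨n1, ?_⟩
      have : l n = l m := by
        by_contra hne
        have w1 := hw n n1 n2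
        have w2 := hw m m1 m2
        have d := (hc n n1 n2).disj (hc m m1 m2) (by rw [hlen n n1 n2, hlen m m1 m2]) hne
          (hT n n1 n2) (hT m m1 m2) (by omega) (by omega)
        have q1 := Int.mul_ediv_add_emod (x n - p) w
        have q2 := Int.mul_ediv_add_emod (x m - p) w
        have q3 := Int.emod_nonneg (x n - p) hw0.ne'
        have q4 := Int.emod_lt_of_pos (x n - p) hw0
        have q5 := Int.emod_nonneg (x m - p) hw0.ne'
        have q6 := Int.emod_lt_of_pos (x m - p) hw0
        have l1 := hL n n1 n2
        have l2 := hL m m1 m2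
        rw [n3] at q1
        rw [m3] at q2
        omega
      rw [← this]
      exact hav n n1 n2

end UECA

namespace UECA

section abstractpart

variable {A : Type} [Finite A] [TopologicalSpace A] [DiscreteTopology A]

lemma limit_pre {X : Type} [TopologicalSpace X] [CompactSpace X] [T2Space X] (Φ : X → X)
    (hc : Continuous Φ) (x : X) (hx : ∀ n, x ∈ Set.range (Φ^[n])) :
    ∃ y, Φ y = x ∧ ∀ n, y ∈ Set.range (Φ^[n]) := by
  have hcl : ∀ n, IsClosed (Set.range (Φ^[n])) := fun n =>
    (isCompact_range (hc.iterate n)).isClosed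
  have := IsCompact.nonempty_iInter_of_sequence_nonempty_isCompact_isClosed
    (fun n => Φ ⁻¹' {x} ∩ Set.range (Φ^[n])) ?_ ?_ ?_ ?_
  · obtain ⟨y, hy⟩ := this
    simp only [Set.mem_iInter, Set.mem_inter_iff, Set.mem_preimage, Set.mem_singleton_iff] at hy
    exact ⟨y, (hy 0).1, fun n => (hy n).2⟩
  · rintro n y ⟨h1, z, hz⟩
    refine ⟨h1, Φ z, ?_⟩
    rw [← hz, ← Function.iterate_succ_apply]
  · intro n
    obtain ⟨z, hz⟩ := hx (n + 1)
    refine ⟨Φ^[n] z, ?_, z, rfl⟩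
    rw [Set.mem_preimage, ← Function.iterate_succ_apply' Φ n z, hz]
    rfl
  · exact ((isClosed_singleton.preimage hc).inter (hcl 0)).isCompact
  · intro n
    exact (isClosed_singleton.preimage hc).inter (hcl n)

lemma biinf {X : Type} [TopologicalSpace X] [CompactSpace X] [T2Space X] (Φ : X → X)
    (hc : Continuous Φ) (x : X) (hx : ∀ n, x ∈ Set.range (Φ^[n])) :
    ∃ ω : ℤ → X, (∀ t, ω (t + 1) = Φ (ω t)) ∧ ∀ n : ℕ, ω n = Φ^[n] x := by
  choose! g hg1 hg2 using limit_pre Φ hc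
  have hb : ∀ n m, g^[n] x ∈ Set.range (Φ^[m]) := by
    intro n
    induction n with
    | zero => exact hx
    | succ n ih =>
      rw [Function.iterate_succ_apply']
      exact hg2 _ ih
  refine ⟨fun t => if 0 ≤ t then Φ^[t.toNat] x else g^[(-t).toNat] x, fun t => ?_, fun n => by simp⟩
  rcases lt_trichotomy t (-1) with h | h | h
  · simp only [show ¬ (0 ≤ t + 1) by omega, show ¬ (0 ≤ t) by omega, if_false]
    obtain ⟨n, hn⟩ : ∃ n : ℕ, (-(t + 1)).toNat = n := ⟨_, rfl⟩
    rw [show (-t).toNat = n + 1 by omega, hn, Function.iterate_succ_apply', hg1 _ (hb n)]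
  · subst h
    simp only [show (0 : ℤ) ≤ -1 + 1 by omega, show ¬ ((0 : ℤ) ≤ -1) by omega, if_true, if_false]
    exact (hg1 _ hx).symm
  · simp only [show (0 ≤ t + 1) by omega, show (0 ≤ t) by omega, if_true]
    rw [show (t + 1).toNat = t.toNat + 1 by omega, Function.iterate_succ_apply']

lemma shift_nat (Φ : (ℤ → A) → (ℤ → A))
    (hs : ∀ x : ℤ → A, Φ (fun i => x (i + 1)) = fun i => Φ x (i + 1)) (n : ℕ) (x : ℤ → A) :
    Φ (fun i => x (i + n)) = fun i => Φ x (i + n) := by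
  induction n with
  | zero => simp
  | succ n ih =>
    have := hs (fun i => x (i + n))
    rw [ih] at this
    push_cast
    simpa [add_assoc, add_comm (1 : ℤ)] using this

lemma shift_int (Φ : (ℤ → A) → (ℤ → A))
    (hs : ∀ x : ℤ → A, Φ (fun i => x (i + 1)) = fun i => Φ x (i + 1)) (n : ℤ) (x : ℤ → A) :
    Φ (fun i => x (i + n)) = fun i => Φ x (i + n) := by
  obtain ⟨m, rfl | rfl⟩ := n.eq_nat_or_neg
  · exact shift_nat Φ hs m x
  · have := shift_nat Φ hs m (fun i => x (i + -m))
    simp only [neg_add_cancel_right, add_neg_cancel_right] at this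
    funext i
    have := congrFun this (i + -m)
    simp only [neg_add_cancel_right] at this
    exact this.symm

lemma shift_iter (Φ : (ℤ → A) → (ℤ → A))
    (hs : ∀ x : ℤ → A, Φ (fun i => x (i + 1)) = fun i => Φ x (i + 1)) (n : ℤ) (k : ℕ) (x : ℤ → A) :
    Φ^[k] (fun i => x (i + n)) = fun i => Φ^[k] x (i + n) := by
  induction k with
  | zero => rfl
  | succ k ih => rw [Function.iterate_succ_apply', ih, shift_int Φ hs, Function.iterate_succ_apply']

lemma T_iter (Φ : (ℤ → A) → (ℤ → A))
    (hs : ∀ x : ℤ → A, Φ (fun i => x (i + 1)) = fun i => Φ x (i + 1)) (i : ℤ) (k n : ℕ) (x : ℤ → A) :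
    (fun x : ℤ → A => fun j : ℤ => Φ^[k] x (j + i))^[n] x = fun j => Φ^[k * n] x (j + i * n) := by
  induction n with
  | zero => simp
  | succ n ih =>
    rw [Function.iterate_succ_apply', ih]
    beta_reduce
    rw [shift_iter Φ hs, ← Function.iterate_add_apply]
    funext j
    rw [show k + k * n = k * (n + 1) by ring]
    congr 1
    push_cast; ring

open Classical in
theorem ue [MeasurableSpace A] [BorelSpace A] (B : A) (Φ : (ℤ → A) → (ℤ → A)) (hc : Continuous Φ)
    (hs : ∀ x : ℤ → A, Φ (fun i => x (i + 1)) = fun i => Φ x (i + 1))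
    (hB : Φ (fun _ => B) = fun _ => B) (i : ℤ) (k : ℕ) (hk : 1 ≤ k)
    (H : ∃ e : ℕ, ∀ ω : ℤ → ℤ → A, (∀ t, ω (t + 1) = Φ (ω t)) → ∀ (r : ℕ) (p : ℤ),
      cnt (5 ^ e * 215 ^ r) (fun n => ω ((k : ℤ) * n) (p + i * n) ≠ B) ≤ 5 ^ e * 214 ^ r * 69) :
    ∃! μ : Measure (ℤ → A), IsProbabilityMeasure μ ∧
      ∀ S : Set (ℤ → A), MeasurableSet S →
        μ ((fun x : ℤ → A => fun j : ℤ => Φ^[k] x (j + i)) ⁻¹' S) = μ S := by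
  have hBk : Φ^[k] (fun _ => B) = fun _ => B := Function.iterate_fixed hB k
  set T := (fun x : ℤ → A => fun j : ℤ => Φ^[k] x (j + i)) with hT
  have hTc : Continuous T := by
    refine continuous_pi fun j => ?_
    exact (continuous_apply (j + i)).comp (hc.iterate k)
  have hTB : T (fun _ => B) = fun _ => B := by
    funext j; simp only [hT, hBk]
  have hTm : Measurable T := hTc.measurable
  refine ⟨Measure.dirac (fun _ => B), ⟨inferInstance, fun S hS => ?_⟩, ?_⟩
  · rw [Measure.dirac_apply' _ hS, Measure.dirac_apply' _ (hTm hS)]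
    simp only [Set.indicator, Set.mem_preimage, hTB]
  rintro μ ⟨hp, hinv⟩
  have hinvn : ∀ n : ℕ, ∀ S, MeasurableSet S → μ ((T^[n]) ⁻¹' S) = μ S := by
    intro n
    induction n with
    | zero => intro S hS; rfl
    | succ n ih =>
      intro S hS
      rw [Function.iterate_succ', Set.preimage_comp, ih _ (hTm hS), hinv _ hS]
  have hlim : ∀ᵐ x ∂μ, ∀ n, x ∈ Set.range (Φ^[n]) := by
    rw [ae_all_iff]
    intro n
    have hm : MeasurableSet (Set.range (T^[n])) :=
      (isCompact_range (hTc.iterate n)).isClosed.measurableSet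
    have h1 : μ (Set.range (T^[n])) = 1 := by
      rw [← hinvn n _ hm, Set.preimage_range, measure_univ]
    have h2 : ∀ᵐ x ∂μ, x ∈ Set.range (T^[n]) := by
      rw [ae_iff]
      exact (prob_compl_eq_zero_iff hm).2 h1
    filter_upwards [h2] with x hx
    obtain ⟨y, rfl⟩ := hx
    rw [T_iter Φ hs, ← shift_iter Φ hs]
    obtain ⟨d, hd⟩ : ∃ d, k * n = n + d := ⟨k * n - n, by
      have := Nat.le_mul_of_pos_left n hk; omega⟩
    rw [hd, Function.iterate_add_apply]
    exact ⟨_, rfl⟩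
  obtain ⟨e, He⟩ := H
  have hzero : ∀ j : ℤ, μ {x | x j ≠ B} = 0 := by
    intro j
    have hm : MeasurableSet {x : ℤ → A | x j ≠ B} := by
      have : IsOpen {x : ℤ → A | x j ≠ B} :=
        IsOpen.preimage (f := fun x : ℤ → A => x j) (continuous_apply j) (isOpen_discrete {b : A | b ≠ B})
      exact this.measurableSet
    set c := μ {x : ℤ → A | x j ≠ B} with hcdef
    have key : ∀ r : ℕ, ((5 ^ e * 215 ^ r : ℕ) : ENNReal) * c ≤ ((5 ^ e * 214 ^ r * 69 : ℕ) : ENNReal) := by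
      intro r
      set N := 5 ^ e * 215 ^ r with hN
      have s1 : (N : ENNReal) * c = ∑ n ∈ Finset.range N, μ ((T^[n]) ⁻¹' {x | x j ≠ B}) := by
        rw [Finset.sum_congr rfl fun n _ => hinvn n _ hm]
        simp [hcdef]
      have s2 : ∀ n, μ ((T^[n]) ⁻¹' {x | x j ≠ B}) =
          ∫⁻ x, ((T^[n]) ⁻¹' {x | x j ≠ B}).indicator 1 x ∂μ := fun n => by
        rw [lintegral_indicator_one ((hTm.iterate n) hm)]
      rw [s1, Finset.sum_congr rfl fun n _ => s2 n, ← lintegral_finsetSum]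
      · calc _ ≤ ∫⁻ x, ((5 ^ e * 214 ^ r * 69 : ℕ) : ENNReal) ∂μ := by
              refine lintegral_mono_ae ?_
              filter_upwards [hlim] with x hx
              obtain ⟨ω, h1, h2⟩ := biinf Φ hc x hx
              have := He ω h1 r j
              refine le_trans (le_of_eq ?_) (Nat.cast_le.2 this)
              unfold cnt
              rw [Finset.card_filter, Nat.cast_sum]
              refine Finset.sum_congr rfl fun n _ => ?_
              have e1 : T^[n] x j = ω ((k : ℤ) * n) (j + i * n) := by
                rw [T_iter Φ hs, ← h2 (k * n)]
                push_cast; rfl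
              simp only [Set.indicator, Set.mem_preimage, Set.mem_ofPred_eq, e1]
              split_ifs <;> simp
          _ = _ := by simp
      · intro n _
        exact measurable_one.indicator ((hTm.iterate n) hm)
    have hcfin : c ≠ ⊤ := measure_ne_top _ _
    have hreal : ∀ r : ℕ, c.toReal ≤ 69 * ((214 : ℝ) / 215) ^ r := by
      intro r
      have h := ENNReal.toReal_mono (ENNReal.natCast_ne_top _) (key r)
      rw [ENNReal.toReal_mul, ENNReal.toReal_natCast, ENNReal.toReal_natCast] at h
      push_cast at h
      have h5 : (0 : ℝ) < 5 ^ e := by positivity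
      have h6 : (215 : ℝ) ^ r * c.toReal ≤ 214 ^ r * 69 := by
        refine le_of_mul_le_mul_left ?_ h5
        linarith
      rw [div_pow, mul_div_assoc', le_div_iff₀ (by positivity)]
      linarith
    have hlim0 : Filter.Tendsto (fun r : ℕ => 69 * ((214 : ℝ) / 215) ^ r) Filter.atTop (nhds (69 * 0)) :=
      (tendsto_pow_atTop_nhds_zero_of_lt_one (by norm_num) (by norm_num)).const_mul _
    have hle := ge_of_tendsto' hlim0 hreal
    have : c.toReal = 0 := le_antisymm (by simpa using hle) ENNReal.toReal_nonneg
    exact (ENNReal.toReal_eq_zero_iff _).1 this |>.resolve_right hcfin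
  have hae : ∀ᵐ x ∂μ, x = fun _ => B := by
    have : ∀ᵐ x ∂μ, ∀ j, x j = B := by
      rw [ae_all_iff]
      intro j
      rw [ae_iff]
      exact hzero j
    filter_upwards [this] with x hx
    funext j; exact hx j
  ext S hS
  rw [Measure.dirac_apply' _ hS]
  by_cases hBS : (fun _ => B) ∈ S
  · rw [Set.indicator_of_mem hBS]
    have : ∀ᵐ x ∂μ, x ∈ S := by
      filter_upwards [hae] with x hx
      rw [hx]; exact hBS
    rw [ae_iff] at this
    simpa using (prob_compl_eq_zero_iff hS).1 this
  · rw [Set.indicator_of_notMem hBS]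
    refine measure_mono_null ?_ (ae_iff.1 hae)
    intro x hx he
    exact hBS (he ▸ hx)

end abstractpart

/-- The local rule. -/
def G (a b c d e : Option St) : Option St :=
  (((b.bind fun s => out a s c).filter (fun s => s.j.v = .R)).or
    ((c.bind fun s => out b s d).filter (fun s => s.j.v = .S))).or
    ((d.bind fun s => out c s e).filter (fun s => s.j.v = .L))

lemma outAt_bind (x : ℤ → Option St) (q : ℤ) :
    outAt x q = (x q).bind fun s => out (x (q - 1)) s (x (q + 1)) := by
  unfold outAt
  cases x q <;> rfl

lemma Phi_G (x : ℤ → Option St) (p : ℤ) :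
    Phi x p = G (x (p - 2)) (x (p - 1)) (x p) (x (p + 1)) (x (p + 2)) := by
  unfold Phi G comeAt
  simp only [outAt_bind]
  rw [show p - 1 - 1 = p - 2 by ring, show p - 1 + 1 = p by ring, show p + 1 - 1 = p by ring,
    show p + 1 + 1 = p + 2 by ring]

lemma Phi_none : Phi (fun _ => none) = fun _ => none := by
  funext p
  rw [Phi_G]
  rfl

/-- Transport to another alphabet. -/
def tr {A : Type} (e : Option St ≃ A) (x : ℤ → A) : ℤ → A := fun p => e (Phi (fun q => e.symm (x q)) p)

lemma tr_iter {A : Type} (e : Option St ≃ A) (n : ℕ) (x : ℤ → Option St) :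
    (tr e)^[n] (fun q => e (x q)) = fun q => e (Phi^[n] x q) := by
  induction n with
  | zero => rfl
  | succ n ih =>
    rw [Function.iterate_succ_apply', ih, Function.iterate_succ_apply']
    funext p
    simp [tr]

lemma tr_cont {A : Type} [TopologicalSpace A] [DiscreteTopology A] (e : Option St ≃ A) :
    Continuous (tr e) := by
  refine continuous_pi fun p => ?_
  let K : A × A × A × A × A → A := fun y =>
    e (G (e.symm y.1) (e.symm y.2.1) (e.symm y.2.2.1) (e.symm y.2.2.2.1) (e.symm y.2.2.2.2))
  have hK : Continuous K := continuous_of_discreteTopology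
  have : (fun x => tr e x p) = fun x => K (x (p - 2), x (p - 1), x p, x (p + 1), x (p + 2)) := by
    funext x
    simp only [tr, Phi_G, K]
  rw [this]
  refine hK.comp ?_
  fun_prop

lemma tr_shift {A : Type} (e : Option St ≃ A) (x : ℤ → A) :
    tr e (fun i => x (i + 1)) = fun i => tr e x (i + 1) := by
  funext p
  simp only [tr, Phi_G]
  rw [show p + 1 - 2 = p - 2 + 1 by ring, show p + 1 - 1 = p - 1 + 1 by ring,
    show p + 2 + 1 = p + 1 + 2 by ring]

theorem final (hnil : ∀ n : ℕ, ∃ x : ℤ → Option St, Phi^[n] x ≠ fun _ => none) :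
    ∃ (m : ℕ) (B : Fin (m + 1)) (Φ : (ℤ → Fin (m + 1)) → (ℤ → Fin (m + 1))),
      Continuous Φ ∧
      (∀ x : ℤ → Fin (m + 1), Φ (fun i => x (i + 1)) = fun i => Φ x (i + 1)) ∧
      Φ (fun _ => B) = (fun _ => B) ∧
      ¬ (∃ n : ℕ, ∀ x : ℤ → Fin (m + 1), Φ^[n] x = fun _ => B) ∧
      (∀ (i : ℤ) (k : ℕ), 1 ≤ k →
        ∃! μ : Measure (ℤ → Fin (m + 1)), IsProbabilityMeasure μ ∧
          ∀ A : Set (ℤ → Fin (m + 1)), MeasurableSet A →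
            μ ((fun x : ℤ → Fin (m + 1) => fun j : ℤ => Φ^[k] x (j + i)) ⁻¹' A)
              = μ A) := by
  obtain ⟨M, ⟨e0⟩⟩ := Finite.exists_equiv_fin (Option St)
  obtain ⟨m, rfl⟩ : ∃ m, M = m + 1 := by
    cases M with
    | zero => exact (e0 none).elim0
    | succ m => exact ⟨m, rfl⟩
  have hB : tr e0 (fun _ => e0 none) = fun _ => e0 none := by
    funext p
    simp [tr, Phi_none]
  refine ⟨m, e0 none, tr e0, tr_cont e0, tr_shift e0, hB, ?_, ?_⟩
  · rintro ⟨n, hn⟩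
    obtain ⟨x, hx⟩ := hnil n
    apply hx
    have := hn (fun q => e0 (x q))
    rw [tr_iter] at this
    funext q
    exact e0.injective (congrFun this q)
  · intro i k hk
    refine ue (e0 none) (tr e0) (tr_cont e0) (tr_shift e0) hB i k hk ?_
    obtain ⟨e, k', hk', hke⟩ := Nat.exists_eq_pow_mul_and_not_dvd (n := k) (by omega) 43 (by norm_num)
    refine ⟨e, fun ω hω r p => ?_⟩
    have hR := rel_of_orbit (fun t q => e0.symm (ω t q)) (fun t => by
      rw [hω t]; funext q; simp [tr])
    have hk0 : 0 < k' := by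
      rcases Nat.eq_zero_or_pos k' with h | h
      · subst h; simp at hke; omega
      · exact h
    refine (cnt_mono ?_).trans (hits hR i k' p 0 e r (by exact_mod_cast hk') (by exact_mod_cast hk0))
    intro n hn hcon
    apply hn
    have : ((k : ℕ) : ℤ) = 43 ^ e * k' := by rw [hke]; push_cast; ring
    rw [this]
    rw [zero_add] at hcon
    simpa [Equiv.symm_apply_eq] using hcon

end UECA

namespace UECA

/-- All particles survive the next step, and their order is preserved. -/
def Good (X : ℤ → Option St) : Prop :=
  (∀ P, X P ≠ none → outAt X P ≠ none) ∧ ∀ q q' s s', q < q' → outAt X q = some s →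
    outAt X q' = some s' → q + s.j.v.z < q' + s'.j.v.z

lemma Phi_iff {X : ℤ → Option St} (h : ∀ q q' s s', q < q' → outAt X q = some s →
    outAt X q' = some s' → q + s.j.v.z < q' + s'.j.v.z) (y : ℤ) (s : St) :
    Phi X y = some s ↔ ∃ q, outAt X q = some s ∧ y = q + s.j.v.z := by
  have hc : ∀ q v s, comeAt X q v = some s ↔ outAt X q = some s ∧ s.j.v = v := by
    intro q v s
    unfold comeAt
    rw [Option.filter_eq_some_iff]
    simp
  have hinj : ∀ q q' s s', outAt X q = some s → outAt X q' = some s' →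
      q + s.j.v.z = q' + s'.j.v.z → q = q' := by
    intro q q' s s' h1 h2 h3
    rcases lt_trichotomy q q' with h4 | h4 | h4
    · have := h _ _ _ _ h4 h1 h2; omega
    · exact h4
    · have := h _ _ _ _ h4 h2 h1; omega
  have hnone : ∀ q v, (∃ q' s', outAt X q' = some s' ∧ q' + s'.j.v.z = q + v.z ∧ q' ≠ q) →
      comeAt X q v = none := by
    rintro q v ⟨q', s', h1, h2, h3⟩
    by_contra hne
    obtain ⟨s2, hs2⟩ := Option.ne_none_iff_exists'.1 hne
    rw [hc] at hs2
    exact h3 (hinj _ _ _ _ h1 hs2.1 (by rw [hs2.2]; exact h2))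
  unfold Phi
  rw [Option.or_eq_some_iff, Option.or_eq_some_iff]
  constructor
  · rintro ((h1 | ⟨-, h1⟩) | ⟨-, h1⟩)
    · rw [hc] at h1; exact ⟨_, h1.1, by rw [h1.2]; simp [Vel.z]⟩
    · rw [hc] at h1; exact ⟨_, h1.1, by rw [h1.2]; simp [Vel.z]⟩
    · rw [hc] at h1; exact ⟨_, h1.1, by rw [h1.2]; simp [Vel.z]⟩
  · rintro ⟨q, hq, hy⟩
    cases hv : s.j.v with
    | R =>
      left; left
      rw [hc]
      have : q = y - 1 := by rw [hy, hv]; simp [Vel.z]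
      rw [← this]; exact ⟨hq, hv⟩
    | S =>
      left; right
      have hyq : y = q := by rw [hy, hv]; simp [Vel.z]
      refine ⟨hnone _ _ ⟨q, s, hq, ?_, ?_⟩, ?_⟩
      · rw [hv, hyq]; simp [Vel.z]
      · omega
      · rw [hc, hyq]; exact ⟨hq, hv⟩
    | L =>
      right
      have hyq : q = y + 1 := by rw [hy, hv]; simp [Vel.z]
      refine ⟨?_, ?_⟩
      · rw [hnone _ _ ⟨q, s, hq, ?_, ?_⟩, hnone _ _ ⟨q, s, hq, ?_, ?_⟩]
        · rfl
        · rw [hv, hyq]; simp [Vel.z]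
        · omega
        · rw [hv, hyq]; simp [Vel.z]
        · omega
      · rw [hc, ← hyq]; exact ⟨hq, hv⟩

/-- What is seen from the neighbouring block. -/
def xLo (o : Option St) (n : ℕ) : D :=
  if n = 6 then (match o with
    | none => .nil
    | some s => .code s.j 0) else if n = 4 then rd true o else .nil

lemma xLo_nil (o : Option St) (n : ℕ) (h4 : n ≠ 4) (h6 : n ≠ 6) : xLo o n = .nil := by
  simp [xLo, h4, h6]

lemma xLo_pres (o : Option St) : Pres o (xLo o 6) (xLo o 4) := by
  cases o <;> simp [Pres, xLo, rd]

/-- The state at `P`. -/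
def stt (X : ℤ → Option St) (P : ℤ) : St := (X P).getD default

/-- The next state of the particle at `P`. -/
def nx (X : ℤ → Option St) (P : ℤ) : St := (outAt X P).getD default

/-- The registers of the block at `P`. -/
def RR (X : ℤ → Option St) (P : ℤ) (τ : ℕ) : Reg × Reg × Reg :=
  (brun (xLo (X (P - 1))) (xLo (X (P + 1))) (Er (stt X P).j (stt X P).g) τ).getD
    (Er (stt X P).j (stt X P).g)

/-- Component of a triple. -/
def pj (a : Fin 3) (G : Reg × Reg × Reg) : Reg := if a = 0 then G.1 else if a = 1 then G.2.1 else G.2.2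

/-- Position of the cell `a` of block `P`. -/
def pos (X : ℤ → Option St) (P : ℤ) (a : Fin 3) (τ : ℕ) : ℤ :=
  5 * P + sl a τ + sh (nx X P).j.v τ

/-- The velocity with given displacement. -/
def ofz (d : ℤ) : Vel := if d = 1 then .R else if d = -1 then .L else .S

lemma ofz_z (v : Vel) : ofz v.z = v := by cases v <;> rfl

/-- The last velocity. -/
def lv (X : ℤ → Option St) (P : ℤ) (a : Fin 3) : ℕ → Vel
  | 0 => .S
  | τ + 1 => ofz (pos X P a (τ + 1) - pos X P a τ)

/-- The cell `a` of block `P`. -/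
def cell (X : ℤ → Option St) (P : ℤ) (a : Fin 3) (τ : ℕ) : St :=
  ⟨⟨a, Fin.ofNat 43 τ, lv X P a τ⟩, pj a (RR X P τ)⟩

/-- `Y` consists of the blocks of `X` at phase `τ`. -/
def Conf (X : ℤ → Option St) (τ : ℕ) (Y : ℤ → Option St) : Prop :=
  ∀ y s, Y y = some s ↔ ∃ P a, X P ≠ none ∧ y = pos X P a τ ∧ s = cell X P a τ

section
variable {X : ℤ → Option St}

lemma alive_out (hX : Good X) {P : ℤ} (hP : X P ≠ none) :
    out (X (P - 1)) (stt X P) (X (P + 1)) = some (nx X P) ∧ outAt X P = some (nx X P) := by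
  obtain ⟨s, hs⟩ := Option.ne_none_iff_exists'.1 hP
  obtain ⟨s', hs'⟩ := Option.ne_none_iff_exists'.1 (hX.1 P hP)
  have h1 : stt X P = s := by simp [stt, hs]
  have h2 : nx X P = s' := by simp [nx, hs']
  rw [h1, h2]
  refine ⟨?_, hs'⟩
  simpa [outAt, hs] using hs'

lemma run43 (hX : Good X) {P : ℤ} (hP : X P ≠ none) :
    brun (xLo (X (P - 1))) (xLo (X (P + 1))) (Er (stt X P).j (stt X P).g) 43 =
      some (Er (nx X P).j (nx X P).g) := by
  rw [brun43 _ _ _ _ (X (P - 1)) (X (P + 1)) (xLo_nil _) (xLo_nil _) (xLo_pres _) (xLo_pres _)]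
  rw [show (⟨(stt X P).j, (stt X P).g⟩ : St) = stt X P from rfl, (alive_out hX hP).1]
  rfl

lemma run_some (hX : Good X) {P : ℤ} (hP : X P ≠ none) (n : ℕ) : ∀ τ, τ + n = 43 →
    brun (xLo (X (P - 1))) (xLo (X (P + 1))) (Er (stt X P).j (stt X P).g) τ = some (RR X P τ) := by
  induction n with
  | zero =>
    intro τ hτ
    obtain rfl : τ = 43 := hτ
    rw [RR, run43 hX hP]; rfl
  | succ n ih =>
    intro τ hτ
    have := ih (τ + 1) (by omega)
    rw [brun, Option.bind_eq_some_iff] at this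
    obtain ⟨G, hG, -⟩ := this
    rw [RR, hG]; rfl

lemma RR_step (hX : Good X) {P : ℤ} (hP : X P ≠ none) (τ : ℕ) (hτ : τ < 43) :
    bst τ (xLo (X (P - 1)) τ) (xLo (X (P + 1)) τ) (RR X P τ) = some (RR X P (τ + 1)) := by
  have h1 := run_some hX hP (43 - τ) τ (by omega)
  have h2 := run_some hX hP (43 - (τ + 1)) (τ + 1) (by omega)
  rw [brun, h1] at h2
  exact h2

lemma RR_43 (hX : Good X) {P : ℤ} (hP : X P ≠ none) : RR X P 43 = Er (nx X P).j (nx X P).g := by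
  rw [RR, run43 hX hP]; rfl

lemma RR_mid (hX : Good X) {P : ℤ} (hP : X P ≠ none) (τ : ℕ) (h1 : 29 ≤ τ) (h2 : τ ≤ 41) :
    RR X P τ = mid (stt X P).j (nx X P).j.v (nx X P).j.v (nx X P).g := by
  have := brun41 _ _ (stt X P).j (stt X P).g (X (P - 1)) (X (P + 1)) (xLo_nil _) (xLo_nil _)
    (xLo_pres (X (P - 1))) (xLo_pres (X (P + 1))) (τ - 29) (by omega)
  rw [show (⟨(stt X P).j, (stt X P).g⟩ : St) = stt X P from rfl, (alive_out hX hP).1,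
    show 29 + (τ - 29) = τ by omega] at this
  rw [RR, this]; rfl

lemma RR_0 (P : ℤ) : RR X P 0 = Er (stt X P).j (stt X P).g := rfl

lemma RR_4 (P : ℤ) : (RR X P 4).1.d1 = (stt X P).g.d1 ∧ (RR X P 4).2.2.d1 = (stt X P).g.d1 := by
  unfold RR
  simp only [brun, Option.bind_some, xLo_nil _ 0 (by omega) (by omega), bst0,
    xLo_nil _ 1 (by omega) (by omega), bst1, bst_idle 2 _ _ _ (by omega),
    bst_idle 3 _ _ _ (by omega), Option.getD_some, and_self]

lemma RR_6 (P : ℤ) : (RR X P 6).1.d1 = .code (stt X P).j 0 ∧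
    (RR X P 6).2.2.d1 = .code (stt X P).j 0 := by
  unfold RR
  simp only [brun, Option.bind_some, xLo_nil _ 0 (by omega) (by omega), bst0,
    xLo_nil _ 1 (by omega) (by omega), bst1, bst_idle 2 _ _ _ (by omega),
    bst_idle 3 _ _ _ (by omega), bst4, xLo_nil _ 5 (by omega) (by omega), bst5,
    Option.getD_some, and_self]

lemma sh_sep (w w' : Vel) (d : ℤ) (hd : 1 ≤ d) (h : 1 ≤ d + w'.z - w.z) (τ : ℕ) :
    5 ≤ 5 * d + sh w' τ - sh w τ := by
  cases w <;> cases w' <;> simp only [sh, Vel.z] at * <;> (try split_ifs) <;> omega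

lemma sep (hX : Good X) {P P' : ℤ} (hP : X P ≠ none) (hP' : X P' ≠ none) (h : P < P') (τ : ℕ) :
    5 * P + sh (nx X P).j.v τ + 5 ≤ 5 * P' + sh (nx X P').j.v τ := by
  have := hX.2 P P' _ _ h (alive_out hX hP).2 (alive_out hX hP').2
  have := sh_sep (nx X P).j.v (nx X P').j.v (P' - P) (by omega) (by omega) τ
  omega

lemma sl_fact : ∀ τ : ℕ, τ < 44 → ∀ a a' : Fin 3,
    (sl a' τ - sl a τ ≤ 3 ∨ (a = 0 ∧ a' = 2 ∧ 4 ≤ τ ∧ τ ≤ 10)) ∧ sl a' τ - sl a τ ≤ 4 ∧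
    (sl a' τ < sl a τ ↔ a' < a) ∧
    (sl a' τ = sl a τ - 1 → (a' : ℕ) + 1 = a) := by decide

lemma adj (hX : Good X) {P P' : ℤ} (hP : X P ≠ none) (hP' : X P' ≠ none) {a a' : Fin 3} {τ : ℕ} (hτ : τ < 44) :
    pos X P' a' τ = pos X P a τ - 1 ↔ (P' = P ∧ sl a' τ = sl a τ - 1) ∨
      (P' = P - 1 ∧ a = 0 ∧ a' = 2 ∧ 4 ≤ τ ∧ τ ≤ 10) := by
  unfold pos
  constructor
  · intro h
    obtain ⟨f1, f2, -⟩ := sl_fact τ hτ a a'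
    obtain ⟨g1, g2, -⟩ := sl_fact τ hτ a' a
    rcases lt_trichotomy P' P with h1 | h1 | h1
    · have hs := sep hX hP' hP h1 τ
      right
      have : a = 0 ∧ a' = 2 ∧ 4 ≤ τ ∧ τ ≤ 10 := by
        rcases f1 with f1 | f1
        · omega
        · exact f1
      refine ⟨?_, this⟩
      rw [sh_le31 _ τ (by omega), sh_le31 _ τ (by omega)] at h
      omega
    · subst h1
      left
      exact ⟨rfl, by omega⟩
    · have hs := sep hX hP hP' h1 τ
      omega
  · rintro (⟨rfl, h⟩ | ⟨rfl, rfl, rfl, h1, h2⟩)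
    · omega
    · rw [sh_le31 _ τ (by omega), sh_le31 _ τ (by omega)]
      have : sl 0 τ = 0 := by simp [sl]; omega
      have : sl 2 τ = 4 := by simp [sl]; omega
      omega

lemma pos_lt (hX : Good X) {P P' : ℤ} (hP : X P ≠ none) (hP' : X P' ≠ none) {a a' : Fin 3} {τ : ℕ} (hτ : τ < 44) :
    pos X P' a' τ < pos X P a τ ↔ P' < P ∨ (P' = P ∧ a' < a) := by
  unfold pos
  obtain ⟨f1, f2, f3, -⟩ := sl_fact τ hτ a a'
  obtain ⟨g1, g2, g3, -⟩ := sl_fact τ hτ a' a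
  rcases lt_trichotomy P' P with h1 | h1 | h1
  · have hs := sep hX hP' hP h1 τ
    constructor
    · intro _; exact Or.inl h1
    · intro _; omega
  · subst h1
    rw [← f3]
    constructor
    · intro _; right; exact ⟨rfl, by omega⟩
    · rintro (h | h) <;> omega
  · have hs := sep hX hP hP' h1 τ
    constructor
    · intro _; omega
    · rintro (h | h) <;> omega

end

/-- The left neighbour of a cell. -/
def lN (X : ℤ → Option St) (P : ℤ) (a : Fin 3) (τ : ℕ) : Option St :=
  if a = 0 then (if 4 ≤ τ ∧ τ ≤ 10 then (X (P - 1)).map (fun _ => cell X (P - 1) 2 τ) else none)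
  else if a = 1 then (if sl 0 τ = sl 1 τ - 1 then some (cell X P 0 τ) else none)
  else (if sl 1 τ = sl 2 τ - 1 then some (cell X P 1 τ) else none)

/-- The right neighbour of a cell. -/
def rN (X : ℤ → Option St) (P : ℤ) (a : Fin 3) (τ : ℕ) : Option St :=
  if a = 2 then (if 4 ≤ τ ∧ τ ≤ 10 then (X (P + 1)).map (fun _ => cell X (P + 1) 0 τ) else none)
  else if a = 1 then (if sl 1 τ = sl 2 τ - 1 then some (cell X P 2 τ) else none)
  else (if sl 0 τ = sl 1 τ - 1 then some (cell X P 1 τ) else none)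

lemma lN_eq {X Y : ℤ → Option St} (hX : Good X) {τ : ℕ} (hτ : τ < 44) (hY : Conf X τ Y) {P : ℤ}
    (hP : X P ≠ none) (a : Fin 3) : Y (pos X P a τ - 1) = lN X P a τ := by
  apply Option.ext
  intro s
  rw [hY]
  have : (∃ P' a', X P' ≠ none ∧ pos X P a τ - 1 = pos X P' a' τ ∧ s = cell X P' a' τ) ↔
      (∃ P' a', X P' ≠ none ∧ ((P' = P ∧ sl a' τ = sl a τ - 1) ∨
      (P' = P - 1 ∧ a = 0 ∧ a' = 2 ∧ 4 ≤ τ ∧ τ ≤ 10)) ∧ s = cell X P' a' τ) := by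
    refine exists_congr fun P' => exists_congr fun a' => and_congr_right fun h => ?_
    rw [eq_comm (a := pos X P a τ - 1), adj hX hP h hτ]
  rw [this]
  unfold lN
  constructor
  · rintro ⟨P', a', h1, ⟨rfl, h2⟩ | ⟨rfl, rfl, rfl, h2⟩, rfl⟩
    · have h3 := (sl_fact τ hτ a a').2.2.2 h2
      have : (a' = 0 ∧ a = 1) ∨ (a' = 1 ∧ a = 2) := by
        revert h3; clear * -; revert a a'; decide
      rcases this with ⟨rfl, rfl⟩ | ⟨rfl, rfl⟩
      · simp [h2]
      · simp [h2]
    · obtain ⟨s, hs⟩ := Option.ne_none_iff_exists'.1 h1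
      simp [h2, hs]
  · intro h
    split_ifs at h with h1 h2 h3 h4 h5
    · rw [Option.map_eq_some_iff] at h
      obtain ⟨s0, hs0, rfl⟩ := h
      exact ⟨P - 1, 2, by simp [hs0], Or.inr ⟨rfl, h1, rfl, h2⟩, rfl⟩
    · subst h3
      exact ⟨P, 0, hP, Or.inl ⟨rfl, h4⟩, (Option.some.inj h).symm⟩
    · obtain rfl : a = 2 := by revert h1 h3; clear * -; revert a; decide
      exact ⟨P, 1, hP, Or.inl ⟨rfl, h5⟩, (Option.some.inj h).symm⟩

lemma rN_eq {X Y : ℤ → Option St} (hX : Good X) {τ : ℕ} (hτ : τ < 44) (hY : Conf X τ Y) {P : ℤ}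
    (hP : X P ≠ none) (a : Fin 3) : Y (pos X P a τ + 1) = rN X P a τ := by
  apply Option.ext
  intro s
  rw [hY]
  have : (∃ P' a', X P' ≠ none ∧ pos X P a τ + 1 = pos X P' a' τ ∧ s = cell X P' a' τ) ↔
      (∃ P' a', X P' ≠ none ∧ ((P = P' ∧ sl a τ = sl a' τ - 1) ∨
      (P = P' - 1 ∧ a' = 0 ∧ a = 2 ∧ 4 ≤ τ ∧ τ ≤ 10)) ∧ s = cell X P' a' τ) := by
    refine exists_congr fun P' => exists_congr fun a' => and_congr_right fun h => ?_
    rw [← adj hX h hP hτ]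
    constructor <;> rintro ⟨h1, h2⟩ <;> exact ⟨by omega, h2⟩
  rw [this]
  unfold rN
  constructor
  · rintro ⟨P', a', h1, ⟨rfl, h2⟩ | ⟨rfl, rfl, rfl, h2⟩, rfl⟩
    · have h3 := (sl_fact τ hτ a' a).2.2.2 h2
      have : (a = 0 ∧ a' = 1) ∨ (a = 1 ∧ a' = 2) := by
        revert h3; clear * -; revert a a'; decide
      rcases this with ⟨rfl, rfl⟩ | ⟨rfl, rfl⟩
      · simp [h2]
      · simp [h2]
    · obtain ⟨s, hs⟩ := Option.ne_none_iff_exists'.1 h1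
      simp [h2, hs]
  · intro h
    split_ifs at h with h1 h2 h3 h4 h5
    · rw [Option.map_eq_some_iff] at h
      obtain ⟨s0, hs0, rfl⟩ := h
      exact ⟨P + 1, 0, by simp [hs0], Or.inr ⟨by ring, rfl, h1, h2⟩, rfl⟩
    · subst h3
      exact ⟨P, 2, hP, Or.inl ⟨rfl, h4⟩, (Option.some.inj h).symm⟩
    · obtain rfl : a = 0 := by revert h1 h3; clear * -; revert a; decide
      exact ⟨P, 1, hP, Or.inl ⟨rfl, h5⟩, (Option.some.inj h).symm⟩

lemma ex_fact : ∀ τ : ℕ, τ < 43 →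
    exL 1 τ = (if sl 0 τ = sl 1 τ - 1 then .req 0 else .blank) ∧
    exL 2 τ = (if sl 1 τ = sl 2 τ - 1 then .req 1 else .blank) ∧
    exR 0 τ = (if sl 0 τ = sl 1 τ - 1 then .req 1 else .blank) ∧
    exR 1 τ = (if sl 1 τ = sl 2 τ - 1 then .req 2 else .blank) ∧
    exL 0 τ = (if 4 ≤ τ ∧ τ ≤ 10 then .opt 2 else .blank) ∧
    exR 2 τ = (if 4 ≤ τ ∧ τ ≤ 10 then .opt 0 else .blank) := by decide

lemma ph_val {τ : ℕ} (h : τ < 43) : ((Fin.ofNat 43 τ : Fin 43) : ℕ) = τ := by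
  simp [Fin.ofNat, Nat.mod_eq_of_lt h]

lemma cell_okL (X : ℤ → Option St) (P : ℤ) (a : Fin 3) (τ : ℕ) (hτ : τ < 43) :
    okL (cell X P a τ).j ((lN X P a τ).map St.j) = true := by
  obtain ⟨f1, f2, -, -, f3, -⟩ := ex_fact τ hτ
  unfold okL
  rw [show ((cell X P a τ).j.ph : ℕ) = τ from ph_val hτ, show (cell X P a τ).j.a = a from rfl]
  unfold lN
  match a with
  | 0 =>
    rw [f3]
    cases X (P - 1) <;> by_cases h : 4 ≤ τ ∧ τ ≤ 10 <;> simp [h, chk, cell]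
  | 1 =>
    rw [f1]
    by_cases h : sl 0 τ = sl 1 τ - 1 <;> simp [h, chk, cell]
  | 2 =>
    rw [f2]
    by_cases h : sl 1 τ = sl 2 τ - 1 <;> simp [h, chk, cell]

lemma cell_okR (X : ℤ → Option St) (P : ℤ) (a : Fin 3) (τ : ℕ) (hτ : τ < 43) :
    okR (cell X P a τ).j ((rN X P a τ).map St.j) = true := by
  obtain ⟨-, -, f1, f2, -, f3⟩ := ex_fact τ hτ
  unfold okR
  rw [show ((cell X P a τ).j.ph : ℕ) = τ from ph_val hτ, show (cell X P a τ).j.a = a from rfl]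
  unfold rN
  match a with
  | 0 =>
    rw [f1]
    by_cases h : sl 0 τ = sl 1 τ - 1 <;> simp [h, chk, cell]
  | 1 =>
    rw [f2]
    by_cases h : sl 1 τ = sl 2 τ - 1 <;> simp [h, chk, cell]
  | 2 =>
    rw [f3]
    cases X (P + 1) <;> by_cases h : 4 ≤ τ ∧ τ ≤ 10 <;> simp [h, chk, cell]

/-- Input from the left. -/
def uL (X : ℤ → Option St) (P : ℤ) (a : Fin 3) (τ : ℕ) : D :=
  if a = 0 then xLo (X (P - 1)) τ else if a = 1 then (if lkL 1 τ then (RR X P τ).1.d1 else .nil)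
  else (if lkL 2 τ then (RR X P τ).2.1.d1 else .nil)

/-- Input from the right. -/
def uR (X : ℤ → Option St) (P : ℤ) (a : Fin 3) (τ : ℕ) : D :=
  if a = 2 then xLo (X (P + 1)) τ else if a = 1 then (if lkR 1 τ then (RR X P τ).2.2.d1 else .nil)
  else (if lkR 0 τ then (RR X P τ).2.1.d1 else .nil)

lemma lk_fact : ∀ τ : ℕ, τ < 43 → (lkL 0 τ = true ↔ (τ = 4 ∨ τ = 6)) ∧
    (lkR 2 τ = true ↔ (τ = 4 ∨ τ = 6)) := by decide

lemma rd_uL (X : ℤ → Option St) (P : ℤ) (a : Fin 3) (τ : ℕ) (hτ : τ < 43) :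
    rd (lkL a τ) (lN X P a τ) = uL X P a τ := by
  obtain ⟨a1, a2, a3, a4, a5⟩ := sl_adj τ hτ
  unfold lN uL
  match a with
  | 0 =>
    by_cases h46 : τ = 4 ∨ τ = 6
    · rw [((lk_fact τ hτ).1).2 h46]
      rw [if_pos rfl, if_pos rfl, if_pos (by omega)]
      cases hx : X (P - 1) with
      | none => rcases h46 with rfl | rfl <;> rfl
      | some s =>
        have hs : stt X (P - 1) = s := by simp [stt, hx]
        rcases h46 with rfl | rfl
        · simpa [rd, xLo, cell, pj, hs] using (RR_4 (X := X) (P - 1)).2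
        · simpa [rd, xLo, cell, pj, hs] using (RR_6 (X := X) (P - 1)).2
    · have h1 : lkL 0 τ = false := by
        by_contra hc
        exact h46 (((lk_fact τ hτ).1).1 (by simpa using hc))
      rw [h1, if_pos rfl, if_pos rfl, xLo_nil _ _ (by omega) (by omega)]
      rfl
  | 1 =>
    cases hl : lkL 1 τ with
    | false => simp [rd]
    | true =>
      have := (a3 hl).2
      rw [if_neg (by decide), if_pos rfl, if_pos (by omega)]
      simp [rd, cell, pj]
  | 2 =>
    cases hl : lkL 2 τ with
    | false => simp [rd]
    | true =>
      have := (a2 hl).2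
      rw [if_neg (by decide), if_neg (by decide), if_pos (by omega)]
      simp [rd, cell, pj]

lemma rd_uR (X : ℤ → Option St) (P : ℤ) (a : Fin 3) (τ : ℕ) (hτ : τ < 43) :
    rd (lkR a τ) (rN X P a τ) = uR X P a τ := by
  obtain ⟨a1, a2, a3, a4, a5⟩ := sl_adj τ hτ
  unfold rN uR
  match a with
  | 2 =>
    by_cases h46 : τ = 4 ∨ τ = 6
    · rw [((lk_fact τ hτ).2).2 h46]
      rw [if_pos rfl, if_pos rfl, if_pos (by omega)]
      cases hx : X (P + 1) with
      | none => rcases h46 with rfl | rfl <;> rfl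
      | some s =>
        have hs : stt X (P + 1) = s := by simp [stt, hx]
        rcases h46 with rfl | rfl
        · simpa [rd, xLo, cell, pj, hs] using (RR_4 (X := X) (P + 1)).1
        · simpa [rd, xLo, cell, pj, hs] using (RR_6 (X := X) (P + 1)).1
    · have h1 : lkR 2 τ = false := by
        by_contra hc
        exact h46 (((lk_fact τ hτ).2).1 (by simpa using hc))
      rw [h1, if_pos rfl, if_pos rfl, xLo_nil _ _ (by omega) (by omega)]
      rfl
  | 1 =>
    cases hl : lkR 1 τ with
    | false => simp [rd]
    | true =>
      have := (a4 hl).2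
      rw [if_neg (by decide), if_pos rfl, if_pos (by omega)]
      simp [rd, cell, pj]
  | 0 =>
    cases hl : lkR 0 τ with
    | false => simp [rd]
    | true =>
      have := (a1 hl).2
      rw [if_neg (by decide), if_neg (by decide), if_pos (by omega)]
      simp [rd, cell, pj]

lemma exec_cell {X : ℤ → Option St} (hX : Good X) {P : ℤ} (hP : X P ≠ none) (a : Fin 3) (τ : ℕ)
    (hτ : τ < 43) : exec (opf a τ) (pj a (RR X P τ)) (uL X P a τ) (uR X P a τ) =
      some (pj a (RR X P (τ + 1))) := by
  have h := RR_step hX hP τ hτ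
  unfold bst at h
  rw [Option.bind_eq_some_iff] at h
  obtain ⟨g0, h0, h⟩ := h
  rw [Option.bind_eq_some_iff] at h
  obtain ⟨g1, h1, h⟩ := h
  rw [Option.map_eq_some_iff] at h
  obtain ⟨g2, h2, h⟩ := h
  rw [← h]
  match a with
  | 0 => simpa [pj, uL, uR] using h0
  | 1 => simpa [pj, uL, uR] using h1
  | 2 => simpa [pj, uL, uR] using h2

lemma lk_mv : ∀ τ : ℕ, τ < 43 → 31 ≤ τ → τ ≤ 40 → lkL 1 τ = true ∧ lkR 1 τ = true := by decide

lemma out_cell {X : ℤ → Option St} (hX : Good X) {P : ℤ} (hP : X P ≠ none) (a : Fin 3) (τ : ℕ)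
    (hτ : τ < 43) : out (lN X P a τ) (cell X P a τ) (rN X P a τ) = some (cell X P a (τ + 1)) ∧
      pos X P a (τ + 1) = pos X P a τ + (cell X P a (τ + 1)).j.v.z := by
  have e1 : (cell X P a τ).j.a = a := rfl
  have e2 : ((cell X P a τ).j.ph : ℕ) = τ := ph_val hτ
  have e3 : (cell X P a τ).g = pj a (RR X P τ) := rfl
  have pL := pos_step (cell X P a τ).j (pj a (RR X P τ)).d1 (uL X P a τ) (nx X P).j.v a τ e1 e2 (by
    intro h1 h2
    have hm := RR_mid hX hP τ (by omega) (by omega)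
    have hl := lk_mv τ hτ h1 h2
    match a with
    | 0 => simp [pj, hm, mid]
    | 1 => simp [uL, hm, hl.1, mid]
    | 2 => simp [pj, hm, mid])
  have pR := pos_step (cell X P a τ).j (pj a (RR X P τ)).d1 (uR X P a τ) (nx X P).j.v a τ e1 e2 (by
    intro h1 h2
    have hm := RR_mid hX hP τ (by omega) (by omega)
    have hl := lk_mv τ hτ h1 h2
    match a with
    | 0 => simp [pj, hm, mid]
    | 1 => simp [uR, hm, hl.2, mid]
    | 2 => simp [pj, hm, mid])
  have hvL : velf (cell X P a τ).j (pj a (RR X P τ)).d1 (uL X P a τ) = lv X P a (τ + 1) := by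
    rw [← ofz_z (velf _ _ _), lv]
    congr 1
    unfold pos; omega
  have hvR : velf (cell X P a τ).j (pj a (RR X P τ)).d1 (uR X P a τ) = lv X P a (τ + 1) := by
    rw [← ofz_z (velf _ _ _), lv]
    congr 1
    unfold pos; omega
  constructor
  · unfold out
    rw [e1, e2, e3, rd_uL X P a τ hτ, rd_uR X P a τ hτ, hvL, hvR,
      if_pos ⟨cell_okL X P a τ hτ, cell_okR X P a τ hτ, rfl⟩, exec_cell hX hP a τ hτ]
    simp only [Option.map_some, cell, nxt, Option.some.injEq, St.mk.injEq, Lab.mk.injEq, true_and,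
      and_true]
    apply Fin.ext
    simp [Fin.val_add, Fin.ofNat]
  · rw [show (cell X P a (τ + 1)).j.v = lv X P a (τ + 1) from rfl, ← hvL]
    unfold pos; omega

theorem conf_step {X Y : ℤ → Option St} (hX : Good X) {τ : ℕ} (hτ : τ < 43) (hY : Conf X τ Y) :
    Good Y ∧ Conf X (τ + 1) (Phi Y) := by
  have ho : ∀ P a, X P ≠ none → outAt Y (pos X P a τ) = some (cell X P a (τ + 1)) := by
    intro P a hP
    have : Y (pos X P a τ) = some (cell X P a τ) := (hY _ _).2 ⟨P, a, hP, rfl, rfl⟩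
    unfold outAt
    rw [this]
    simp only
    rw [lN_eq hX (by omega) hY hP, rN_eq hX (by omega) hY hP]
    exact (out_cell hX hP a τ hτ).1
  have hex : ∀ q s, outAt Y q = some s → ∃ P a, X P ≠ none ∧ q = pos X P a τ ∧
      s = cell X P a (τ + 1) := by
    intro q s h
    have : Y q ≠ none := by
      intro hn
      simp [outAt, hn] at h
    obtain ⟨s0, hs0⟩ := Option.ne_none_iff_exists'.1 this
    obtain ⟨P, a, hP, rfl, rfl⟩ := (hY _ _).1 hs0
    refine ⟨P, a, hP, rfl, ?_⟩
    rw [ho P a hP] at h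
    exact (Option.some.inj h).symm
  have hord : ∀ q q' s s', q < q' → outAt Y q = some s →
    outAt Y q' = some s' → q + s.j.v.z < q' + s'.j.v.z := by
    intro q q' s s' hqq h h'
    obtain ⟨P, a, hP, rfl, rfl⟩ := hex _ _ h
    obtain ⟨P', a', hP', rfl, rfl⟩ := hex _ _ h'
    rw [← (out_cell hX hP a τ hτ).2, ← (out_cell hX hP' a' τ hτ).2, pos_lt hX hP' hP (by omega)]
    exact (pos_lt hX hP' hP (by omega)).1 hqq
  refine ⟨⟨?_, hord⟩, ?_⟩
  · intro q hq
    obtain ⟨s0, hs0⟩ := Option.ne_none_iff_exists'.1 hq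
    obtain ⟨P, a, hP, rfl, rfl⟩ := (hY _ _).1 hs0
    rw [ho P a hP]; simp
  · intro y s
    rw [Phi_iff hord]
    constructor
    · rintro ⟨q, hq, rfl⟩
      obtain ⟨P, a, hP, rfl, rfl⟩ := hex _ _ hq
      exact ⟨P, a, hP, (out_cell hX hP a τ hτ).2.symm, rfl⟩
    · rintro ⟨P, a, hP, rfl, rfl⟩
      exact ⟨_, ho P a hP, (out_cell hX hP a τ hτ).2⟩

lemma sl42 : ∀ a : Fin 3, sl a 42 = sl a 43 := by decide

lemma sh42 (w : Vel) : sh w 42 = sh w 43 := by cases w <;> simp [sh]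

lemma conf_end {X Y : ℤ → Option St} (hX : Good X) (hY : Conf X 43 Y) : Conf (Phi X) 0 Y := by
  intro y s
  rw [hY]
  have hpos : ∀ P a, pos X P a 43 = 5 * (P + (nx X P).j.v.z) + sl a 0 := by
    intro P a
    unfold pos
    rw [sh43, sl43]; ring
  have hpos' : ∀ P a, pos (Phi X) P a 0 = 5 * P + sl a 0 := by
    intro P a
    unfold pos
    rw [sh0]; ring
  have hl : ∀ P a, lv X P a 43 = .S := by
    intro P a
    show ofz (pos X P a 43 - pos X P a 42) = .S
    unfold pos
    rw [sl42, sh42, sub_self]; rfl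
  have hcell : ∀ P a, X P ≠ none → Phi X (P + (nx X P).j.v.z) = some (nx X P) →
      cell X P a 43 = cell (Phi X) (P + (nx X P).j.v.z) a 0 := by
    intro P a hP h
    unfold cell
    rw [hl, RR_43 hX hP, RR_0, show stt (Phi X) (P + (nx X P).j.v.z) = nx X P by simp [stt, h]]
    rfl
  have hphi : ∀ P, X P ≠ none → Phi X (P + (nx X P).j.v.z) = some (nx X P) := by
    intro P hP
    rw [Phi_iff hX.2]
    exact ⟨P, (alive_out hX hP).2, rfl⟩
  constructor
  · rintro ⟨P, a, hP, rfl, rfl⟩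
    exact ⟨P + (nx X P).j.v.z, a, by rw [hphi P hP]; simp, by rw [hpos, hpos'],
      hcell P a hP (hphi P hP)⟩
  · rintro ⟨P', a, hP', rfl, rfl⟩
    obtain ⟨s', hs'⟩ := Option.ne_none_iff_exists'.1 hP'
    obtain ⟨P, hP, rfl⟩ := (Phi_iff hX.2 _ _).1 hs'
    have hPX : X P ≠ none := by
      intro hn
      simp [outAt, hn] at hP
    have : s' = nx X P := by simp [nx, hP]
    subst this
    exact ⟨P, a, hPX, by rw [hpos, hpos'], (hcell P a hPX hs').symm⟩

lemma conf_iter {X Y : ℤ → Option St} (hX : Good X) (hY : Conf X 0 Y) :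
    ∀ τ, τ ≤ 43 → Conf X τ (Phi^[τ] Y) ∧ ∀ t < τ, Good (Phi^[t] Y) := by
  intro τ
  induction τ with
  | zero => intro _; exact ⟨hY, fun t ht => by omega⟩
  | succ τ ih =>
    intro hτ
    obtain ⟨h1, h2⟩ := ih (by omega)
    obtain ⟨h3, h4⟩ := conf_step hX (by omega) h1
    rw [Function.iterate_succ_apply']
    refine ⟨h4, fun t ht => ?_⟩
    rcases Nat.lt_succ_iff_lt_or_eq.1 ht with h | rfl
    · exact h2 t h
    · exact h3

lemma conf_long (m : ℕ) : ∀ X Y : ℤ → Option St, (∀ t < m, Good (Phi^[t] X)) → Conf X 0 Y →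
    ∀ t < 43 * m, Good (Phi^[t] Y) := by
  induction m with
  | zero => intro X Y _ _ t ht; omega
  | succ m ih =>
    intro X Y hX hY t ht
    have h0 : Good X := hX 0 (by omega)
    obtain ⟨h1, h2⟩ := conf_iter h0 hY 43 le_rfl
    by_cases h : t < 43
    · exact h2 t h
    · have := ih (Phi X) (Phi^[43] Y) (fun t ht => by
        have := hX (t + 1) (by omega)
        rwa [Function.iterate_succ_apply] at this) (conf_end h0 h1) (t - 43) (by omega)
      rw [← Function.iterate_add_apply, Nat.sub_add_cancel (by omega)] at this
      exact this

/-- The encoding of a configuration. -/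
def enc (X : ℤ → Option St) : ℤ → Option St := fun y =>
  (X (y / 5)).bind fun _ => if y % 5 = 1 then some (cell X (y / 5) 0 0)
    else if y % 5 = 2 then some (cell X (y / 5) 1 0)
    else if y % 5 = 3 then some (cell X (y / 5) 2 0) else none

lemma conf_enc (X : ℤ → Option St) : Conf X 0 (enc X) := by
  intro y s
  have hpos : ∀ P a, pos X P a 0 = 5 * P + (((a : ℕ) : ℤ) + 1) := by
    intro P a
    unfold pos
    rw [sh0, sl_0]; ring
  unfold enc
  rw [Option.bind_eq_some_iff]
  constructor
  · rintro ⟨s0, hs0, h⟩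
    have hP : X (y / 5) ≠ none := by simp [hs0]
    split_ifs at h with h1 h2 h3
    · exact ⟨y / 5, 0, hP, by rw [hpos]; simp; omega, (Option.some.inj h).symm⟩
    · exact ⟨y / 5, 1, hP, by rw [hpos]; simp; omega, (Option.some.inj h).symm⟩
    · exact ⟨y / 5, 2, hP, by rw [hpos]; simp; omega, (Option.some.inj h).symm⟩
  · rintro ⟨P, a, hP, hy, rfl⟩
    rw [hpos] at hy
    have ha := a.isLt
    have hd : y / 5 = P := by omega
    have hm : y % 5 = ((a : ℕ) : ℤ) + 1 := by omega
    rw [hd, hm]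
    obtain ⟨s0, hs0⟩ := Option.ne_none_iff_exists'.1 hP
    refine ⟨s0, hs0, ?_⟩
    match a with
    | 0 => simp
    | 1 => simp
    | 2 => simp

/-- The seed. -/
def seed : ℤ → Option St := fun p => if p = 0 then some ⟨⟨1, 4, .S⟩, ⟨.skip, .skip, .skip⟩⟩ else none

lemma seed_good : Good seed := by
  have h0 : outAt seed 0 ≠ none := by
    show out (seed (0 - 1)) _ (seed (0 + 1)) ≠ none
    decide
  have hn : ∀ q, q ≠ 0 → outAt seed q = none := by
    intro q hq
    simp [outAt, seed, hq]
  constructor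
  · intro P hP
    by_cases h : P = 0
    · subst h; exact h0
    · simp [seed, h] at hP
  · intro q q' s s' hq h1 h2
    by_cases h : q = 0
    · have : q' ≠ 0 := by omega
      rw [hn _ this] at h2; simp at h2
    · rw [hn _ h] at h1; simp at h1

lemma long (n : ℕ) : ∃ x : ℤ → Option St, x ≠ (fun _ => none) ∧ ∀ t < 43 ^ n, Good (Phi^[t] x) := by
  induction n with
  | zero =>
    refine ⟨seed, ?_, ?_⟩
    · intro h
      have := congrFun h 0
      simp [seed] at this
    · intro t ht
      obtain rfl : t = 0 := by simpa using ht
      exact seed_good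
  | succ n ih =>
    obtain ⟨x, hx, hg⟩ := ih
    refine ⟨enc x, ?_, ?_⟩
    · obtain ⟨P, hP⟩ := Function.ne_iff.1 hx
      intro h
      have := (conf_enc x (pos x P 0 0) (cell x P 0 0)).2 ⟨P, 0, hP, rfl, rfl⟩
      rw [h] at this
      simp at this
    · rw [pow_succ, mul_comm]
      exact conf_long _ _ _ hg (conf_enc x)

lemma good_ne {X : ℤ → Option St} (hX : Good X) (h : X ≠ fun _ => none) : Phi X ≠ fun _ => none := by
  obtain ⟨P, hP⟩ := Function.ne_iff.1 h
  intro hc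
  have : Phi X (P + (nx X P).j.v.z) = some (nx X P) := by
    rw [Phi_iff hX.2]
    exact ⟨P, (alive_out hX hP).2, rfl⟩
  rw [hc] at this
  simp at this

theorem not_nil (n : ℕ) : ∃ x : ℤ → Option St, Phi^[n] x ≠ fun _ => none := by
  obtain ⟨x, hx, hg⟩ := long n
  have : ∀ t, t ≤ 43 ^ n → Phi^[t] x ≠ fun _ => none := by
    intro t
    induction t with
    | zero => intro _; exact hx
    | succ t ih =>
      intro ht
      rw [Function.iterate_succ_apply']
      exact good_ne (hg t (by omega)) (ih (by omega))
  exact ⟨x, this n (Nat.lt_pow_self (by norm_num)).le⟩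

end UECA



/-- There exists a non-nilpotent cellular automaton `Φ` with a quiescent
state `B` such that for every `i ∈ ℤ` and every `k ≥ 1`, the cellular automaton
`σ^i ∘ Φ^k` (where `σ^i` is the shift by `i`, `(σ^i y)_j = y_{j+i}`) is uniquely
ergodic. -/
theorem exists_not_nilpotent_all_shifted_powers_uniquelyErgodic :
    ∃ (m : ℕ) (B : Fin (m + 1)) (Φ : (ℤ → Fin (m + 1)) → (ℤ → Fin (m + 1))),
      Continuous Φ ∧
      (∀ x : ℤ → Fin (m + 1), Φ (fun i => x (i + 1)) = fun i => Φ x (i + 1)) ∧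
      Φ (fun _ => B) = (fun _ => B) ∧
      ¬ (∃ n : ℕ, ∀ x : ℤ → Fin (m + 1), Φ^[n] x = fun _ => B) ∧
      (∀ (i : ℤ) (k : ℕ), 1 ≤ k →
        ∃! μ : Measure (ℤ → Fin (m + 1)), IsProbabilityMeasure μ ∧
          ∀ A : Set (ℤ → Fin (m + 1)), MeasurableSet A →
            μ ((fun x : ℤ → Fin (m + 1) => fun j : ℤ => Φ^[k] x (j + i)) ⁻¹' A)
              = μ A) := by
  exact UECA.final UECA.not_nil
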